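/- arXiv:1007.3572 — 4 statements merged into one kernel-verified Lean document; each statement's English description precedes it below -/
import Mathlib

section
/- Let n ≥ 7, let L be a Latin square of order n, and let C be a critical set of L. Then C leaves at least ⌊(7n − √n − 20)/2⌋ cells empty; that is, n² − |C| ≥ ⌊(7n − √n − 20)/2⌋, where √n is the real square root and ⌊·⌋ is the floor function. -/
/-- `L` is a Latin square on `Q`: every row and column is a bijection. -/
def IsLatinSquare {Q : Type*} (L : Q → Q → Q) : Prop :=
  (∀ i, Function.Bijective (L i)) ∧ (∀ j, Function.Bijective fun i => L i j)

/-- The set of triples `C` is contained in (the set of triples of) the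
Latin square `L`. -/
def ContainedIn {Q : Type*} (C : Set (Q × Q × Q)) (L : Q → Q → Q) : Prop :=
  ∀ t ∈ C, L t.1 t.2.1 = t.2.2

/-- `C` is a critical set of the Latin square `L`: `C` is contained in `L`,
`L` is the only Latin square containing `C`, and no proper subset of `C`
has this property. -/
def IsCriticalSet {Q : Type*} (C : Set (Q × Q × Q)) (L : Q → Q → Q) : Prop :=
  ContainedIn C L ∧
  (∀ L' : Q → Q → Q, IsLatinSquare L' → ContainedIn C L' → L' = L) ∧
  (∀ C' : Set (Q × Q × Q), C' ⊂ C →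
    ∃ L' : Q → Q → Q, IsLatinSquare L' ∧ ContainedIn C' L' ∧ L' ≠ L)

section CriticalComplement

open Finset Classical

variable {α : Type*}

/-- The graph of a Latin square: any two coordinates of a triple determine the third. -/
structure IsLatinRel (L : α → α → α → Prop) : Prop where
  existsUnique_sym : ∀ i j, ∃! k, L i j k
  existsUnique_col : ∀ i k, ∃! j, L i j k
  existsUnique_row : ∀ j k, ∃! i, L i j k

/-- `E` is the set of triples of the Latin square `L` lying outside some critical set of `L`. -/
structure IsCriticalComplement (L E : α → α → α → Prop) : Prop where
  latin : IsLatinRel L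
  sub : ∀ {i j k}, E i j k → L i j k
  uniq : ∀ L', IsLatinRel L' → (∀ i j k, L i j k → ¬ E i j k → L' i j k) →
    ∀ i j k, L i j k → L' i j k
  exists_trade : ∀ i j k, L i j k → ¬ E i j k → ∃ L', IsLatinRel L' ∧ ¬ L' i j k ∧
    ∀ x y z, L x y z → ¬ E x y z → L' x y z ∨ (x = i ∧ y = j ∧ z = k)

variable {L E : α → α → α → Prop}

namespace IsLatinRel

theorem swap_row_col (h : IsLatinRel L) : IsLatinRel fun i j k => L j i k :=
  ⟨fun i j => h.1 j i, fun i k => h.3 i k, fun j k => h.2 j k⟩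

theorem swap_col_sym (h : IsLatinRel L) : IsLatinRel fun i j k => L i k j :=
  ⟨fun i j => h.2 i j, fun i k => h.1 i k, fun j k => h.3 k j⟩

theorem sym_unique (h : IsLatinRel L) {i j k k' : α} (h₁ : L i j k) (h₂ : L i j k') : k = k' :=
  (h.existsUnique_sym i j).unique h₁ h₂

theorem col_unique (h : IsLatinRel L) {i j j' k : α} (h₁ : L i j k) (h₂ : L i j' k) : j = j' :=
  (h.existsUnique_col i k).unique h₁ h₂

theorem row_unique (h : IsLatinRel L) {i i' j k : α} (h₁ : L i j k) (h₂ : L i' j k) : i = i' :=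
  (h.existsUnique_row j k).unique h₁ h₂

theorem permute_cols (h : IsLatinRel L) (σ : Equiv.Perm α) :
    IsLatinRel fun i j k => L i (σ j) k := by
  refine ⟨fun i j => h.1 i (σ j), fun i k => ?_, fun j k => h.3 (σ j) k⟩
  obtain ⟨j, hj, hu⟩ := h.2 i k
  exact ⟨σ.symm j, by simpa using hj, fun y hy => by simp [← hu _ hy]⟩

end IsLatinRel

theorem IsCriticalComplement.swap_row_col (h : IsCriticalComplement L E) :
    IsCriticalComplement (fun i j k => L j i k) (fun i j k => E j i k) := by
  refine ⟨h.latin.swap_row_col, fun h' => h.sub h', fun L' hL' hs i j k hl => ?_,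
    fun i j k hl he => ?_⟩
  · exact h.uniq _ hL'.swap_row_col (fun a b c => hs b a c) j i k hl
  · obtain ⟨L', hL', hn, hs⟩ := h.exists_trade j i k hl he
    exact ⟨_, hL'.swap_row_col, hn, fun x y z h₁ h₂ => by have := hs y x z h₁ h₂; tauto⟩

theorem IsCriticalComplement.swap_col_sym (h : IsCriticalComplement L E) :
    IsCriticalComplement (fun i j k => L i k j) (fun i j k => E i k j) := by
  refine ⟨h.latin.swap_col_sym, fun h' => h.sub h', fun L' hL' hs i j k hl => ?_,
    fun i j k hl he => ?_⟩
  · exact h.uniq _ hL'.swap_col_sym (fun a b c => hs a c b) i k j hl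
  · obtain ⟨L', hL', hn, hs⟩ := h.exists_trade i k j hl he
    exact ⟨_, hL'.swap_col_sym, hn, fun x y z h₁ h₂ => by have := hs x z y h₁ h₂; tauto⟩

section Trade

variable {L' : α → α → α → Prop} {i₀ j₀ k₀ i j k a b c d : α}

theorem IsLatinRel.trade_value (hL : IsLatinRel L) (hL' : IsLatinRel L')
    (hs : ∀ x y z, L x y z → ¬ E x y z → L' x y z ∨ (x = i ∧ y = j ∧ z = k))
    (hrow : ∀ y z, E i y z → y = j₀ ∧ z = a ∨ y = b ∧ z = k₀)
    (hk : L i j k) {v : α} (hv : L' i j v) (hvk : v ≠ k) : v = a ∨ v = k₀ := by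
  obtain ⟨y, hy, -⟩ := hL.existsUnique_col i v
  have hyj : y ≠ j := by rintro rfl; exact hvk (hL.sym_unique hy hk)
  have he : E i y v := by
    by_contra he
    rcases hs _ _ _ hy he with h' | h'
    · exact hyj (hL'.col_unique h' hv)
    · exact hyj h'.2.1
  rcases hrow _ _ he with h' | h' <;> tauto

/-- A trade putting `k₀` into a cell of a row whose empty cells are `(i, j₀)` and `(i, b)`
moves the symbol of the first of these to `(i, b)`, and hence to the corner `(i₀, j₀)`. -/
theorem IsLatinRel.corner_of_trade (hL : IsLatinRel L) (hL' : IsLatinRel L')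
    (hs : ∀ x y z, L x y z → ¬ E x y z → L' x y z ∨ (x = i ∧ y = j ∧ z = k))
    (hrow : ∀ y z, E i y z → y = j₀ ∧ z = a ∨ y = b ∧ z = k₀)
    (hsym : ∀ x y, E x y a → x = i ∨ x = i₀)
    (ha : L i j₀ a) (hb : L i b k₀) (hk : L i j k) (hjb : j ≠ b) (hjj₀ : j ≠ j₀) (hak₀ : a ≠ k₀)
    (hout : ∀ x, ¬ E x b k) (hij : L' i j k₀) : L' i₀ j₀ a := by
  have hbj₀ : b ≠ j₀ := by rintro rfl; exact hak₀ (hL.sym_unique ha hb)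
  have hka : k ≠ a := by rintro rfl; exact hjj₀ (hL.col_unique hk ha)
  have hba : L' i b a := by
    obtain ⟨w, hw, -⟩ := hL'.existsUnique_sym i b
    have hwk₀ : w ≠ k₀ := by rintro rfl; exact hjb (hL'.col_unique hij hw)
    have hwk : w ≠ k := by
      rintro rfl
      obtain ⟨x, hx, -⟩ := hL.existsUnique_row b w
      rcases hs _ _ _ hx (hout x) with h' | h'
      · obtain rfl := hL'.row_unique h' hw
        exact hwk₀ (hL.sym_unique hx hb)
      · exact hjb h'.2.1.symm
    obtain ⟨y, hy, -⟩ := hL.existsUnique_col i w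
    have hyb : y ≠ b := by rintro rfl; exact hwk₀ (hL.sym_unique hy hb)
    have he : E i y w := by
      by_contra he
      rcases hs _ _ _ hy he with h' | h'
      · exact hyb (hL'.col_unique h' hw)
      · exact hwk h'.2.2
    rcases hrow _ _ he with h' | h'
    · rwa [← h'.2]
    · exact absurd h'.1 hyb
  obtain ⟨p, hp, -⟩ := hL'.existsUnique_row j₀ a
  have hpi : p ≠ i := by rintro rfl; exact hbj₀ (hL'.col_unique hba hp)
  obtain ⟨z, hz, -⟩ := hL.existsUnique_col p a
  have he : E p z a := by
    by_contra he
    rcases hs _ _ _ hz he with h' | h'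
    · obtain rfl := hL'.col_unique h' hp
      exact hpi (hL.row_unique hz ha)
    · exact hka h'.2.2.symm
  rcases hsym _ _ he with rfl | rfl
  · exact absurd rfl hpi
  · exact hp

theorem IsCriticalComplement.exists_obstruction (h : IsCriticalComplement L E)
    (hrow : ∀ y z, E i y z → y = j₀ ∧ z = a ∨ y = b ∧ z = k₀)
    (hcol : ∀ x z, E x j z → x = i₀ ∧ z = c ∨ x = d ∧ z = k₀)
    (hsyma : ∀ x y, E x y a → x = i ∨ x = i₀) (hsymc : ∀ x y, E x y c → y = j ∨ y = j₀)
    (ha : L i j₀ a) (hb : L i b k₀) (hc : L i₀ j c) (hd : L d j k₀) (hk : L i j k)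
    (hii₀ : i ≠ i₀) (hjj₀ : j ≠ j₀) (hak₀ : a ≠ k₀) (hck₀ : c ≠ k₀) :
    j = b ∨ a = c ∨ (∃ x, E x b k) ∨ ∃ y, E d y k := by
  by_contra! hcon
  obtain ⟨hjb, hac, hout, hout'⟩ := hcon
  have hid : i ≠ d := by rintro rfl; exact hjb (h.latin.col_unique hd hb)
  have he : ¬ E i j k := fun he => by rcases hrow _ _ he with h' | h' <;> tauto
  obtain ⟨L', hL', hn, hs⟩ := h.exists_trade i j k hk he
  have hs' : ∀ y x z, L x y z → ¬ E x y z → L' x y z ∨ (y = j ∧ x = i ∧ z = k) := by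
    intro y x z h₁ h₂
    have := hs x y z h₁ h₂
    tauto
  obtain ⟨v, hv, -⟩ := hL'.existsUnique_sym i j
  have hvk : v ≠ k := by rintro rfl; exact hn hv
  have hv₁ := h.latin.trade_value hL' hs hrow hk hv hvk
  have hv₂ := h.latin.swap_row_col.trade_value hL'.swap_row_col hs' hcol hk hv hvk
  obtain rfl : v = k₀ := by
    rcases hv₁ with rfl | h₁
    · rcases hv₂ with h₂ | h₂
      · exact absurd h₂ hac
      · exact h₂
    · exact h₁
  have h₁ := h.latin.corner_of_trade hL' hs hrow hsyma ha hb hk hjb hjj₀ hak₀ hout hv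
  have h₂ := h.latin.swap_row_col.corner_of_trade hL'.swap_row_col hs' hcol
    (fun y x he => hsymc x y he) hc hd hk hid hii₀ hck₀ hout' hv
  exact hac (hL'.sym_unique h₁ h₂)

end Trade

theorem IsLatinSquare.isLatinRel {L : α → α → α} (hL : IsLatinSquare L) :
    IsLatinRel fun i j k => L i j = k :=
  ⟨fun _ _ => existsUnique_eq', fun i k => (hL.1 i).existsUnique k,
    fun j k => (hL.2 j).existsUnique k⟩

theorem IsLatinRel.exists_isLatinSquare {L : α → α → α → Prop} (h : IsLatinRel L) :
    ∃ f : α → α → α, IsLatinSquare f ∧ ∀ i j k, L i j k ↔ f i j = k := by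
  choose f hf using fun i j => (h.existsUnique_sym i j).exists
  have hiff : ∀ i j k, L i j k ↔ f i j = k := fun i j k =>
    ⟨fun hk => h.sym_unique (hf i j) hk, by rintro rfl; exact hf i j⟩
  refine ⟨f, ⟨fun i => ?_, fun j => ?_⟩, hiff⟩
  · refine Function.bijective_iff_existsUnique _ |>.mpr fun k => ?_
    simpa only [hiff] using h.existsUnique_col i k
  · refine Function.bijective_iff_existsUnique _ |>.mpr fun k => ?_
    simpa only [hiff] using h.existsUnique_row j k

theorem IsCriticalSet.isCriticalComplement {L : α → α → α} (hL : IsLatinSquare L)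
    {C : Set (α × α × α)} (hC : IsCriticalSet C L) :
    IsCriticalComplement (fun i j k => L i j = k) (fun i j k => L i j = k ∧ (i, j, k) ∉ C) := by
  refine ⟨hL.isLatinRel, fun he => he.1, fun L' hL' hs i j k hk => ?_, fun i j k hk he => ?_⟩
  · obtain ⟨f, hf, hiff⟩ := hL'.exists_isLatinSquare
    have hfL : f = L := hC.2.1 f hf fun t ht =>
      (hiff _ _ _).mp (hs _ _ _ (hC.1 t ht) fun he => he.2 ht)
    rw [hiff, hfL, hk]
  · have hmem : (i, j, k) ∈ C := by tauto
    obtain ⟨f, hf, hCf, hfL⟩ := hC.2.2 (C \ {(i, j, k)}) (Set.sdiff_singleton_ssubset.mpr hmem)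
    refine ⟨_, hf.isLatinRel, fun hij => hfL (hC.2.1 f hf fun t ht => ?_), fun x y z hz hxyz => ?_⟩
    · by_cases h' : t = (i, j, k)
      · subst h'
        exact hij
      · exact hCf t ⟨ht, h'⟩
    · by_cases h' : (x, y, z) = (i, j, k)
      · exact Or.inr (by simpa using h')
      · exact Or.inl (hCf (x, y, z) ⟨by tauto, h'⟩)

variable [Fintype α]

/-- The number of triples of `E` in row `i`. -/
noncomputable def rowCount (E : α → α → α → Prop) (i : α) : ℕ := #{p : α × α | E i p.1 p.2}

/-- The number of triples of `E` in column `j`. -/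
noncomputable def colCount (E : α → α → α → Prop) (j : α) : ℕ := #{p : α × α | E p.1 j p.2}

/-- The number of triples of `E` with symbol `k`. -/
noncomputable def symCount (E : α → α → α → Prop) (k : α) : ℕ := #{p : α × α | E p.1 p.2 k}

/-- The number of triples of `E`. -/
noncomputable def totalCount (E : α → α → α → Prop) : ℕ :=
  #{p : α × α × α | E p.1 p.2.1 p.2.2}

theorem rowCount_swap_col_sym (E : α → α → α → Prop) :
    rowCount (fun i j k => E i k j) = rowCount E :=
  funext fun _ => card_equiv (Equiv.prodComm α α) (by simp)

theorem symCount_swap_row_col (E : α → α → α → Prop) :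
    symCount (fun i j k => E j i k) = symCount E :=
  funext fun _ => card_equiv (Equiv.prodComm α α) (by simp)

theorem sum_rowCount (E : α → α → α → Prop) : ∑ i, rowCount E i = totalCount E := by
  simp only [totalCount, rowCount, card_filter, Fintype.sum_prod_type]

theorem totalCount_swap_col_sym (E : α → α → α → Prop) :
    totalCount (fun i j k => E i k j) = totalCount E := by
  rw [← sum_rowCount, ← sum_rowCount, rowCount_swap_col_sym]

theorem totalCount_swap_row_col (E : α → α → α → Prop) :
    totalCount (fun i j k => E j i k) = totalCount E := by
  simp only [totalCount, card_filter, Fintype.sum_prod_type]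
  exact sum_comm

theorem sum_colCount (E : α → α → α → Prop) : ∑ j, colCount E j = totalCount E := by
  rw [← totalCount_swap_row_col, ← sum_rowCount]
  rfl

namespace IsCriticalComplement

theorem card_cols_of_row (h : IsCriticalComplement L E) (i : α) :
    #{j | ∃ k, E i j k} = rowCount E i := by
  rw [rowCount, ← card_image_of_injOn (f := Prod.fst)]
  · congr 1
    ext j
    simp
  · rintro ⟨j, k⟩ hp ⟨j', k'⟩ hq (rfl : j = j')
    exact Prod.ext rfl
      (h.latin.sym_unique (h.sub (mem_filter.mp hp).2) (h.sub (mem_filter.mp hq).2))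

theorem card_rows_of_col (h : IsCriticalComplement L E) (j : α) :
    #{i | ∃ k, E i j k} = colCount E j :=
  h.swap_row_col.card_cols_of_row j

theorem card_syms_of_col (h : IsCriticalComplement L E) (j : α) :
    #{k | ∃ i, E i j k} = colCount E j :=
  (h.swap_row_col.swap_col_sym.card_cols_of_row j).trans
    (congrFun (rowCount_swap_col_sym fun a b c => E b a c) j)

/-- Every symbol occurring in row `i` is missing from some column that row `i` leaves empty. -/
theorem card_le_sum_colCount (h : IsCriticalComplement L E) (i : α) :
    Fintype.card α ≤ ∑ j with ∃ k, E i j k, colCount E j := by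
  have hcover : (univ : Finset α) ⊆
      ({j | ∃ k, E i j k} : Finset α).biUnion fun j => {k | ∃ x, E x j k} := by
    intro k _
    simp only [mem_biUnion, mem_filter, mem_univ, true_and]
    obtain ⟨j, hj, -⟩ := h.latin.existsUnique_col i k
    by_cases he : E i j k
    · exact ⟨j, ⟨k, he⟩, i, he⟩
    obtain ⟨L', hL', hn, hs⟩ := h.exists_trade i j k hj he
    obtain ⟨y, hy, -⟩ := hL'.existsUnique_col i k
    have hyj : y ≠ j := by rintro rfl; exact hn hy
    obtain ⟨w, hw, -⟩ := h.latin.existsUnique_sym i y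
    obtain ⟨x, hx, -⟩ := h.latin.existsUnique_row y k
    refine ⟨y, ⟨w, ?_⟩, x, ?_⟩
    · by_contra hc
      rcases hs _ _ _ hw hc with h' | h'
      · rw [hL'.sym_unique h' hy] at hw
        exact hyj (h.latin.col_unique hw hj)
      · exact hyj h'.2.1
    · by_contra hc
      rcases hs _ _ _ hx hc with h' | h'
      · rw [hL'.row_unique h' hy] at hx
        exact hyj (h.latin.col_unique hx hj)
      · exact hyj h'.2.1
  calc Fintype.card α = #(univ : Finset α) := rfl
    _ ≤ _ := card_le_card hcover
    _ ≤ _ := card_biUnion_le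
    _ = _ := sum_congr rfl fun j _ => h.card_syms_of_col j

theorem card_le_sum_rowCount (h : IsCriticalComplement L E) (j : α) :
    Fintype.card α ≤ ∑ i with ∃ k, E i j k, rowCount E i :=
  h.swap_row_col.card_le_sum_colCount j

theorem rowCount_pos (h : IsCriticalComplement L E) (i : α) : 0 < rowCount E i := by
  rw [← h.card_cols_of_row, card_pos, nonempty_iff_ne_empty]
  intro h0
  have := h.card_le_sum_colCount i
  rw [h0, sum_empty, Nat.le_zero, Fintype.card_eq_zero_iff] at this
  exact this.false i

theorem exists_full_col (h : IsCriticalComplement L E) {i : α} (hi : rowCount E i ≤ 1) :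
    ∃ j, (∃ k, E i j k) ∧ Fintype.card α ≤ colCount E j := by
  have h1 : #{j | ∃ k, E i j k} = 1 := by
    rw [h.card_cols_of_row]
    exact le_antisymm hi (h.rowCount_pos i)
  obtain ⟨j, hj⟩ := card_eq_one.mp h1
  refine ⟨j, by simpa using hj.ge (mem_singleton_self j), ?_⟩
  simpa [hj] using h.card_le_sum_colCount i

theorem exists_full_sym (h : IsCriticalComplement L E) {i : α} (hi : rowCount E i ≤ 1) :
    ∃ k, (∃ j, E i j k) ∧ Fintype.card α ≤ symCount E k :=
  h.swap_col_sym.exists_full_col (by rwa [rowCount_swap_col_sym])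

/-- Two empty columns could be interchanged. -/
theorem full_col_unique (h : IsCriticalComplement L E) {j₁ j₂ : α}
    (h₁ : Fintype.card α ≤ colCount E j₁) (h₂ : Fintype.card α ≤ colCount E j₂) : j₁ = j₂ := by
  have full : ∀ {j}, Fintype.card α ≤ colCount E j → ∀ i k, L i j k → E i j k := by
    intro j hj i k hl
    rw [← h.card_rows_of_col] at hj
    have := (card_eq_iff_eq_univ _).mp (le_antisymm (card_le_univ _) hj)
    obtain ⟨k', hk'⟩ : ∃ k, E i j k := by simpa using this.ge (mem_univ i)
    rwa [h.latin.sym_unique hl (h.sub hk')]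
  have key := h.uniq _ (h.latin.permute_cols (Equiv.swap j₁ j₂)) (fun i j k hl he => by
    rwa [Equiv.swap_apply_of_ne_of_ne]
    · rintro rfl; exact he (full h₁ _ _ hl)
    · rintro rfl; exact he (full h₂ _ _ hl))
  obtain ⟨k, hk, -⟩ := h.latin.existsUnique_sym j₁ j₁
  have := key _ _ _ hk
  rw [Equiv.swap_apply_left] at this
  exact h.latin.col_unique hk this

theorem full_sym_unique (h : IsCriticalComplement L E) {k₁ k₂ : α}
    (h₁ : Fintype.card α ≤ symCount E k₁) (h₂ : Fintype.card α ≤ symCount E k₂) : k₁ = k₂ :=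
  h.swap_col_sym.full_col_unique h₁ h₂

theorem row_unique_of_rowCount_le_one (h : IsCriticalComplement L E) {i₁ i₂ : α}
    (h₁ : rowCount E i₁ ≤ 1) (h₂ : rowCount E i₂ ≤ 1) : i₁ = i₂ := by
  have corner : ∀ {i j k j' k'}, rowCount E i ≤ 1 → E i j k' → E i j' k → E i j k := by
    intro i j k j' k' hi he he'
    have := card_le_one.mp hi (j, k') (by simpa using he) (j', k) (by simpa using he')
    simp only [Prod.mk.injEq] at this
    rwa [this.1]
  obtain ⟨j₁, ⟨_, hj₁⟩, hc₁⟩ := h.exists_full_col h₁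
  obtain ⟨j₂, ⟨_, hj₂⟩, hc₂⟩ := h.exists_full_col h₂
  obtain ⟨k₁, ⟨_, hk₁⟩, hs₁⟩ := h.exists_full_sym h₁
  obtain ⟨k₂, ⟨_, hk₂⟩, hs₂⟩ := h.exists_full_sym h₂
  obtain rfl := h.full_col_unique hc₁ hc₂
  obtain rfl := h.full_sym_unique hs₁ hs₂
  exact h.latin.row_unique (h.sub (corner h₁ hj₁ hk₁)) (h.sub (corner h₂ hj₂ hk₂))

theorem card_filter_rowCount_le_one (h : IsCriticalComplement L E) (T : Finset α) :
    #{i ∈ T | rowCount E i ≤ 1} ≤ 1 :=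
  card_le_one.mpr fun _ ha _ hb => h.row_unique_of_rowCount_le_one
    (mem_filter.mp ha).2 (mem_filter.mp hb).2

theorem two_mul_card_le_sum_rowCount (h : IsCriticalComplement L E) (T : Finset α) :
    2 * #T ≤ ∑ i ∈ T, rowCount E i + 1 := by
  calc 2 * #T = ∑ i ∈ T, 2 := by simp [mul_comm]
    _ ≤ ∑ i ∈ T, (rowCount E i + if rowCount E i ≤ 1 then 1 else 0) :=
      sum_le_sum fun i _ => by have := h.rowCount_pos i; split_ifs <;> omega
    _ = ∑ i ∈ T, rowCount E i + #{i ∈ T | rowCount E i ≤ 1} := by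
      rw [sum_add_distrib, card_filter]
    _ ≤ _ := by have := h.card_filter_rowCount_le_one T; omega

theorem three_mul_card_le_sum_rowCount (h : IsCriticalComplement L E) (T : Finset α) :
    3 * #T ≤ ∑ i ∈ T, rowCount E i + #{i | rowCount E i ≤ 2} + 1 := by
  calc 3 * #T = ∑ i ∈ T, 3 := by simp [mul_comm]
    _ ≤ ∑ i ∈ T, (rowCount E i + (if rowCount E i ≤ 2 then 1 else 0) +
          if rowCount E i ≤ 1 then 1 else 0) :=
      sum_le_sum fun i _ => by have := h.rowCount_pos i; split_ifs <;> omega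
    _ = ∑ i ∈ T, rowCount E i + #{i ∈ T | rowCount E i ≤ 2} + #{i ∈ T | rowCount E i ≤ 1} := by
      rw [sum_add_distrib, sum_add_distrib, card_filter, card_filter]
    _ ≤ _ := by
      have := h.card_filter_rowCount_le_one T
      have : #{i ∈ T | rowCount E i ≤ 2} ≤ #{i | rowCount E i ≤ 2} :=
        card_le_card (filter_subset_filter _ (subset_univ T))
      omega

/-- A row with few empty cells forces a few columns to be emptied at a cost of `n`, so that
many of the remaining columns have at most two empty cells. -/
theorem four_mul_card_le_total_add_small_rows (h : IsCriticalComplement L E)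
    (ht : totalCount E < 4 * Fintype.card α) :
    4 * Fintype.card α ≤ totalCount E + #{i | rowCount E i ≤ 2} + 10 := by
  obtain ⟨j, hj⟩ : ∃ j, colCount E j ≤ 3 := by
    by_contra! hc
    have : ∑ j : α, 4 ≤ ∑ j, colCount E j := sum_le_sum fun j _ => hc j
    rw [sum_colCount] at this
    simp at this
    omega
  have h1 := h.card_le_sum_rowCount j
  rw [← h.card_rows_of_col] at hj
  set J : Finset α := {i | ∃ k, E i j k}
  have h2 := h.three_mul_card_le_sum_rowCount Jᶜ
  have h3 := sum_add_sum_compl J (rowCount E)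
  rw [sum_rowCount] at h3
  have h4 := card_add_card_compl J
  omega

theorem four_mul_card_le_total_add_small_cols (h : IsCriticalComplement L E)
    (ht : totalCount E < 4 * Fintype.card α) :
    4 * Fintype.card α ≤ totalCount E + #{j | colCount E j ≤ 2} + 10 := by
  have := h.swap_row_col.four_mul_card_le_total_add_small_rows
    (by rwa [totalCount_swap_row_col])
  rwa [totalCount_swap_row_col] at this

theorem four_mul_card_le_total_add_small_syms (h : IsCriticalComplement L E)
    (ht : totalCount E < 4 * Fintype.card α) :
    4 * Fintype.card α ≤ totalCount E + #{k | symCount E k ≤ 2} + 10 := by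
  have := h.swap_col_sym.four_mul_card_le_total_add_small_cols
    (by rwa [totalCount_swap_col_sym])
  rwa [totalCount_swap_col_sym] at this

theorem two_mul_rowCount_max (h : IsCriticalComplement L E) {i₀ j : α}
    (hi₀ : ∀ i, rowCount E i ≤ rowCount E i₀) (hj : colCount E j ≤ 2) :
    Fintype.card α ≤ 2 * rowCount E i₀ := by
  have h1 := h.card_le_sum_rowCount j
  have h2 := sum_le_card_nsmul ({i | ∃ k, E i j k} : Finset α) (rowCount E) _ fun i _ => hi₀ i
  rw [h.card_rows_of_col, smul_eq_mul] at h2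
  exact (h1.trans h2).trans (Nat.mul_le_mul_right _ hj)

/-- Every column with at most two empty cells has one in the row with the most empty cells. -/
theorem exists_sym_of_max_row (h : IsCriticalComplement L E)
    (ht : 2 * totalCount E + 14 < 7 * Fintype.card α) {i₀ j : α}
    (hi₀ : ∀ i, rowCount E i ≤ rowCount E i₀) (hj : colCount E j ≤ 2) : ∃ k, E i₀ j k := by
  by_contra hc
  have h1 := h.card_le_sum_rowCount j
  have h0 := h.two_mul_rowCount_max hi₀ hj
  rw [← h.card_rows_of_col] at hj
  set J : Finset α := {i | ∃ k, E i j k}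
  have hJ : i₀ ∉ J := by simpa [J] using hc
  have h2 := h.two_mul_card_le_sum_rowCount (insert i₀ J)ᶜ
  have h3 := sum_add_sum_compl (insert i₀ J) (rowCount E)
  rw [sum_rowCount, sum_insert hJ] at h3
  have h4 := card_add_card_compl (insert i₀ J)
  rw [card_insert_of_notMem hJ] at h4
  omega

theorem exists_col_of_max_row (h : IsCriticalComplement L E)
    (ht : 2 * totalCount E + 14 < 7 * Fintype.card α) {i₀ k : α}
    (hi₀ : ∀ i, rowCount E i ≤ rowCount E i₀) (hk : symCount E k ≤ 2) : ∃ j, E i₀ j k :=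
  h.swap_col_sym.exists_sym_of_max_row (by rwa [totalCount_swap_col_sym])
    (by rwa [rowCount_swap_col_sym]) hk

theorem exists_sym_of_max_col (h : IsCriticalComplement L E)
    (ht : 2 * totalCount E + 14 < 7 * Fintype.card α) {i j₀ : α}
    (hj₀ : ∀ j, colCount E j ≤ colCount E j₀) (hi : rowCount E i ≤ 2) : ∃ k, E i j₀ k :=
  h.swap_row_col.exists_sym_of_max_row (by rwa [totalCount_swap_row_col]) hj₀ hi

theorem exists_row_of_max_col (h : IsCriticalComplement L E)
    (ht : 2 * totalCount E + 14 < 7 * Fintype.card α) {j₀ k : α}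
    (hj₀ : ∀ j, colCount E j ≤ colCount E j₀) (hk : symCount E k ≤ 2) : ∃ i, E i j₀ k :=
  h.swap_row_col.exists_col_of_max_row (by rwa [totalCount_swap_row_col]) hj₀
    (by rwa [symCount_swap_row_col])

theorem exists_col_of_max_sym (h : IsCriticalComplement L E)
    (ht : 2 * totalCount E + 14 < 7 * Fintype.card α) {i k₀ : α}
    (hk₀ : ∀ k, symCount E k ≤ symCount E k₀) (hi : rowCount E i ≤ 2) : ∃ j, E i j k₀ :=
  h.swap_col_sym.exists_sym_of_max_col (by rwa [totalCount_swap_col_sym]) hk₀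
    (by rwa [rowCount_swap_col_sym])

theorem exists_row_of_max_sym (h : IsCriticalComplement L E)
    (ht : 2 * totalCount E + 14 < 7 * Fintype.card α) {j k₀ : α}
    (hk₀ : ∀ k, symCount E k ≤ symCount E k₀) (hj : colCount E j ≤ 2) : ∃ i, E i j k₀ :=
  h.swap_col_sym.exists_row_of_max_col (by rwa [totalCount_swap_col_sym]) hk₀ hj

/-- Some column with at most two empty cells meets the symbol `k₀` in a row that also has at
most two empty cells, so the row `i₀` must account for nearly all symbols. -/
theorem card_le_rowCount_max (h : IsCriticalComplement L E)
    (ht : 2 * totalCount E + 14 < 7 * Fintype.card α) {i₀ k₀ : α}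
    (hi₀ : ∀ i, rowCount E i ≤ rowCount E i₀) (hk₀ : ∀ k, symCount E k ≤ symCount E k₀)
    (hsmall : Fintype.card α + 2 ≤ #{i | rowCount E i ≤ 2} + #{j | colCount E j ≤ 2}) :
    Fintype.card α ≤ rowCount E i₀ + 2 := by
  choose d hd using fun j => (h.latin.existsUnique_row j k₀).exists
  have hd_inj : Function.Injective d := fun j j' hjj' => by
    have := hd j'
    rw [← hjj'] at this
    exact h.latin.col_unique (hd j) this
  have h1 := card_union_add_card_inter ({i | rowCount E i ≤ 2} : Finset α)
    (image d {j | colCount E j ≤ 2})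
  rw [card_image_of_injective _ hd_inj] at h1
  have h2 := card_le_univ (({i | rowCount E i ≤ 2} : Finset α) ∪ image d {j | colCount E j ≤ 2})
  obtain ⟨r, hr, hri⟩ := exists_mem_ne (by omega : 1 < #(({i | rowCount E i ≤ 2} : Finset α) ∩
    image d {j | colCount E j ≤ 2})) i₀
  simp only [mem_inter, mem_filter, mem_univ, true_and, mem_image] at hr
  obtain ⟨hr, j, hj, rfl⟩ := hr
  obtain ⟨x, hx⟩ := h.exists_row_of_max_sym ht hk₀ hj
  obtain rfl := h.latin.row_unique (h.sub hx) (hd j)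
  have h3 := h.card_le_sum_rowCount j
  have h4 : ({i₀, d j} : Finset α) = ({i | ∃ k, E i j k} : Finset α) := by
    apply eq_of_subset_of_card_le
    · intro i hi
      rcases mem_insert.mp hi with rfl | hi
      · simpa using h.exists_sym_of_max_row ht hi₀ hj
      · rw [mem_singleton] at hi
        subst hi
        simpa using ⟨_, hx⟩
    · rwa [card_pair hri.symm, h.card_rows_of_col]
  rw [← h4, sum_pair hri.symm] at h3
  omega

theorem card_le_colCount_max (h : IsCriticalComplement L E)
    (ht : 2 * totalCount E + 14 < 7 * Fintype.card α) {j₀ k₀ : α}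
    (hj₀ : ∀ j, colCount E j ≤ colCount E j₀) (hk₀ : ∀ k, symCount E k ≤ symCount E k₀)
    (hsmall : Fintype.card α + 2 ≤ #{i | rowCount E i ≤ 2} + #{j | colCount E j ≤ 2}) :
    Fintype.card α ≤ colCount E j₀ + 2 :=
  h.swap_row_col.card_le_rowCount_max (by rwa [totalCount_swap_row_col]) hj₀
    (by rwa [symCount_swap_row_col]) (hsmall.trans_eq (add_comm _ _))

theorem card_le_symCount_max (h : IsCriticalComplement L E)
    (ht : 2 * totalCount E + 14 < 7 * Fintype.card α) {j₀ k₀ : α}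
    (hj₀ : ∀ j, colCount E j ≤ colCount E j₀) (hk₀ : ∀ k, symCount E k ≤ symCount E k₀)
    (hsmall : Fintype.card α + 2 ≤ #{i | rowCount E i ≤ 2} + #{k | symCount E k ≤ 2}) :
    Fintype.card α ≤ symCount E k₀ + 2 :=
  h.swap_col_sym.card_le_colCount_max (by rwa [totalCount_swap_col_sym]) hk₀ hj₀
    (by rwa [rowCount_swap_col_sym])

end IsCriticalComplement

/-- The triples of `E` avoiding row `i₀`, column `j₀` and symbol `k₀`. -/
noncomputable def outerTriples (E : α → α → α → Prop) (i₀ j₀ k₀ : α) : Finset (α × α × α) :=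
  {p | E p.1 p.2.1 p.2.2 ∧ p.1 ≠ i₀ ∧ p.2.1 ≠ j₀ ∧ p.2.2 ≠ k₀}

theorem IsCriticalComplement.card_outerTriples (h : IsCriticalComplement L E) (i₀ j₀ k₀ : α) :
    #(outerTriples E i₀ j₀ k₀) + rowCount E i₀ + colCount E j₀ + symCount E k₀ ≤
      totalCount E + 3 := by
  set R : Finset (α × α × α) := {p | E p.1 p.2.1 p.2.2 ∧ p.1 = i₀}
  set C : Finset (α × α × α) := {p | E p.1 p.2.1 p.2.2 ∧ p.2.1 = j₀}
  set S : Finset (α × α × α) := {p | E p.1 p.2.1 p.2.2 ∧ p.2.2 = k₀}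
  have hR : rowCount E i₀ ≤ #R := card_le_card_of_injOn (fun p => (i₀, p))
    (fun p hp => by simpa [R] using hp) (fun p _ q _ hpq => by simpa using hpq)
  have hC : colCount E j₀ ≤ #C := card_le_card_of_injOn (fun p => (p.1, j₀, p.2))
    (fun p hp => by simpa [C] using hp) (fun p _ q _ hpq => by simpa [Prod.ext_iff] using hpq)
  have hS : symCount E k₀ ≤ #S := card_le_card_of_injOn (fun p => (p.1, p.2, k₀))
    (fun p hp => by simpa [S] using hp) (fun p _ q _ hpq => by simpa [Prod.ext_iff] using hpq)
  have hRC : #(R ∩ C) ≤ 1 := by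
    refine card_le_one.mpr ?_
    rintro ⟨i, j, k⟩ hp ⟨i', j', k'⟩ hq
    simp only [R, C, mem_inter, mem_filter, mem_univ, true_and] at hp hq
    obtain ⟨⟨hp, rfl⟩, -, rfl⟩ := hp
    obtain ⟨⟨hq, rfl⟩, -, rfl⟩ := hq
    rw [h.latin.sym_unique (h.sub hp) (h.sub hq)]
  have hRS : #(R ∩ S) ≤ 1 := by
    refine card_le_one.mpr ?_
    rintro ⟨i, j, k⟩ hp ⟨i', j', k'⟩ hq
    simp only [R, S, mem_inter, mem_filter, mem_univ, true_and] at hp hq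
    obtain ⟨⟨hp, rfl⟩, -, rfl⟩ := hp
    obtain ⟨⟨hq, rfl⟩, -, rfl⟩ := hq
    rw [h.latin.col_unique (h.sub hp) (h.sub hq)]
  have hCS : #(C ∩ S) ≤ 1 := by
    refine card_le_one.mpr ?_
    rintro ⟨i, j, k⟩ hp ⟨i', j', k'⟩ hq
    simp only [C, S, mem_inter, mem_filter, mem_univ, true_and] at hp hq
    obtain ⟨⟨hp, rfl⟩, -, rfl⟩ := hp
    obtain ⟨⟨hq, rfl⟩, -, rfl⟩ := hq
    rw [h.latin.row_unique (h.sub hp) (h.sub hq)]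
  have h1 := card_union_add_card_inter R C
  have h2 := card_union_add_card_inter (R ∪ C) S
  rw [union_inter_distrib_right] at h2
  have h3 := card_union_le (R ∩ S) (C ∩ S)
  have hdisj : Disjoint (outerTriples E i₀ j₀ k₀) (R ∪ C ∪ S) := by
    rw [disjoint_left]
    intro p hp
    simp only [outerTriples, mem_filter, mem_univ, true_and] at hp
    simp only [R, C, S, mem_union, mem_filter, mem_univ, true_and]
    tauto
  have h4 : #(outerTriples E i₀ j₀ k₀ ∪ (R ∪ C ∪ S)) ≤ totalCount E := by
    refine card_le_card fun p => ?_
    simp only [outerTriples, R, C, S, mem_union, mem_filter, mem_univ, true_and]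
    tauto
  rw [card_union_of_disjoint hdisj] at h4
  omega

theorem card_add_card_le_card_filter_add {P Q : Finset α} {g : α → α} (hg : g.Surjective) :
    #P + #Q ≤ #{i ∈ P | g i ∈ Q} + Fintype.card α := by
  have h1 : #Q ≤ #({i | g i ∈ Q} : Finset α) := by
    refine (card_le_card fun k hk => ?_).trans (card_image_le (f := g))
    obtain ⟨i, rfl⟩ := hg k
    exact mem_image_of_mem g (by simpa using hk)
  have h2 := card_union_add_card_inter P ({i | g i ∈ Q} : Finset α)
  rw [inter_filter, inter_univ] at h2
  have h3 := card_le_univ (P ∪ ({i | g i ∈ Q} : Finset α))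
  omega

/-- The count of pairs `(i, j) ∈ A × B` according to the obstruction each one meets. -/
theorem IsCriticalComplement.card_mul_card_le (h : IsCriticalComplement L E) {i₀ j₀ k₀ : α}
    {A B : Finset α} {f : α → α → α} {b d : α → α}
    (hf : ∀ i j, L i j (f i j)) (hb : ∀ i, L i (b i) k₀) (hd : ∀ j, L (d j) j k₀)
    (hA : ∀ i ∈ A, f i j₀ ≠ k₀) (hB : ∀ j ∈ B, f i₀ j ≠ k₀)
    (hobs : ∀ i ∈ A, ∀ j ∈ B, j = b i ∨ f i j₀ = f i₀ j ∨
      (∃ x, E x (b i) (f i j)) ∨ ∃ y, E (d j) y (f i j)) :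
    #A * #B ≤ 3 * #A + #B + 2 * #(outerTriples E i₀ j₀ k₀) := by
  have hfcol : ∀ {i j j'}, f i j = f i j' → j = j' := fun {i j j'} hjj' =>
    h.latin.col_unique (hf i j) (by rw [hjj']; exact hf i j')
  have hfrow : ∀ {i i' j}, f i j = f i' j → i = i' := fun {i i' j} hii' =>
    h.latin.row_unique (hf i j) (by rw [hii']; exact hf i' j)
  have hb_inj : ∀ {i i'}, b i = b i' → i = i' := fun {i i'} hii' =>
    h.latin.row_unique (hb i) (by rw [hii']; exact hb i')
  have hd_inj : ∀ {j j'}, d j = d j' → j = j' := fun {j j'} hjj' =>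
    h.latin.col_unique (hd j) (by rw [hjj']; exact hd j')
  let P₁ : Finset (α × α) := {p ∈ A ×ˢ B | p.2 = b p.1}
  let P₂ : Finset (α × α) := {p ∈ A ×ˢ B | f p.1 j₀ = f i₀ p.2}
  let P₃ : Finset (α × α) := {p ∈ A ×ˢ B | f i₀ (b p.1) = f p.1 p.2}
  let P₄ : Finset (α × α) := {p ∈ A ×ˢ B | f (d p.2) j₀ = f p.1 p.2}
  let P₅ : Finset (α × α) :=
    {p ∈ A ×ˢ B | ∃ x, (x, b p.1, f p.1 p.2) ∈ outerTriples E i₀ j₀ k₀}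
  let P₆ : Finset (α × α) :=
    {p ∈ A ×ˢ B | ∃ y, (d p.2, y, f p.1 p.2) ∈ outerTriples E i₀ j₀ k₀}
  have h1 : #P₁ ≤ #A := by
    refine card_le_card_of_injOn Prod.fst (fun p hp => ?_) ?_
    · exact (mem_product.mp (mem_filter.mp hp).1).1
    · rintro ⟨i, j⟩ hp ⟨i', j'⟩ hq (rfl : i = i')
      exact Prod.ext rfl ((mem_filter.mp hp).2.trans (mem_filter.mp hq).2.symm)
  have h2 : #P₂ ≤ #A := by
    refine card_le_card_of_injOn Prod.fst (fun p hp => ?_) ?_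
    · exact (mem_product.mp (mem_filter.mp hp).1).1
    · rintro ⟨i, j⟩ hp ⟨i', j'⟩ hq (rfl : i = i')
      exact Prod.ext rfl (hfcol ((mem_filter.mp hp).2.symm.trans (mem_filter.mp hq).2))
  have h3 : #P₃ ≤ #A := by
    refine card_le_card_of_injOn Prod.fst (fun p hp => ?_) ?_
    · exact (mem_product.mp (mem_filter.mp hp).1).1
    · rintro ⟨i, j⟩ hp ⟨i', j'⟩ hq (rfl : i = i')
      exact Prod.ext rfl (hfcol ((mem_filter.mp hp).2.symm.trans (mem_filter.mp hq).2))
  have h4 : #P₄ ≤ #B := by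
    refine card_le_card_of_injOn Prod.snd (fun p hp => ?_) ?_
    · exact (mem_product.mp (mem_filter.mp hp).1).2
    · rintro ⟨i, j⟩ hp ⟨i', j'⟩ hq (rfl : j = j')
      exact Prod.ext (hfrow ((mem_filter.mp hp).2.symm.trans (mem_filter.mp hq).2)) rfl
  have h5 : #P₅ ≤ #(outerTriples E i₀ j₀ k₀) := by
    choose x hx using fun j k => (h.latin.existsUnique_row j k).exists
    refine card_le_card_of_injOn (fun p => (x (b p.1) (f p.1 p.2), b p.1, f p.1 p.2)) ?_ ?_
    · intro p hp
      obtain ⟨y, hy⟩ := (mem_filter.mp hp).2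
      rw [mem_coe]
      dsimp only
      rwa [h.latin.row_unique (hx _ _) (h.sub (mem_filter.mp hy).2.1)]
    · rintro ⟨i, j⟩ hp ⟨i', j'⟩ hq hpq
      simp only [Prod.mk.injEq] at hpq
      obtain rfl := hb_inj hpq.2.1
      exact Prod.ext rfl (hfcol hpq.2.2)
  have h6 : #P₆ ≤ #(outerTriples E i₀ j₀ k₀) := by
    choose y hy using fun i k => (h.latin.existsUnique_col i k).exists
    refine card_le_card_of_injOn (fun p => (d p.2, y (d p.2) (f p.1 p.2), f p.1 p.2)) ?_ ?_
    · intro p hp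
      obtain ⟨x, hx⟩ := (mem_filter.mp hp).2
      rw [mem_coe]
      dsimp only
      rwa [h.latin.col_unique (hy _ _) (h.sub (mem_filter.mp hx).2.1)]
    · rintro ⟨i, j⟩ hp ⟨i', j'⟩ hq hpq
      simp only [Prod.mk.injEq] at hpq
      obtain rfl := hd_inj hpq.1
      exact Prod.ext (hfrow hpq.2.2) rfl
  have hcover : A ×ˢ B ⊆ P₁ ∪ (P₂ ∪ (P₃ ∪ (P₄ ∪ (P₅ ∪ P₆)))) := by
    rintro ⟨i, j⟩ hp
    obtain ⟨hi, hj⟩ := mem_product.mp hp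
    simp only [P₁, P₂, P₃, P₄, P₅, P₆, outerTriples, mem_union, mem_filter, mem_univ, true_and, hp]
    by_cases hjb : j = b i
    · exact Or.inl hjb
    have hk : f i j ≠ k₀ := fun hk => hjb (h.latin.col_unique (hf i j) (by rw [hk]; exact hb i))
    rcases hobs i hi j hj with h' | h' | ⟨x, hx⟩ | ⟨y, hy⟩
    · exact absurd h' hjb
    · exact Or.inr (Or.inl h')
    · by_cases hxi : x = i₀
      · subst hxi
        exact Or.inr (Or.inr (Or.inl (h.latin.sym_unique (hf _ _) (h.sub hx))))
      · refine Or.inr (Or.inr (Or.inr (Or.inr (Or.inl ⟨x, hx, hxi, fun hbj => ?_, hk⟩))))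
        exact hA i hi (h.latin.sym_unique (hf i j₀) (by rw [← hbj]; exact hb i))
    · by_cases hyj : y = j₀
      · subst hyj
        exact Or.inr (Or.inr (Or.inr (Or.inl (h.latin.sym_unique (hf _ _) (h.sub hy)))))
      · refine Or.inr (Or.inr (Or.inr (Or.inr (Or.inr ⟨y, hy, fun hdi => ?_, hyj, hk⟩))))
        exact hB j hj (h.latin.sym_unique (hf i₀ j) (by rw [← hdi]; exact hd j))
  have h7 := card_le_card hcover
  rw [card_product] at h7
  have h8 := card_union_le P₁ (P₂ ∪ (P₃ ∪ (P₄ ∪ (P₅ ∪ P₆))))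
  have h9 := card_union_le P₂ (P₃ ∪ (P₄ ∪ (P₅ ∪ P₆)))
  have h10 := card_union_le P₃ (P₄ ∪ (P₅ ∪ P₆))
  have h11 := card_union_le P₄ (P₅ ∪ P₆)
  have h12 := card_union_le P₅ P₆
  omega

theorem eq_or_eq_of_card_le_two {γ : Type*} {s : Finset γ} (hs : #s ≤ 2) {x y z : γ}
    (hx : x ∈ s) (hy : y ∈ s) (hxy : x ≠ y) (hz : z ∈ s) : z = x ∨ z = y := by
  by_contra! hc
  exact absurd (two_lt_card.mpr ⟨x, hx, y, hy, z, hz, hxy, hc.1.symm, hc.2.symm⟩) (by omega)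

theorem IsCriticalComplement.sq_lt_card (h : IsCriticalComplement L E) {z : ℕ}
    (hn : 7 ≤ Fintype.card α) (hz : 2 * totalCount E + 22 + z ≤ 7 * Fintype.card α) :
    z ^ 2 < Fintype.card α := by
  have : Nonempty α := Fintype.card_pos_iff.mp (by omega)
  have ht : 2 * totalCount E + 14 < 7 * Fintype.card α := by omega
  let R : Finset α := {i | rowCount E i ≤ 2}
  let K : Finset α := {j | colCount E j ≤ 2}
  let S : Finset α := {k | symCount E k ≤ 2}
  have hR : 4 * Fintype.card α ≤ totalCount E + #R + 10 :=
    h.four_mul_card_le_total_add_small_rows (by omega)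
  have hK : 4 * Fintype.card α ≤ totalCount E + #K + 10 :=
    h.four_mul_card_le_total_add_small_cols (by omega)
  have hS : 4 * Fintype.card α ≤ totalCount E + #S + 10 :=
    h.four_mul_card_le_total_add_small_syms (by omega)
  obtain ⟨i₀, hi₀⟩ := Finite.exists_max (rowCount E)
  obtain ⟨j₀, hj₀⟩ := Finite.exists_max (colCount E)
  obtain ⟨k₀, hk₀⟩ := Finite.exists_max (symCount E)
  have hi₀n := h.card_le_rowCount_max ht hi₀ hk₀ (show _ ≤ #R + #K by omega)
  have hj₀n := h.card_le_colCount_max ht hj₀ hk₀ (show _ ≤ #R + #K by omega)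
  have hk₀n := h.card_le_symCount_max ht hj₀ hk₀ (show _ ≤ #R + #S by omega)
  have ho := h.card_outerTriples i₀ j₀ k₀
  choose f hf using fun i j => (h.latin.existsUnique_sym i j).exists
  choose b hb using fun i => (h.latin.existsUnique_col i k₀).exists
  choose d hd using fun j => (h.latin.existsUnique_row j k₀).exists
  have hfE : ∀ {i j k}, E i j k → k = f i j := fun he => h.latin.sym_unique (h.sub he) (hf _ _)
  have hbE : ∀ {i j}, E i j k₀ → j = b i := fun he => h.latin.col_unique (h.sub he) (hb _)
  have hdE : ∀ {i j}, E i j k₀ → i = d j := fun he => h.latin.row_unique (h.sub he) (hd _)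
  let A : Finset α := {i ∈ R | f i j₀ ∈ S}
  let B : Finset α := {j ∈ K | f i₀ j ∈ S}
  have hA : #R + #S ≤ #A + Fintype.card α := card_add_card_le_card_filter_add fun k => by
    obtain ⟨i, hi, -⟩ := h.latin.existsUnique_row j₀ k
    exact ⟨i, h.latin.sym_unique (hf _ _) hi⟩
  have hB : #K + #S ≤ #B + Fintype.card α := card_add_card_le_card_filter_add fun k => by
    obtain ⟨j, hj, -⟩ := h.latin.existsUnique_col i₀ k
    exact ⟨j, h.latin.sym_unique (hf _ _) hj⟩
  have hmemA : ∀ i ∈ A, rowCount E i ≤ 2 ∧ symCount E (f i j₀) ≤ 2 := fun i hi => by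
    simpa [A, R, S] using hi
  have hmemB : ∀ j ∈ B, colCount E j ≤ 2 ∧ symCount E (f i₀ j) ≤ 2 := fun j hj => by
    simpa [B, K, S] using hj
  have key := h.card_mul_card_le (A := A) (B := B) hf hb hd
    (fun i hi hik => by
      have := (hmemA i hi).2
      rw [hik] at this
      omega)
    (fun j hj hjk => by
      have := (hmemB j hj).2
      rw [hjk] at this
      omega)
    (fun i hi j hj => by
      obtain ⟨hi, ha⟩ := hmemA i hi
      obtain ⟨hj, hc⟩ := hmemB j hj
      have hii₀ : i ≠ i₀ := by rintro rfl; omega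
      have hjj₀ : j ≠ j₀ := by rintro rfl; omega
      have hak₀ : f i j₀ ≠ k₀ := by intro hak₀; rw [hak₀] at ha; omega
      have hck₀ : f i₀ j ≠ k₀ := by intro hck₀; rw [hck₀] at hc; omega
      have e₁ : E i j₀ (f i j₀) := by
        obtain ⟨k, hk⟩ := h.exists_sym_of_max_col ht hj₀ hi
        rwa [← hfE hk]
      have e₂ : E i (b i) k₀ := by
        obtain ⟨y, hy⟩ := h.exists_col_of_max_sym ht hk₀ hi
        rwa [← hbE hy]
      have e₃ : E i₀ j (f i₀ j) := by
        obtain ⟨k, hk⟩ := h.exists_sym_of_max_row ht hi₀ hj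
        rwa [← hfE hk]
      have e₄ : E (d j) j k₀ := by
        obtain ⟨x, hx⟩ := h.exists_row_of_max_sym ht hk₀ hj
        rwa [← hdE hx]
      obtain ⟨y₁, e₅⟩ := h.exists_col_of_max_row ht hi₀ ha
      obtain ⟨x₁, e₆⟩ := h.exists_row_of_max_col ht hj₀ hc
      refine h.exists_obstruction (i₀ := i₀) (j₀ := j₀) (fun y z he => ?_) (fun x z he => ?_)
        (fun x y he => ?_) (fun x y he => ?_)
        (hf _ _) (hb i) (hf _ _) (hd j) (hf i j) hii₀ hjj₀ hak₀ hck₀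
      · simpa using eq_or_eq_of_card_le_two hi (x := (j₀, f i j₀)) (y := (b i, k₀)) (z := (y, z))
          (by simpa using e₁) (by simpa using e₂) (by simp [hak₀]) (by simpa using he)
      · simpa using eq_or_eq_of_card_le_two hj (x := (i₀, f i₀ j)) (y := (d j, k₀)) (z := (x, z))
          (by simpa using e₃) (by simpa using e₄) (by simp [hck₀]) (by simpa using he)
      · have := eq_or_eq_of_card_le_two ha (x := (i, j₀)) (y := (i₀, y₁)) (z := (x, y))
          (by simpa using e₁) (by simpa using e₅) (by simp [hii₀]) (by simpa using he)
        simp only [Prod.mk.injEq] at this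
        tauto
      · have := eq_or_eq_of_card_le_two hc (x := (i₀, j)) (y := (x₁, j₀)) (z := (x, y))
          (by simpa using e₃) (by simpa using e₆) (by simp [hjj₀]) (by simpa using he)
        simp only [Prod.mk.injEq] at this
        tauto)
  rcases Nat.eq_zero_or_pos z with rfl | hz0
  · simp; omega
  obtain ⟨s, hs⟩ := Nat.exists_eq_add_of_le (show z + 2 ≤ #A by omega)
  obtain ⟨t, ht⟩ := Nat.exists_eq_add_of_le (show z + 2 ≤ #B by omega)
  rw [hs, ht] at key
  have hzt : t ≤ z * t := Nat.le_mul_of_pos_left t hz0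
  have hzs : s ≤ z * s := Nat.le_mul_of_pos_left s hz0
  nlinarith [Nat.zero_le (s * t)]

theorem totalCount_add_ncard {L : α → α → α} {C : Set (α × α × α)} (hC : ContainedIn C L) :
    totalCount (fun i j k => L i j = k ∧ (i, j, k) ∉ C) + C.ncard = Fintype.card α ^ 2 := by
  rw [Set.ncard_eq_toFinset_card', totalCount, sq, ← Fintype.card_prod, ← card_univ,
    ← card_union_of_disjoint]
  · symm
    refine card_bij (fun p _ => (p.1, p.2, L p.1 p.2)) (fun p _ => ?_) (fun p _ q _ hpq => ?_)
      fun t ht => ⟨(t.1, t.2.1), mem_univ _, ?_⟩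
    · simp [em']
    · simp only [Prod.mk.injEq] at hpq
      exact Prod.ext hpq.1 hpq.2.1
    · have : L t.1 t.2.1 = t.2.2 := by
        rcases mem_union.mp ht with h' | h'
        · simp only [mem_filter] at h'
          exact h'.2.1
        · exact hC t (by simpa using h')
      rw [this]
  · rw [disjoint_left]
    intro t ht ht'
    simp only [mem_filter] at ht
    exact ht.2.2 (by simpa using ht')

end CriticalComplement

/-- every critical set `C` of a Latin square of order `n ≥ 7`
leaves at least `⌊(7n − √n − 20)/2⌋` cells empty, i.e.
`n² − |C| ≥ ⌊(7n − √n − 20)/2⌋`. -/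
theorem criticalSet_empty_cells_bound (n : ℕ) (hn : 7 ≤ n)
    (L : Fin n → Fin n → Fin n) (hL : IsLatinSquare L)
    (C : Set (Fin n × Fin n × Fin n)) (hC : IsCriticalSet C L) :
    ⌊((7 * n - Real.sqrt n - 20) / 2 : ℝ)⌋₊ ≤ n ^ 2 - C.ncard := by
  have htot := totalCount_add_ncard hC.1
  have hsq := (hC.isCriticalComplement hL).sq_lt_card
    (z := 7 * n - (2 * (n ^ 2 - C.ncard) + 22))
  simp only [Fintype.card_fin] at htot hsq
  by_contra! hlt
  set e := n ^ 2 - C.ncard with he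
  have h1 : ((e + 1 : ℕ) : ℝ) ≤ (7 * n - Real.sqrt n - 20) / 2 :=
    (Nat.le_floor_iff' (by omega)).mp hlt
  push_cast at h1
  have hs := Real.sqrt_nonneg (n : ℝ)
  obtain ⟨z, hz⟩ : ∃ z, 7 * n = 2 * e + 22 + z := by
    refine Nat.exists_eq_add_of_le ?_
    have : ((2 * e + 22 : ℕ) : ℝ) ≤ (7 * n : ℕ) := by push_cast; linarith
    exact_mod_cast this
  have hz' : 7 * (n : ℝ) = 2 * e + 22 + z := by exact_mod_cast hz
  have h2 : (n : ℝ) ≤ (z : ℝ) ^ 2 := (Real.sqrt_le_left (by positivity)).mp (by linarith)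
  have h3 : n ≤ z ^ 2 := by exact_mod_cast h2
  rw [show 7 * n - (2 * e + 22) = z by omega] at hsq
  exact absurd (hsq hn (by omega)) (by omega)
end

section
/- For every positive integer n and every integer m with ⌊n²/4⌋ ≤ m ≤ ⌊(n² − n)/2⌋, except when n is even and m = n²/4 + 1, there exist a Latin square L of order n and a critical set C of L with |C| = m. -/
/-! ## Trades in strips -/

/-- A rectangle `g` of natural numbers, rows `0, …, p` and columns `0, …, q`, with the same row and
column contents as the addition table, except for prescribed defects in the extreme rows and
columns. -/
structure IsPretrade (p q : ℕ) (g : ℕ → ℕ → ℕ) : Prop where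
  row : ∀ (φ : ℕ → ℤ), ∀ x ≤ p, ∑ y ∈ Finset.range (q + 1), (φ (g x y) - φ (x + y)) =
    (if x = 0 then φ q - φ 0 else 0) + (if x = p then φ p - φ (p + q) else 0)
  col : ∀ (φ : ℕ → ℤ), ∀ y ≤ q, ∑ x ∈ Finset.range (p + 1), (φ (g x y) - φ (x + y)) =
    (if y = 0 then φ p - φ 0 else 0) + (if y = q then φ q - φ (p + q) else 0)
  corner_right : g 0 q = q
  corner_bot : g p 0 = p

theorem IsPretrade.symm {p q : ℕ} {g : ℕ → ℕ → ℕ} (h : IsPretrade p q g) :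
    IsPretrade q p fun x y => g y x where
  row φ x hx := by simpa [add_comm] using h.col φ x hx
  col φ x hx := by simpa [add_comm] using h.row φ x hx
  corner_right := h.corner_bot
  corner_bot := h.corner_right

theorem isPretrade_square {p : ℕ} (hp : 0 < p) :
    IsPretrade p p fun x y => if x = 0 ∧ y = 0 ∨ x = p ∧ y = p then p else x + y := by
  have key : ∀ (φ : ℕ → ℤ), ∀ x ≤ p, ∑ y ∈ Finset.range (p + 1),
      (φ (if x = 0 ∧ y = 0 ∨ x = p ∧ y = p then p else x + y) - φ (x + y)) =
      (if x = 0 then φ p - φ 0 else 0) + (if x = p then φ p - φ (p + p) else 0) := by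
    intro φ x hx
    have : ∀ y ∈ Finset.range (p + 1),
        (φ (if x = 0 ∧ y = 0 ∨ x = p ∧ y = p then p else x + y) - φ (x + y)) =
        (if y = 0 then (if x = 0 then φ p - φ 0 else 0) else 0) +
        (if y = p then (if x = p then φ p - φ (p + p) else 0) else 0) := by
      intro y _
      split_ifs <;> first | (exfalso; omega) | (subst_vars; simp)
    rw [Finset.sum_congr rfl this, Finset.sum_add_distrib]
    simp
  refine ⟨key, fun φ y hy => ?_, by simp [hp.ne'], by simp [hp.ne']⟩
  rw [← key φ y hy]
  refine Finset.sum_congr rfl fun x _ => ?_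
  simp only [and_comm, add_comm]

theorem IsPretrade.extend {p q : ℕ} {g : ℕ → ℕ → ℕ} (hp : 0 < p) (hq : 0 < q)
    (h : IsPretrade p q g) :
    IsPretrade p (p + q) fun x y =>
      if y < p then (if x = 0 ∧ y = 0 then p else x + y)
      else if x = p ∧ y = p then p else g x (y - p) + p := by
  refine ⟨fun φ x hx => ?_, fun φ y hy => ?_, ?_, ?_⟩
  · rw [add_assoc, Finset.sum_range_add]
    have h1 : ∀ y ∈ Finset.range p, (φ (if y < p then (if x = 0 ∧ y = 0 then p else x + y)
        else if x = p ∧ y = p then p else g x (y - p) + p) - φ (x + y)) =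
        if y = 0 then (if x = 0 then φ p - φ 0 else 0) else 0 := by
      intro y hy
      have := Finset.mem_range.1 hy
      split_ifs <;> first | (exfalso; omega) | (subst_vars; simp)
    have h2 : ∀ y ∈ Finset.range (q + 1),
        (φ (if p + y < p then (if x = 0 ∧ p + y = 0 then p else x + (p + y))
        else if x = p ∧ p + y = p then p else g x (p + y - p) + p) - φ (x + (p + y))) =
        ((fun t => φ (t + p)) (g x y) - (fun t => φ (t + p)) (x + y)) +
        (if y = 0 then (if x = p then φ p - φ (p + p) else 0) else 0) := by
      intro y hy
      have e : x + (p + y) = x + y + p := by ring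
      rw [if_neg (by omega), e, Nat.add_sub_cancel_left]
      by_cases hxy : x = p ∧ p + y = p
      · obtain ⟨rfl, hy0⟩ := hxy
        obtain rfl : y = 0 := by omega
        simp [h.corner_bot]
      · rw [if_neg hxy]
        split_ifs <;> first | (exfalso; omega) | simp
    rw [Finset.sum_congr rfl h1, Finset.sum_congr rfl h2, Finset.sum_add_distrib, h.row (fun t => φ (t + p)) x hx]
    simp only [Finset.sum_ite_eq', Finset.mem_range, hp, if_true, Nat.succ_pos]
    have e : p + (p + q) = p + q + p := by ring
    rw [e, add_comm p q]
    split_ifs <;> ring_nf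
  · by_cases hyp : y < p
    · have h1 : ∀ x ∈ Finset.range (p + 1),
          (φ (if y < p then (if x = 0 ∧ y = 0 then p else x + y)
          else if x = p ∧ y = p then p else g x (y - p) + p) - φ (x + y)) =
          if x = 0 then (if y = 0 then φ p - φ 0 else 0) else 0 := by
        intro x hx
        split_ifs <;> first | (exfalso; omega) | (subst_vars; simp)
      rw [Finset.sum_congr rfl h1, Finset.sum_ite_eq']
      rw [if_neg (show ¬ y = p + q by omega)]
      simp
    · obtain ⟨y, rfl⟩ := Nat.exists_eq_add_of_le (not_lt.1 hyp)
      have h2 : ∀ x ∈ Finset.range (p + 1),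
          (φ (if p + y < p then (if x = 0 ∧ p + y = 0 then p else x + (p + y))
          else if x = p ∧ p + y = p then p else g x (p + y - p) + p) - φ (x + (p + y))) =
          ((fun t => φ (t + p)) (g x y) - (fun t => φ (t + p)) (x + y)) +
          (if x = p then (if y = 0 then φ p - φ (p + p) else 0) else 0) := by
        intro x hx
        have e : x + (p + y) = x + y + p := by ring
        rw [if_neg (by omega), e, Nat.add_sub_cancel_left]
        by_cases hxy : x = p ∧ p + y = p
        · obtain ⟨rfl, hy0⟩ := hxy
          obtain rfl : y = 0 := by omega
          simp [h.corner_bot]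
        · rw [if_neg hxy]
          split_ifs <;> first | (exfalso; omega) | simp
      rw [Finset.sum_congr rfl h2, Finset.sum_add_distrib, h.col (fun t => φ (t + p)) y (by omega)]
      simp only [Finset.sum_ite_eq', Finset.mem_range, lt_add_one, if_true]
      have e : p + (p + q) = p + q + p := by ring
      rw [e, add_comm p q]
      split_ifs <;> first | (exfalso; omega) | simp
  · have : ¬ p + q < p := by omega
    have h' : ¬ (0 = p ∧ p + q = p) := by omega
    simp only [this, h', if_false, Nat.add_sub_cancel_left, h.corner_right]
    omega
  · simp [hp, hp.ne']

theorem exists_isPretrade : ∀ (N p q : ℕ), p + q = N → 0 < p → 0 < q →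
    ∃ g, IsPretrade p q g := by
  intro N
  induction N using Nat.strong_induction_on with
  | _ N ih =>
    intro p q hN hp hq
    rcases lt_trichotomy p q with h | rfl | h
    · obtain ⟨g, hg⟩ := ih (p + (q - p)) (by omega) p (q - p) rfl hp (by omega)
      have := hg.extend hp (by omega)
      rw [Nat.add_sub_cancel' h.le] at this
      exact ⟨_, this⟩
    · exact ⟨_, isPretrade_square hp⟩
    · obtain ⟨g, hg⟩ := ih (q + (p - q)) (by omega) q (p - q) rfl hq (by omega)
      have := hg.extend hq (by omega)
      rw [Nat.add_sub_cancel' h.le] at this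
      exact ⟨_, this.symm⟩

/-- A pretrade that changes only the corner and the columns from `p` on. -/
theorem exists_isPretrade_of_le {p q : ℕ} (hp : 0 < p) (hpq : p ≤ q) :
    ∃ g, IsPretrade p q g ∧ g 0 0 = p ∧
      ∀ x y, g x y ≠ x + y → (x = 0 ∧ y = 0) ∨ p ≤ y := by
  rcases hpq.eq_or_lt with rfl | h
  · refine ⟨_, isPretrade_square hp, by simp, fun x y hxy => ?_⟩
    split_ifs at hxy <;> omega
  · obtain ⟨g, hg⟩ := exists_isPretrade _ p (q - p) rfl hp (by omega)
    have := hg.extend hp (by omega)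
    rw [Nat.add_sub_cancel' hpq] at this
    refine ⟨_, this, by simp [hp], fun x y hxy => ?_⟩
    split_ifs at hxy <;> omega

/-- A Latin square given by its set of triples: any two coordinates determine the third. -/
structure IsLatinRel_s12 {Q : Type*} (R : Q → Q → Q → Prop) : Prop where
  sym : ∀ r c, ∃! s, R r c s
  col : ∀ r s, ∃! c, R r c s
  row : ∀ c s, ∃! r, R r c s

theorem IsLatinRel_s12.swap_row_col {Q : Type*} {R : Q → Q → Q → Prop} (h : IsLatinRel_s12 R) :
    IsLatinRel_s12 fun r c s => R c r s :=
  ⟨fun r c => h.sym c r, fun r s => h.row r s, fun c s => h.col c s⟩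

theorem IsLatinRel_s12.swap_col_sym {Q : Type*} {R : Q → Q → Q → Prop} (h : IsLatinRel_s12 R) :
    IsLatinRel_s12 fun r c s => R r s c :=
  ⟨fun r c => h.col r c, fun r s => h.sym r s, fun c s => h.row s c⟩

theorem IsLatinSquare.isLatinRel_s12 {Q : Type*} {L : Q → Q → Q} (h : IsLatinSquare L) :
    IsLatinRel_s12 fun r c s => L r c = s :=
  ⟨fun r c => ⟨L r c, rfl, fun _ e => e.symm⟩, fun r s => (h.1 r).existsUnique s,
    fun c s => (h.2 c).existsUnique s⟩

theorem IsLatinRel_s12.exists_isLatinSquare {Q : Type*} {R : Q → Q → Q → Prop} (h : IsLatinRel_s12 R) :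
    ∃ L : Q → Q → Q, IsLatinSquare L ∧ ∀ r c s, R r c s ↔ L r c = s := by
  choose L hL hu using fun r c => (h.sym r c)
  have key : ∀ r c s, R r c s ↔ L r c = s := fun r c s =>
    ⟨fun hs => (hu r c s hs).symm, fun e => e ▸ hL r c⟩
  refine ⟨L, ⟨fun i => ?_, fun j => ?_⟩, key⟩
  · refine Function.bijective_iff_existsUnique _ |>.2 fun s => ?_
    simpa only [key] using h.col i s
  · refine Function.bijective_iff_existsUnique _ |>.2 fun s => ?_
    simpa only [key] using h.row j s

theorem bijective_of_sum_eq {Q : Type*} [Fintype Q] {f g : Q → Q} (hg : Function.Bijective g)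
    (h : ∀ ψ : Q → ℤ, ∑ c, (ψ (f c) - ψ (g c)) = 0) : Function.Bijective f := by
  classical
  refine Function.Surjective.bijective_of_finite fun s => ?_
  by_contra hs
  push Not at hs
  obtain ⟨c, rfl⟩ := hg.2 s
  have h1 := h fun t => if t = g c then 1 else 0
  simp only [hs, if_false, zero_sub, Finset.sum_neg_distrib, hg.1.eq_iff] at h1
  simp at h1

/-- The difference of two functions that agree off an injective family. -/
theorem sum_eq_sum_range {Q : Type*} [Fintype Q] {d : Q → ℤ} {b : ℕ → Q} {q : ℕ}
    (hb : ∀ y ≤ q, ∀ y' ≤ q, b y = b y' → y = y') (hd : ∀ c, (∀ y ≤ q, b y ≠ c) → d c = 0) :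
    ∑ c, d c = ∑ y ∈ Finset.range (q + 1), d (b y) := by
  classical
  have hinj : Set.InjOn b (Finset.range (q + 1) : Finset ℕ) := by
    intro y hy y' hy' e
    simp only [Finset.coe_range, Set.mem_Iio] at hy hy'
    exact hb y (by omega) y' (by omega) e
  rw [← Finset.sum_image (f := d) hinj]
  symm
  refine Finset.sum_subset (Finset.subset_univ _) fun c _ hc => hd c fun y hy e => hc ?_
  exact Finset.mem_image.2 ⟨y, Finset.mem_range.2 (by omega), e⟩

/-- Replacing the cells of a rectangle by a pretrade whose defects are cancelled by the corner. -/
theorem exists_trade {Q : Type*} [Finite Q] {L : Q → Q → Q} (hL : IsLatinSquare L) {p q : ℕ}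
    (hp : 0 < p) (hpq : p ≤ q) {a b σ : ℕ → Q}
    (ha : ∀ x ≤ p, ∀ x' ≤ p, a x = a x' → x = x') (hb : ∀ y ≤ q, ∀ y' ≤ q, b y = b y' → y = y')
    (h00 : L (a 0) (b 0) = σ (p + q)) (hp0 : L (a p) (b 0) = σ p)
    (hs : ∀ x ≤ p, ∀ y ≤ q, p ≤ y → L (a x) (b y) = σ (x + y)) :
    ∃ L' : Q → Q → Q, IsLatinSquare L' ∧ L' (a 0) (b 0) ≠ σ (p + q) ∧
      ∀ r c, L' r c = L r c ∨ (r = a 0 ∧ c = b 0) ∨ (r = a p ∧ c = b 0) ∨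
        ∃ x y, x ≤ p ∧ y ≤ q ∧ p ≤ y ∧ r = a x ∧ c = b y := by
  classical
  have := Fintype.ofFinite Q
  obtain ⟨g, hg, hg0, hsup⟩ := exists_isPretrade_of_le hp hpq
  let S : ℕ → ℕ → Prop := fun x y =>
    x ≤ p ∧ y ≤ q ∧ ((x = 0 ∧ y = 0) ∨ (x = p ∧ y = 0) ∨ p ≤ y)
  let h : ℕ → ℕ → ℕ := fun x y =>
    if (x = 0 ∧ y = q) ∨ (x = p ∧ y = 0) then p + q else g x y
  let o : ℕ → ℕ → ℕ := fun x y => if x = 0 ∧ y = 0 then p + q else x + y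
  have hoS : ∀ x y, S x y → L (a x) (b y) = σ (o x y) := by
    rintro x y ⟨hx, hy, ⟨rfl, rfl⟩ | ⟨rfl, rfl⟩ | h'⟩
    · simpa [o] using h00
    · simpa [o, hp.ne'] using hp0
    · rw [hs x hx y hy h']
      simp only [o]
      rw [if_neg (by omega)]
  have hnS : ∀ x ≤ p, ∀ y ≤ q, ¬ S x y → h x y = o x y := by
    intro x hx y hy hn
    simp only [S, hx, hy, true_and, not_or] at hn
    simp only [h, o]
    rw [if_neg (by omega), if_neg (by omega)]
    by_contra hne
    rcases hsup x y hne with h' | h' <;> omega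
  let L' : Q → Q → Q := fun r c =>
    if hh : ∃ xy : ℕ × ℕ, S xy.1 xy.2 ∧ a xy.1 = r ∧ b xy.2 = c then
      σ (h hh.choose.1 hh.choose.2) else L r c
  have hL'S : ∀ x y, S x y → L' (a x) (b y) = σ (h x y) := by
    intro x y hxy
    have hh : ∃ xy : ℕ × ℕ, S xy.1 xy.2 ∧ a xy.1 = a x ∧ b xy.2 = b y := ⟨(x, y), hxy, rfl, rfl⟩
    obtain ⟨h1, h2, h3⟩ := hh.choose_spec
    simp only [L', dif_pos hh]
    rw [ha _ h1.1 _ hxy.1 h2, hb _ h1.2.1 _ hxy.2.1 h3]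
  have hL'n : ∀ r c, (¬ ∃ x y, S x y ∧ a x = r ∧ b y = c) → L' r c = L r c := by
    intro r c hn
    simp only [L']
    rw [dif_neg]
    rintro ⟨⟨x, y⟩, hxy⟩
    exact hn ⟨x, y, hxy⟩
  have hdiff : ∀ (ψ : Q → ℤ), ∀ x ≤ p, ∀ y ≤ q, ψ (L' (a x) (b y)) - ψ (L (a x) (b y)) =
      ψ (σ (h x y)) - ψ (σ (o x y)) := by
    intro ψ x hx y hy
    by_cases hS : S x y
    · rw [hL'S x y hS, hoS x y hS]
    · rw [hnS x hx y hy hS, hL'n, sub_self, sub_self]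
      rintro ⟨x', y', hS', h1, h2⟩
      rw [ha _ hS'.1 _ hx h1, hb _ hS'.2.1 _ hy h2] at hS'
      exact hS hS'
  have hho : ∀ (φ : ℕ → ℤ) x y, φ (h x y) - φ (o x y) = (φ (g x y) - φ (x + y)) +
      (if x = 0 then (if y = q then φ (p + q) - φ q else 0) else 0) +
      (if x = p then (if y = 0 then φ (p + q) - φ p else 0) else 0) -
      (if x = 0 then (if y = 0 then φ (p + q) - φ 0 else 0) else 0) := by
    intro φ x y
    have e1 := hg.corner_right
    have e2 := hg.corner_bot
    simp only [h, o]
    split_ifs <;> first | (exfalso; omega) | (subst_vars; simp [e1, e2])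
  refine ⟨L', ⟨fun r => ?_, fun c => ?_⟩, ?_, fun r c => ?_⟩
  · refine bijective_of_sum_eq (hL.1 r) fun ψ => ?_
    by_cases hr : ∃ x ≤ p, a x = r
    · obtain ⟨x, hx, rfl⟩ := hr
      rw [sum_eq_sum_range (q := q) hb]
      · rw [Finset.sum_congr rfl fun y hy => hdiff ψ x hx y (by simp at hy; omega)]
        rw [Finset.sum_congr rfl fun y hy => hho (fun t => ψ (σ t)) x y]
        rw [Finset.sum_sub_distrib, Finset.sum_add_distrib, Finset.sum_add_distrib,
          hg.row (fun t => ψ (σ t)) x hx]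
        by_cases h0 : x = 0 <;> by_cases h1 : x = p <;> simp [h0, h1] <;> omega
      · intro c hc
        rw [hL'n, sub_self]
        rintro ⟨x', y', hS, _, h2⟩
        exact hc y' hS.2.1 h2
    · refine Finset.sum_eq_zero fun c _ => ?_
      rw [hL'n, sub_self]
      rintro ⟨x', y', hS, h1, _⟩
      exact hr ⟨x', hS.1, h1⟩
  · refine bijective_of_sum_eq (hL.2 c) fun ψ => ?_
    by_cases hc : ∃ y ≤ q, b y = c
    · obtain ⟨y, hy, rfl⟩ := hc
      rw [sum_eq_sum_range (q := p) ha]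
      · rw [Finset.sum_congr rfl fun x hx => hdiff ψ x (by simp at hx; omega) y hy]
        rw [Finset.sum_congr rfl fun x hx => hho (fun t => ψ (σ t)) x y]
        rw [Finset.sum_sub_distrib, Finset.sum_add_distrib, Finset.sum_add_distrib,
          hg.col (fun t => ψ (σ t)) y hy]
        by_cases h0 : y = 0 <;> by_cases h1 : y = q <;> simp [h0, h1] <;> omega
      · intro r hr
        rw [hL'n, sub_self]
        rintro ⟨x', y', hS, h1, _⟩
        exact hr x' hS.1 h1
    · refine Finset.sum_eq_zero fun r _ => ?_
      rw [hL'n, sub_self]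
      rintro ⟨x', y', hS, _, h2⟩
      exact hc ⟨y', hS.2.1, h2⟩
  · rw [hL'S 0 0 ⟨by omega, by omega, Or.inl ⟨rfl, rfl⟩⟩]
    simp only [h]
    rw [if_neg (by omega), hg0, ← hp0, ← h00]
    intro e
    have := ha p le_rfl 0 (by omega) ((hL.2 (b 0)).1 e)
    omega
  · by_cases hh : ∃ x y, S x y ∧ a x = r ∧ b y = c
    · obtain ⟨x, y, ⟨hx, hy, h1⟩, rfl, rfl⟩ := hh
      right
      rcases h1 with ⟨rfl, rfl⟩ | ⟨rfl, rfl⟩ | h1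
      · exact Or.inl ⟨rfl, rfl⟩
      · exact Or.inr (Or.inl ⟨rfl, rfl⟩)
      · exact Or.inr (Or.inr ⟨x, y, hx, hy, h1, rfl, rfl⟩)
    · exact Or.inl (hL'n r c hh)

/-- The support, in barycentric coordinates, of a trade in a strip of width `N`. -/
def StripShape (p N u v w : ℕ) : Prop :=
  u + v + w = N ∧ (u = p ∧ v = 0 ∨ u ≤ p ∧ p ≤ v ∧ v + p ≤ N)

theorem exists_strip_trade {Q : Type*} [Finite Q] {R : Q → Q → Q → Prop} (hR : IsLatinRel_s12 R)
    {p N : ℕ} (hp : 0 < p) (hpN : 2 * p ≤ N) {A B Γ : ℕ → Q}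
    (hA : ∀ x < N, ∀ x' < N, A x = A x' → x = x') (hB : ∀ x < N, ∀ x' < N, B x = B x' → x = x')
    (h0 : R (A 0) (B 0) (Γ 0)) (hS : ∀ u v w, StripShape p N u v w → R (A u) (B v) (Γ w)) :
    ∃ R' : Q → Q → Q → Prop, IsLatinRel_s12 R' ∧ ¬ R' (A 0) (B 0) (Γ 0) ∧
      ∀ r c s, R r c s → R' r c s ∨ (r = A 0 ∧ c = B 0 ∧ s = Γ 0) ∨
        ∃ u v w, StripShape p N u v w ∧ r = A u ∧ c = B v ∧ s = Γ w := by
  obtain ⟨L, hL, hRL⟩ := hR.exists_isLatinSquare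
  simp only [hRL] at *
  obtain ⟨L', hL', hne, hag⟩ := exists_trade hL (p := p) (q := N - p) hp (by omega) (a := A)
    (b := B) (σ := fun t => Γ (N - t))
    (fun x hx x' hx' => hA x (by omega) x' (by omega))
    (fun x hx x' hx' => hB x (by omega) x' (by omega))
    (by rw [h0]; congr 1; omega)
    (hS _ _ _ ⟨by omega, by omega⟩)
    (fun x hx y hy hxy => hS _ _ _ ⟨by omega, by omega⟩)
  have e : N - (p + (N - p)) = 0 := by omega
  simp only [e] at hne
  refine ⟨fun r c s => L' r c = s, hL'.isLatinRel_s12, hne, ?_⟩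
  rintro r c s rfl
  rcases hag r c with h | ⟨rfl, rfl⟩ | ⟨rfl, rfl⟩ | ⟨x, y, hx, hy, hxy, rfl, rfl⟩
  · exact Or.inl h
  · exact Or.inr (Or.inl ⟨rfl, rfl, h0⟩)
  · have hsh : StripShape p N p 0 (N - p) := ⟨by omega, by omega⟩
    exact Or.inr (Or.inr ⟨_, _, _, hsh, rfl, rfl, hS _ _ _ hsh⟩)
  · have hsh : StripShape p N x y (N - (x + y)) := ⟨by omega, by omega⟩
    exact Or.inr (Or.inr ⟨_, _, _, hsh, rfl, rfl, hS _ _ _ hsh⟩)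

/-- The assignment of the roles (first row, first column, symbol) of a strip trade to the
displacements `x` (row), `y` (column) and `z` (symbol). -/
inductive Role
  | zxy | xzy | yzx | yxz | xyz | zyx

/-- The support of a strip trade with given roles, in terms of the displacements of the row, the
column and the symbol. -/
def Role.Shape (p N x y z : ℕ) : Role → Prop
  | zxy => StripShape p N z x y
  | xzy => StripShape p N x z y
  | yzx => StripShape p N y z x
  | yxz => StripShape p N y x z
  | xyz => StripShape p N x y z
  | zyx => StripShape p N z y x

theorem exists_role_trade {Q : Type*} [Finite Q] {R : Q → Q → Q → Prop} (hR : IsLatinRel_s12 R)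
    {p N : ℕ} (hp : 0 < p) (hpN : 2 * p ≤ N) {A B Γ : ℕ → Q}
    (hA : ∀ x < N, ∀ x' < N, A x = A x' → x = x') (hB : ∀ x < N, ∀ x' < N, B x = B x' → x = x')
    (hΓ : ∀ x < N, ∀ x' < N, Γ x = Γ x' → x = x') (h0 : R (A 0) (B 0) (Γ 0)) (ρ : Role)
    (hS : ∀ x y z, ρ.Shape p N x y z → R (A x) (B y) (Γ z)) :
    ∃ R' : Q → Q → Q → Prop, IsLatinRel_s12 R' ∧ ¬ R' (A 0) (B 0) (Γ 0) ∧
      ∀ r c s, R r c s → R' r c s ∨ (r = A 0 ∧ c = B 0 ∧ s = Γ 0) ∨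
        ∃ x y z, ρ.Shape p N x y z ∧ r = A x ∧ c = B y ∧ s = Γ z := by
  cases ρ with
  | xyz => exact exists_strip_trade hR hp hpN hA hB h0 hS
  | yxz =>
    obtain ⟨R', h, hn, ha⟩ := exists_strip_trade hR.swap_row_col hp hpN hB hA h0
      fun u v w => hS v u w
    refine ⟨_, h.swap_row_col, hn, fun r c s hr => ?_⟩
    rcases ha c r s hr with h | h | ⟨u, v, w, h⟩
    exacts [Or.inl h, by tauto, Or.inr (Or.inr ⟨v, u, w, by tauto⟩)]
  | xzy =>
    obtain ⟨R', h, hn, ha⟩ := exists_strip_trade hR.swap_col_sym hp hpN hA hΓ h0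
      fun u v w => hS u w v
    refine ⟨_, h.swap_col_sym, hn, fun r c s hr => ?_⟩
    rcases ha r s c hr with h | h | ⟨u, v, w, h⟩
    exacts [Or.inl h, by tauto, Or.inr (Or.inr ⟨u, w, v, by tauto⟩)]
  | yzx =>
    obtain ⟨R', h, hn, ha⟩ := exists_strip_trade hR.swap_row_col.swap_col_sym hp hpN hB hΓ h0
      fun u v w => hS w u v
    refine ⟨_, h.swap_col_sym.swap_row_col, hn, fun r c s hr => ?_⟩
    rcases ha c s r hr with h | h | ⟨u, v, w, h⟩
    exacts [Or.inl h, by tauto, Or.inr (Or.inr ⟨w, u, v, by tauto⟩)]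
  | zxy =>
    obtain ⟨R', h, hn, ha⟩ := exists_strip_trade hR.swap_col_sym.swap_row_col hp hpN hΓ hA h0
      fun u v w => hS v w u
    refine ⟨_, h.swap_row_col.swap_col_sym, hn, fun r c s hr => ?_⟩
    rcases ha s r c hr with h | h | ⟨u, v, w, h⟩
    exacts [Or.inl h, by tauto, Or.inr (Or.inr ⟨v, w, u, by tauto⟩)]
  | zyx =>
    obtain ⟨R', h, hn, ha⟩ := exists_strip_trade hR.swap_row_col.swap_col_sym.swap_row_col hp hpN
      hΓ hB h0 fun u v w => hS w v u
    refine ⟨_, h.swap_row_col.swap_col_sym.swap_row_col, hn, fun r c s hr => ?_⟩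
    rcases ha s c r hr with h | h | ⟨u, v, w, h⟩
    exacts [Or.inl h, by tauto, Or.inr (Or.inr ⟨w, v, u, by tauto⟩)]

/-! ## Cells that cannot be omitted -/

/-- Some Latin square differs from `L` in the cell `(i, j)` but in no other cell of `C`. -/
def IsNeeded {n : ℕ} (L : Fin n → Fin n → Fin n) (C : ℕ → ℕ → Prop) (i j : Fin n) : Prop :=
  ∃ L' : Fin n → Fin n → Fin n, IsLatinSquare L' ∧ L' i j ≠ L i j ∧
    ∀ r c : Fin n, C r c → ¬ (r = i ∧ c = j) → L' r c = L r c

theorem isNeeded_of_role_trade {n : ℕ} {L : Fin n → Fin n → Fin n} (hL : IsLatinSquare L)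
    {C : ℕ → ℕ → Prop} {i j : Fin n} (ρ : Role) (p N : ℕ) {A B Γ : ℕ → Fin n}
    (hp : 0 < p) (hpN : 2 * p ≤ N)
    (hA : ∀ x < N, ∀ x' < N, A x = A x' → x = x') (hB : ∀ x < N, ∀ x' < N, B x = B x' → x = x')
    (hΓ : ∀ x < N, ∀ x' < N, Γ x = Γ x' → x = x') (hA0 : A 0 = i) (hB0 : B 0 = j)
    (hΓ0 : Γ 0 = L i j) (hΓL : ∀ x y z, x + y + z = N → ¬ C (A x) (B y) → L (A x) (B y) = Γ z)
    (hS : ∀ x y z, x + y + z = N → ρ.Shape p N x y z → ¬ C (A x) (B y)) :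
    IsNeeded L C i j := by
  have hsum : ∀ x y z, ρ.Shape p N x y z → x + y + z = N := by
    intro x y z h
    cases ρ <;> simp only [Role.Shape, StripShape] at h <;> omega
  obtain ⟨R', hR', hn, ha⟩ := exists_role_trade hL.isLatinRel_s12 hp hpN hA hB hΓ
    (by rw [hA0, hB0, hΓ0]) ρ (fun x y z h =>
      hΓL x y z (hsum x y z h) (hS x y z (hsum x y z h) h))
  obtain ⟨L', hL', hRL⟩ := hR'.exists_isLatinSquare
  refine ⟨L', hL', ?_, fun r c hC hne => ?_⟩
  · rwa [hRL, hA0, hB0, hΓ0] at hn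
  · rcases ha r c _ rfl with h | ⟨rfl, rfl, _⟩ | ⟨x, y, z, h, rfl, rfl, _⟩
    · exact (hRL _ _ _).1 h
    · exact absurd ⟨hA0, hB0⟩ hne
    · exact absurd hC (hS x y z (hsum x y z h) h)

theorem mod_eq_or {a n r : ℕ} (h : a < 2 * n) (hr : r = a % n) : r = a ∨ r + n = a := by
  rcases lt_or_ge a n with h1 | h1
  · exact Or.inl (hr.trans (Nat.mod_eq_of_lt h1))
  · right
    rw [hr, Nat.mod_eq_sub_mod h1, Nat.mod_eq_of_lt (by omega)]
    omega

/-- A trade in the strip of width `N` of the cyclic square starting from the cell `(i, j)` in the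
positive direction. -/
theorem isNeeded_of_pos {n : ℕ} {L : Fin n → Fin n → Fin n} (hL : IsLatinSquare L)
    {C : ℕ → ℕ → Prop} (hC : ∀ r c : Fin n, ¬ C r c → (L r c : ℕ) = (r + c) % n) (i j : Fin n)
    (ρ : Role) (p N : ℕ) (hN : N ≤ n) (hij : (L i j : ℕ) = (i + j + N) % n)
    (hp : 0 < p ∧ 2 * p ≤ N)
    (hS : ∀ r c x y z : ℕ, x + y + z = N → ρ.Shape p N x y z → r < n → c < n →
      (r = i + x ∨ r + n = i + x) → (c = j + y ∨ c + n = j + y) → ¬ C r c) :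
    IsNeeded L C i j := by
  have hn : 0 < n := i.pos
  have hi := i.2
  have hj := j.2
  have inj : ∀ (d : ℕ), d < n → ∀ x < N, ∀ x' < N, (d + x) % n = (d + x') % n → x = x' := by
    intro d hd x hx x' hx' e
    rcases mod_eq_or (by omega) rfl (a := d + x) (n := n) with h | h <;>
      rcases mod_eq_or (by omega) rfl (a := d + x') (n := n) with h' | h' <;> omega
  refine isNeeded_of_role_trade hL ρ p N (A := fun x => ⟨(i + x) % n, Nat.mod_lt _ hn⟩)
    (B := fun x => ⟨(j + x) % n, Nat.mod_lt _ hn⟩)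
    (Γ := fun z => ⟨(i + j + (N - z)) % n, Nat.mod_lt _ hn⟩) hp.1 hp.2 ?_ ?_ ?_ ?_ ?_ ?_ ?_ ?_
  · intro x hx x' hx' e
    exact inj i hi x hx x' hx' (Fin.mk.inj e)
  · intro x hx x' hx' e
    exact inj j hj x hx x' hx' (Fin.mk.inj e)
  · intro x hx x' hx' e
    have e := Fin.mk.inj e
    rw [← Nat.mod_add_mod, ← Nat.mod_add_mod (i + j : ℕ) n (N - x')] at e
    have hd := Nat.mod_lt (i + j : ℕ) hn
    rcases mod_eq_or (by omega) rfl (a := (i + j : ℕ) % n + (N - x)) (n := n) with h | h <;>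
      rcases mod_eq_or (by omega) rfl (a := (i + j : ℕ) % n + (N - x')) (n := n) with h' | h' <;>
        omega
  · exact Fin.ext (by simp [Nat.mod_eq_of_lt hi])
  · exact Fin.ext (by simp [Nat.mod_eq_of_lt hj])
  · exact Fin.ext (by simp [hij])
  · intro x y z hxyz hn'
    refine Fin.ext ?_
    rw [hC _ _ hn']
    simp only [← Nat.add_mod]
    congr 1
    omega
  · intro x y z hxyz hsh
    refine hS _ _ x y z hxyz hsh (Nat.mod_lt _ hn) (Nat.mod_lt _ hn) ?_ ?_
    · exact mod_eq_or (by omega) rfl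
    · exact mod_eq_or (by omega) rfl

/-- A trade in the strip of width `N` of the cyclic square starting from the cell `(i, j)` in the
negative direction. -/
theorem isNeeded_of_neg {n : ℕ} {L : Fin n → Fin n → Fin n} (hL : IsLatinSquare L)
    {C : ℕ → ℕ → Prop} (hC : ∀ r c : Fin n, ¬ C r c → (L r c : ℕ) = (r + c) % n) (i j : Fin n)
    (ρ : Role) (p N : ℕ) (hN : N ≤ n) (hij : (L i j : ℕ) = (i + j + (n - N)) % n)
    (hp : 0 < p ∧ 2 * p ≤ N)
    (hS : ∀ r c x y z : ℕ, x + y + z = N → ρ.Shape p N x y z → r < n → c < n →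
      (r + x = i ∨ r + x = i + n) → (c + y = j ∨ c + y = j + n) → ¬ C r c) :
    IsNeeded L C i j := by
  have hn : 0 < n := i.pos
  have hi := i.2
  have hj := j.2
  have inj : ∀ (d : ℕ), d < n → ∀ x < N, ∀ x' < N, (d + (n - x)) % n = (d + (n - x')) % n →
      x = x' := by
    intro d hd x hx x' hx' e
    rcases mod_eq_or (by omega) rfl (a := d + (n - x)) (n := n) with h | h <;>
      rcases mod_eq_or (by omega) rfl (a := d + (n - x')) (n := n) with h' | h' <;> omega
  refine isNeeded_of_role_trade hL ρ p N (A := fun x => ⟨(i + (n - x)) % n, Nat.mod_lt _ hn⟩)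
    (B := fun x => ⟨(j + (n - x)) % n, Nat.mod_lt _ hn⟩)
    (Γ := fun z => ⟨(i + j + (n - N + z)) % n, Nat.mod_lt _ hn⟩) hp.1 hp.2 ?_ ?_ ?_ ?_ ?_ ?_ ?_ ?_
  · intro x hx x' hx' e
    exact inj i hi x hx x' hx' (Fin.mk.inj e)
  · intro x hx x' hx' e
    exact inj j hj x hx x' hx' (Fin.mk.inj e)
  · intro x hx x' hx' e
    have e := Fin.mk.inj e
    rw [← Nat.mod_add_mod, ← Nat.mod_add_mod (i + j : ℕ) n (n - N + x')] at e
    have hd := Nat.mod_lt (i + j : ℕ) hn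
    rcases mod_eq_or (by omega) rfl (a := (i + j : ℕ) % n + (n - N + x)) (n := n) with h | h <;>
      rcases mod_eq_or (by omega) rfl (a := (i + j : ℕ) % n + (n - N + x')) (n := n) with h' | h' <;>
        omega
  · exact Fin.ext (by simp [Nat.mod_eq_of_lt hi])
  · exact Fin.ext (by simp [Nat.mod_eq_of_lt hj])
  · exact Fin.ext (by simp [hij])
  · intro x y z hxyz hn'
    refine Fin.ext ?_
    rw [hC _ _ hn']
    simp only [← Nat.add_mod]
    have e : (i + (n - x) + (j + (n - y)) : ℕ) = i + j + (n - N + z) + n := by omega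
    rw [e, Nat.add_mod_right]
  · intro x y z hxyz hsh
    refine hS _ _ x y z hxyz hsh (Nat.mod_lt _ hn) (Nat.mod_lt _ hn) ?_ ?_
    · have := mod_eq_or (a := i + (n - x)) (n := n) (by omega) rfl
      dsimp only
      omega
    · have := mod_eq_or (a := j + (n - y)) (n := n) (by omega) rfl
      dsimp only
      omega

/-! ## The cyclic square -/

/-- The addition table of the integers modulo `n`. -/
def cyc (n : ℕ) (i j : Fin n) : Fin n := ⟨(i + j) % n, Nat.mod_lt _ i.pos⟩

theorem isLatinSquare_cyc (n : ℕ) : IsLatinSquare (cyc n) := by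
  have key : ∀ d x y : ℕ, d < n → x < n → y < n → (d + x) % n = (d + y) % n → x = y := by
    intro d x y hd hx hy e
    rcases mod_eq_or (by omega) rfl (a := d + x) (n := n) with h | h <;>
      rcases mod_eq_or (by omega) rfl (a := d + y) (n := n) with h' | h' <;> omega
  refine ⟨fun i => Function.Injective.bijective_of_finite fun x y e => ?_,
    fun i => Function.Injective.bijective_of_finite fun x y e => ?_⟩
  · exact Fin.ext (key i x y i.2 x.2 y.2 (Fin.mk.inj e))
  · have e := Fin.mk.inj e
    rw [add_comm, add_comm (y : ℕ)] at e
    exact Fin.ext (key i x y i.2 x.2 y.2 e)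

theorem isNeeded_cyc_of_pos {n : ℕ} {C : ℕ → ℕ → Prop} (i j : Fin n) (ρ : Role) (p : ℕ)
    (hp : 0 < p ∧ 2 * p ≤ n)
    (hS : ∀ r c x y z : ℕ, x + y + z = n → ρ.Shape p n x y z → r < n → c < n →
      (r = i + x ∨ r + n = i + x) → (c = j + y ∨ c + n = j + y) → ¬ C r c) :
    IsNeeded (cyc n) C i j :=
  isNeeded_of_pos (isLatinSquare_cyc n) (fun _ _ _ => rfl) i j ρ p n le_rfl (by simp [cyc]) hp hS

theorem isNeeded_cyc_of_neg {n : ℕ} {C : ℕ → ℕ → Prop} (i j : Fin n) (ρ : Role) (p : ℕ)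
    (hp : 0 < p ∧ 2 * p ≤ n)
    (hS : ∀ r c x y z : ℕ, x + y + z = n → ρ.Shape p n x y z → r < n → c < n →
      (r + x = i ∨ r + x = i + n) → (c + y = j ∨ c + y = j + n) → ¬ C r c) :
    IsNeeded (cyc n) C i j :=
  isNeeded_of_neg (isLatinSquare_cyc n) (fun _ _ _ => rfl) i j ρ p n le_rfl (by simp [cyc]) hp hS

/-! ## Corner cells of the cyclic square -/

/-- For each symbol `s < n - 1`, either the cells `i + j = s` or the cells `i + j = n + s`: the
former if `s < f` or `s = f + h`. -/
def WordCells (n f h i j : ℕ) : Prop :=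
  i + j < f ∨ i + j = f + h ∨ (n + f ≤ i + j ∧ i + j < n + f + h) ∨ n + f + h < i + j

theorem isNeeded_wordCells {n f h : ℕ} (hf : h ≤ f) (hg : f + 2 * h + 2 ≤ n) (i j : Fin n)
    (hij : WordCells n f h i j) : IsNeeded (cyc n) (WordCells n f h) i j := by
  have hi := i.2
  have hj := j.2
  unfold WordCells at hij
  rcases hij with hU | hU | hV | hV
  · by_cases h1 : 2 * (max (i : ℕ) j + 1) ≤ n
    · refine isNeeded_cyc_of_pos i j .zxy (max (i : ℕ) j + 1) (by omega) ?_
      simp only [Role.Shape, StripShape, WordCells]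
      omega
    · by_cases h2 : (j : ℕ) ≤ i
      · refine isNeeded_cyc_of_pos i j .xzy (n - i - 1) (by omega) ?_
        simp only [Role.Shape, StripShape, WordCells]
        omega
      · refine isNeeded_cyc_of_pos i j .yzx (n - j - 1) (by omega) ?_
        simp only [Role.Shape, StripShape, WordCells]
        omega
  · by_cases h2 : (i : ℕ) ≤ j
    · refine isNeeded_cyc_of_pos i j .yzx (max (i : ℕ) h + 1) (by omega) ?_
      simp only [Role.Shape, StripShape, WordCells]
      omega
    · refine isNeeded_cyc_of_pos i j .xzy (max (j : ℕ) h + 1) (by omega) ?_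
      simp only [Role.Shape, StripShape, WordCells]
      omega
  · by_cases h1 : n ≤ 2 * min (i : ℕ) j
    · refine isNeeded_cyc_of_neg i j .xzy (max (n - min (i : ℕ) j) h) (by omega) ?_
      simp only [Role.Shape, StripShape, WordCells]
      omega
    · by_cases h2 : (i : ℕ) ≤ j
      · refine isNeeded_cyc_of_neg i j .xzy i (by omega) ?_
        simp only [Role.Shape, StripShape, WordCells]
        omega
      · refine isNeeded_cyc_of_neg i j .yzx j (by omega) ?_
        simp only [Role.Shape, StripShape, WordCells]
        omega
  · by_cases h1 : n ≤ 2 * min (i : ℕ) j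
    · refine isNeeded_cyc_of_neg i j .zxy (n - min (i : ℕ) j) (by omega) ?_
      simp only [Role.Shape, StripShape, WordCells]
      omega
    · by_cases h2 : (i : ℕ) ≤ j
      · refine isNeeded_cyc_of_neg i j .xzy i (by omega) ?_
        simp only [Role.Shape, StripShape, WordCells]
        omega
      · refine isNeeded_cyc_of_neg i j .yzx j (by omega) ?_
        simp only [Role.Shape, StripShape, WordCells]
        omega

/-! ## Unique completion -/

theorem eq_of_row {Q : Type*} {L L' : Q → Q → Q} (hL : IsLatinSquare L) (hL' : IsLatinSquare L')
    {i j : Q} (h : ∀ j', j' ≠ j → L' i j' ≠ L i j' →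
      ∃ r, r ≠ i ∧ L r j' = L i j ∧ L' r j' = L r j') : L' i j = L i j := by
  obtain ⟨j', hj'⟩ := (hL'.1 i).2 (L i j)
  by_cases hne : j' = j
  · rwa [hne] at hj'
  by_cases hk : L' i j' = L i j'
  · exact absurd ((hL.1 i).1 (hk.symm.trans hj')) hne
  · obtain ⟨r, hr, h1, h2⟩ := h j' hne hk
    exact absurd ((hL'.2 j').1 (show L' r j' = L' i j' by rw [h2, h1, hj'])) hr

theorem eq_of_col {Q : Type*} {L L' : Q → Q → Q} (hL : IsLatinSquare L) (hL' : IsLatinSquare L')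
    {i j : Q} (h : ∀ i', i' ≠ i → L' i' j ≠ L i' j →
      ∃ c, c ≠ j ∧ L i' c = L i j ∧ L' i' c = L i' c) : L' i j = L i j :=
  eq_of_row (L := fun i j => L j i) (L' := fun i j => L' j i) hL.symm hL'.symm h

/-- A Latin square `L` that is cyclic in the cells not known to agree with `L'`, where for each
symbol `s < n - 1` the cells `i + j = s` (if `isU s`) or the cells `i + j = n + s` are known. -/
theorem eq_of_word {n : ℕ} {L L' : Fin n → Fin n → Fin n} (hL : IsLatinSquare L)
    (hL' : IsLatinSquare L') (isU : ℕ → Prop)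
    (hK : ∀ i j, L' i j = L i j ∨ (L i j : ℕ) = (i + j) % n)
    (hU : ∀ i j : Fin n, (i + j : ℕ) + 1 < n → isU (i + j) → L' i j = L i j)
    (hV : ∀ i j : Fin n, n ≤ (i + j : ℕ) → ¬ isU (i + j - n) → L' i j = L i j) :
    L' = L := by
  have hcyc : ∀ i j, L' i j ≠ L i j → (L i j : ℕ) = i + j ∨ (L i j : ℕ) + n = i + j :=
    fun i j h => mod_eq_or (by omega) ((hK i j).resolve_left h)
  have low : ∀ t s : ℕ, s + t = n → isU s → ∀ u : ℕ, ∀ i j : Fin n, (i : ℕ) + u = n →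
      (i + j : ℕ) = n + s → L' i j = L i j := by
    intro t
    induction t using Nat.strong_induction_on with
    | _ t iht =>
    intro s hst hs u
    induction u using Nat.strong_induction_on with
    | _ u ihu =>
    intro i j hu hij
    by_contra hne
    have hLij := hcyc i j hne
    refine hne (eq_of_row hL hL' fun j' hj' hk => ?_)
    have hj'v := Fin.val_ne_of_ne hj'
    obtain ⟨r, hr⟩ : ∃ r, L r j' = L i j := (hL.2 j').2 (L i j)
    refine ⟨r, fun e => hj' ((hL.1 i).1 (e ▸ hr)), hr, ?_⟩
    by_contra hkr
    have hri : r ≠ i := fun e => hj' ((hL.1 i).1 (e ▸ hr))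
    have hriv := Fin.val_ne_of_ne hri
    have h1 := hcyc r j' hkr
    rw [hr] at h1
    rcases h1 with h1 | h1
    · refine hkr (hU r j' (by omega) ?_)
      rwa [show (r + j' : ℕ) = s by omega]
    · rcases lt_or_gt_of_ne hriv with h2 | h2
      · apply hk
        by_cases h3 : isU (i + j' - n)
        · exact iht (n - (i + j' - n)) (by omega) _ (by omega) h3 (n - i) i j' (by omega) (by omega)
        · exact hV i j' (by omega) h3
      · exact hkr (ihu (n - r) (by omega) r j' (by omega) (by omega))
  have up : ∀ s : ℕ, s + 1 < n → ¬ isU s → ∀ u : ℕ, ∀ i j : Fin n, (i : ℕ) = u →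
      (i + j : ℕ) = s → L' i j = L i j := by
    intro s
    induction s using Nat.strong_induction_on with
    | _ s ihs =>
    intro hsn hs u
    induction u using Nat.strong_induction_on with
    | _ u ihu =>
    intro i j hu hij
    by_contra hne
    have hLij := hcyc i j hne
    refine hne (eq_of_row hL hL' fun j' hj' hk => ?_)
    have hj'v := Fin.val_ne_of_ne hj'
    obtain ⟨r, hr⟩ : ∃ r, L r j' = L i j := (hL.2 j').2 (L i j)
    refine ⟨r, fun e => hj' ((hL.1 i).1 (e ▸ hr)), hr, ?_⟩
    by_contra hkr
    have hri : r ≠ i := fun e => hj' ((hL.1 i).1 (e ▸ hr))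
    have hriv := Fin.val_ne_of_ne hri
    have h1 := hcyc r j' hkr
    rw [hr] at h1
    rcases h1 with h1 | h1
    · rcases lt_or_gt_of_ne hriv with h2 | h2
      · exact hkr (ihu r (by omega) r j' rfl (by omega))
      · apply hk
        by_cases h3 : isU (i + j')
        · exact hU i j' (by omega) h3
        · exact ihs (i + j') (by omega) (by omega) h3 i i j' rfl rfl
    · refine hkr (hV r j' (by omega) ?_)
      rwa [show (r + j' - n : ℕ) = s by omega]
  have main : ∀ i j : Fin n, (i + j : ℕ) + 1 ≠ n → L' i j = L i j := by
    intro i j hij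
    rcases lt_or_ge (i + j : ℕ) n with h | h
    · by_cases h3 : isU (i + j)
      · exact hU i j (by omega) h3
      · exact up _ (by omega) h3 i i j rfl rfl
    · by_cases h3 : isU (i + j - n)
      · exact low _ _ (Nat.add_sub_cancel' (by omega)) h3 (n - i) i j (by omega) (by omega)
      · exact hV i j h h3
  funext i j
  by_cases hij : (i + j : ℕ) + 1 = n
  · refine eq_of_row hL hL' fun j' hj' hk => absurd (main i j' ?_) hk
    have := Fin.val_ne_of_ne hj'
    omega
  · exact main i j hij

/-! ## Assembling critical sets -/

open Classical in
/-- The number of cells of an `n × n` square satisfying `C`. -/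
noncomputable def cellCount (n : ℕ) (C : ℕ → ℕ → Prop) : ℕ :=
  ∑ i ∈ Finset.range n, ∑ j ∈ Finset.range n, if C i j then 1 else 0

/-- Some Latin square of order `n` has a critical set of size `m`. -/
def HasCriticalSet (n m : ℕ) : Prop :=
  ∃ (L : Fin n → Fin n → Fin n) (C : Set (Fin n × Fin n × Fin n)),
    IsLatinSquare L ∧ IsCriticalSet C L ∧ C.ncard = m

theorem hasCriticalSet_of_cells {n : ℕ} {L : Fin n → Fin n → Fin n} (C : ℕ → ℕ → Prop)
    (hL : IsLatinSquare L)
    (hunique : ∀ L' : Fin n → Fin n → Fin n, IsLatinSquare L' →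
      (∀ i j : Fin n, C i j → L' i j = L i j) → L' = L)
    (hneeded : ∀ i j : Fin n, C i j → IsNeeded L C i j) :
    HasCriticalSet n (cellCount n C) := by
  classical
  let F : Fin n × Fin n → Fin n × Fin n × Fin n := fun c => (c.1, c.2, L c.1 c.2)
  have hF : Function.Injective F := by
    rintro ⟨a, b⟩ ⟨c, d⟩ h
    simp only [F, Prod.mk.injEq] at h
    exact Prod.ext h.1 h.2.1
  refine ⟨L, F '' {c | C c.1 c.2}, hL, ⟨?_, ?_, ?_⟩, ?_⟩
  · rintro _ ⟨c, -, rfl⟩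
    rfl
  · intro L' hL' h
    exact hunique L' hL' fun i j hC => h (F (i, j)) ⟨(i, j), hC, rfl⟩
  · intro S hS
    obtain ⟨hsub, t, ⟨⟨i, j⟩, hC, rfl⟩, ht⟩ := Set.ssubset_iff_exists.1 hS
    obtain ⟨L', hL', hne, hag⟩ := hneeded i j hC
    refine ⟨L', hL', ?_, fun e => hne (by rw [e])⟩
    intro t hts
    obtain ⟨⟨r, c⟩, hrc, rfl⟩ := hsub hts
    refine hag r c hrc ?_
    rintro ⟨rfl, rfl⟩
    exact ht hts
  · rw [Set.ncard_image_of_injective _ hF, cellCount,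
      ← Finset.coe_filter_univ, Set.ncard_coe_finset, Finset.card_filter,
      Fintype.sum_prod_type, Finset.sum_range]
    refine Finset.sum_congr rfl fun i _ => ?_
    rw [Finset.sum_range]

theorem hasCriticalSet_wordCells {n f h : ℕ} (hf : h ≤ f) (hg : f + 2 * h + 2 ≤ n) :
    HasCriticalSet n (cellCount n (WordCells n f h)) := by
  refine hasCriticalSet_of_cells _ (isLatinSquare_cyc n) (fun L' hL' h' => ?_)
    (isNeeded_wordCells hf hg)
  refine eq_of_word (isLatinSquare_cyc n) hL' (fun s => s < f ∨ s = f + h)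
    (fun i j => Or.inr rfl) (fun i j h1 h2 => h' i j ?_) (fun i j h1 h2 => h' i j ?_)
  all_goals simp only [WordCells]; omega

/-! ## Counting cells -/

theorem cellCount_eq_add {n : ℕ} {A B C : ℕ → ℕ → Prop}
    (h : ∀ i j, i < n → j < n → (A i j ↔ B i j ∨ C i j) ∧ ¬ (B i j ∧ C i j)) :
    cellCount n A = cellCount n B + cellCount n C := by
  simp only [cellCount, ← Finset.sum_add_distrib]
  refine Finset.sum_congr rfl fun i hi => Finset.sum_congr rfl fun j hj => ?_
  obtain ⟨h1, h2⟩ := h i j (Finset.mem_range.1 hi) (Finset.mem_range.1 hj)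
  by_cases hB : B i j <;> by_cases hC : C i j <;> simp_all

theorem cellCount_eq_zero {n : ℕ} {A : ℕ → ℕ → Prop} (h : ∀ i j, i < n → j < n → ¬ A i j) :
    cellCount n A = 0 := by
  refine Finset.sum_eq_zero fun i hi => Finset.sum_eq_zero fun j hj => ?_
  rw [if_neg (h i j (Finset.mem_range.1 hi) (Finset.mem_range.1 hj))]

/-- The cells satisfying `A` lie on the graph of `g` over `s`. -/
theorem cellCount_graph {n : ℕ} {A : ℕ → ℕ → Prop} (g : ℕ → ℕ) (s : Finset ℕ)
    (h : ∀ i j, i < n → j < n → (A i j ↔ i ∈ s ∧ j = g i)) (hs : ∀ i ∈ s, i < n ∧ g i < n) :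
    cellCount n A = s.card := by
  classical
  rw [cellCount, Finset.card_eq_sum_ones]
  symm
  refine Finset.sum_subset_zero_on_sdiff (fun i hi => Finset.mem_range.2 (hs i hi).1) ?_ ?_
  · intro i hi
    rw [Finset.mem_sdiff] at hi
    refine Finset.sum_eq_zero fun j hj => if_neg ?_
    rw [h i j (Finset.mem_range.1 hi.1) (Finset.mem_range.1 hj)]
    exact fun h => hi.2 h.1
  · intro i hi
    obtain ⟨h1, h2⟩ := hs i hi
    rw [Finset.sum_eq_single (g i), if_pos ((h i _ h1 h2).2 ⟨hi, rfl⟩)]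
    · intro j hj hne
      rw [if_neg]
      rw [h i j h1 (Finset.mem_range.1 hj)]
      exact fun h => hne h.2
    · exact fun h => absurd (Finset.mem_range.2 h2) h

theorem cellCount_swap (n : ℕ) (A : ℕ → ℕ → Prop) :
    cellCount n (fun i j => A j i) = cellCount n A := by
  rw [cellCount, cellCount, Finset.sum_comm]

theorem cellCount_diag {n t : ℕ} (ht : t < n) : cellCount n (fun i j => i + j = t) = t + 1 := by
  rw [cellCount_graph (fun i => t - i) (Finset.range (t + 1)), Finset.card_range] <;>
    simp only [Finset.mem_range] <;> omega

theorem cellCount_diag' {n s : ℕ} (hs : s < n) :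
    cellCount n (fun i j => i + j = n + s) = n - 1 - s := by
  rw [cellCount_graph (fun i => n + s - i) (Finset.Ico (s + 1) n), Nat.card_Ico] <;>
    try simp only [Finset.mem_Ico]
  all_goals omega

theorem two_mul_cellCount_lt {n f : ℕ} (hf : f ≤ n) :
    2 * cellCount n (fun i j => i + j < f) = f * (f + 1) := by
  induction f with
  | zero => rw [cellCount_eq_zero (by intros; omega)]
  | succ f ih =>
    rw [cellCount_eq_add (B := fun i j => i + j < f) (C := fun i j => i + j = f)
      (by intros; omega), mul_add, ih (by omega), cellCount_diag (by omega)]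
    ring

theorem two_mul_cellCount_ge {n d s : ℕ} (hs : s + d + 1 = n) :
    2 * cellCount n (fun i j => n + s ≤ i + j) = d * (d + 1) := by
  induction d generalizing s with
  | zero => rw [cellCount_eq_zero (by intros; omega)]
  | succ d ih =>
    rw [cellCount_eq_add (B := fun i j => n + (s + 1) ≤ i + j) (C := fun i j => i + j = n + s)
      (by intros; omega), mul_add, ih (by omega), cellCount_diag' (by omega),
      show n - 1 - s = d + 1 by omega]
    ring

theorem two_mul_cellCount_wordCells {n f h d : ℕ} (hn : f + d + 2 = n) (hd : h ≤ d) :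
    2 * cellCount n (WordCells n f h) = (f + 1) * (f + 2) + d * (d + 1) + 4 * h := by
  let V : ℕ → ℕ → Prop := fun i j => (n + f ≤ i + j ∧ i + j < n + f + h) ∨ n + f + h < i + j
  have h1 : cellCount n (WordCells n f h) = cellCount n (fun i j => i + j < f) +
      cellCount n (fun i j => i + j = f + h ∨ V i j) :=
    cellCount_eq_add (by intros; dsimp only [WordCells, V]; omega)
  have h2 : cellCount n (fun i j => i + j = f + h ∨ V i j) =
      cellCount n (fun i j => i + j = f + h) + cellCount n V :=
    cellCount_eq_add (by intros; dsimp only [V]; omega)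
  have h3 : cellCount n (fun i j => n + f ≤ i + j) =
      cellCount n V + cellCount n (fun i j => i + j = n + (f + h)) :=
    cellCount_eq_add (by intros; dsimp only [V]; omega)
  have h4 := two_mul_cellCount_lt (n := n) (f := f) (by omega)
  have h5 := two_mul_cellCount_ge (n := n) (d := d + 1) (s := f) (by omega)
  rw [cellCount_diag (by omega)] at h2
  rw [cellCount_diag' (by omega)] at h3
  have h6 : (d + 1) * (d + 1 + 1) = d * (d + 1) + 2 * (d + 1) := by ring
  have h7 : (f + 1) * (f + 2) = f * (f + 1) + 2 * (f + 1) := by ring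
  omega

/-! ## A triangle with exchanged cells -/

/-- The cells `i + j < a` and `i + j ≥ n + a`, with the cells `(q, 0)` and `(0, a - q)` replaced by
`(q, a - q)` for each `q` in `[1, l]` or `[a - m, a - 1]`, and with the cells of the first row and
the first column containing a symbol greater than `a`. -/
def ExchangeCells (n a l m i j : ℕ) : Prop :=
  (i + j < a ∧ ¬ (j = 0 ∧ (1 ≤ i ∧ i ≤ l ∨ a ≤ i + m)) ∧
    ¬ (i = 0 ∧ (1 ≤ j ∧ j ≤ m ∨ a ≤ j + l))) ∨
  (i + j = a ∧ (1 ≤ i ∧ i ≤ l ∨ 1 ≤ j ∧ j ≤ m)) ∨ n + a ≤ i + j ∨ (i = 0 ∧ a < j) ∨ (j = 0 ∧ a < i)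

theorem isNeeded_exchangeCells {n a l m : ℕ} (ha : a < n) (h1 : n ≤ a + l + m)
    (h2 : l + m + 2 ≤ a) (hlm : l ≤ m + 1) (hml : m ≤ l + 1) (i j : Fin n)
    (h0 : ¬ (a + 1 = n ∧ l + m = 1 ∧ (i + j : ℕ) = 0))
    (hij : ExchangeCells n a l m i j) : IsNeeded (cyc n) (ExchangeCells n a l m) i j := by
  have hi := i.2
  have hj := j.2
  unfold ExchangeCells at hij
  by_cases hbig : n + a ≤ (i + j : ℕ)
  · by_cases h3 : (i + j : ℕ) = n + a
    · by_cases h4 : 2 * (i - (l + 1) : ℕ) ≤ n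
      · refine isNeeded_cyc_of_neg i j .xzy (i - (l + 1)) (by omega) ?_
        simp only [Role.Shape, StripShape, ExchangeCells]
        omega
      · refine isNeeded_cyc_of_neg i j .yzx (n - (i - (l + 1))) (by omega) ?_
        simp only [Role.Shape, StripShape, ExchangeCells]
        omega
    · refine isNeeded_cyc_of_neg i j .xzy (n / 2) (by omega) ?_
      simp only [Role.Shape, StripShape, ExchangeCells]
      omega
  by_cases hi0 : (i : ℕ) = 0
  · by_cases hj0 : (j : ℕ) = 0
    · refine isNeeded_cyc_of_neg i j .zxy 1 (by omega) ?_
      simp only [Role.Shape, StripShape, ExchangeCells]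
      omega
    by_cases hja : a < j
    · refine isNeeded_cyc_of_neg i j .zxy (n - j + 1) (by omega) ?_
      simp only [Role.Shape, StripShape, ExchangeCells]
      omega
    by_cases h3 : 2 * (a - j) ≤ n
    · refine isNeeded_cyc_of_pos i j .yxz (a - j) (by omega) ?_
      simp only [Role.Shape, StripShape, ExchangeCells]
      omega
    · refine isNeeded_cyc_of_pos i j .zxy (n - a + j) (by omega) ?_
      simp only [Role.Shape, StripShape, ExchangeCells]
      omega
  by_cases hj0 : (j : ℕ) = 0
  · by_cases hja : a < i
    · refine isNeeded_cyc_of_neg i j .zxy (n - i + 1) (by omega) ?_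
      simp only [Role.Shape, StripShape, ExchangeCells]
      omega
    by_cases h3 : 2 * (a - i) ≤ n
    · refine isNeeded_cyc_of_pos i j .xyz (a - i) (by omega) ?_
      simp only [Role.Shape, StripShape, ExchangeCells]
      omega
    · refine isNeeded_cyc_of_pos i j .zyx (n - a + i) (by omega) ?_
      simp only [Role.Shape, StripShape, ExchangeCells]
      omega
  by_cases hija : (i + j : ℕ) = a
  · by_cases hl : (i : ℕ) ≤ l
    · refine isNeeded_cyc_of_pos i j .yzx i (by omega) ?_
      simp only [Role.Shape, StripShape, ExchangeCells]
      omega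
    · refine isNeeded_cyc_of_pos i j .xzy j (by omega) ?_
      simp only [Role.Shape, StripShape, ExchangeCells]
      omega
  by_cases h3 : 2 * (max (i : ℕ) j + 1) ≤ n
  · refine isNeeded_cyc_of_pos i j .zxy (max (i : ℕ) j + 1) (by omega) ?_
    simp only [Role.Shape, StripShape, ExchangeCells]
    omega
  by_cases h4 : (j : ℕ) ≤ i
  · refine isNeeded_cyc_of_pos i j .xzy (n - i - 1) (by omega) ?_
    simp only [Role.Shape, StripShape, ExchangeCells]
    omega
  · refine isNeeded_cyc_of_pos i j .yzx (n - j - 1) (by omega) ?_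
    simp only [Role.Shape, StripShape, ExchangeCells]
    omega

theorem cyc_eq_iff {n : ℕ} (i j k : Fin n) :
    cyc n i j = k ↔ ((i + j : ℕ) = k ∨ (i + j : ℕ) = k + n) := by
  have hk := k.2
  have h : (cyc n i j : ℕ) = i + j ∨ (cyc n i j : ℕ) + n = i + j := mod_eq_or (by omega) rfl
  have := (cyc n i j).2
  rw [Fin.ext_iff]
  omega

theorem unique_exchangeCells {n a l m : ℕ} (ha : a < n) (h2 : l + m < a)
    {L' : Fin n → Fin n → Fin n} (hL' : IsLatinSquare L')
    (h : ∀ i j : Fin n, ExchangeCells n a l m i j → L' i j = cyc n i j) : L' = cyc n := by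
  have hL := isLatinSquare_cyc n
  have given : ∀ {i j : Fin n}, L' i j ≠ cyc n i j → ¬ ExchangeCells n a l m i j :=
    fun hk hE => hk (h _ _ hE)
  have diag : ∀ u : ℕ, ∀ i j : Fin n, (i : ℕ) = u → (i + j : ℕ) = a → L' i j = cyc n i j := by
    intro u
    induction u using Nat.strong_induction_on with
    | _ u ih =>
    intro i j hu hij
    by_contra hne
    have hne' := given hne
    refine hne (eq_of_row hL hL' fun j' hj' hk => ?_)
    have hj'v := Fin.val_ne_of_ne hj'
    have hk' := given hk
    have hi := i.2
    have hj'2 := j'.2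
    simp only [ExchangeCells] at hne' hk'
    obtain ⟨r, hr⟩ : ∃ r : Fin n, (j' ≤ a ∧ (r + j' : ℕ) = a) ∨ ((r + j' : ℕ) = n + a) := by
      rcases le_or_gt (j' : ℕ) a with h3 | h3
      · exact ⟨⟨a - j', by omega⟩, Or.inl ⟨h3, by dsimp only; omega⟩⟩
      · exact ⟨⟨n + a - j', by omega⟩, Or.inr (by dsimp only; omega)⟩
    refine ⟨r, ?_, ?_, ?_⟩
    · rintro rfl
      omega
    · rw [cyc_eq_iff]
      have := (cyc_eq_iff i j (cyc n i j)).1 rfl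
      have := (cyc n i j).2
      omega
    · rcases hr with hr | hr
      · by_cases hri : (r : ℕ) < i
        · exact ih r (by omega) r j' rfl hr.2
        · refine h _ _ ?_
          simp only [ExchangeCells]
          omega
      · refine h _ _ ?_
        simp only [ExchangeCells]
        omega
  have row : ∀ u : ℕ, ∀ i j : Fin n, (i : ℕ) = 0 → (j + u : ℕ) = a → L' i j = cyc n i j := by
    intro u
    induction u using Nat.strong_induction_on with
    | _ u ih =>
    intro i j hi hju
    by_contra hne
    have hne' := given hne
    refine hne (eq_of_row hL hL' fun j' hj' hk => ?_)
    have hj'v := Fin.val_ne_of_ne hj'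
    have hk' := given hk
    have hj2 := j.2
    have hj'2 := j'.2
    have : (j' : ℕ) < j := by
      by_contra hlt
      simp only [ExchangeCells] at hk'
      exact hk (ih (a - j') (by omega) i j' hi (by omega))
    refine ⟨⟨j - j', by omega⟩, ?_, ?_, h _ _ ?_⟩
    · simp only [ne_eq, Fin.ext_iff]
      omega
    · rw [cyc_eq_iff]
      have := (cyc_eq_iff i j (cyc n i j)).1 rfl
      have := (cyc n i j).2
      dsimp only
      omega
    · simp only [ExchangeCells] at hk' ⊢
      omega
  have col : ∀ u : ℕ, ∀ i j : Fin n, (j : ℕ) = 0 → (i + u : ℕ) = a → L' i j = cyc n i j := by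
    intro u
    induction u using Nat.strong_induction_on with
    | _ u ih =>
    intro i j hj hiu
    by_contra hne
    have hne' := given hne
    refine hne (eq_of_col hL hL' fun i' hi' hk => ?_)
    have hi'v := Fin.val_ne_of_ne hi'
    have hk' := given hk
    have hi2 := i.2
    have hi'2 := i'.2
    have : (i' : ℕ) < i := by
      by_contra hlt
      simp only [ExchangeCells] at hk'
      exact hk (ih (a - i') (by omega) i' j hj (by omega))
    refine ⟨⟨i - i', by omega⟩, ?_, ?_, h _ _ ?_⟩
    · simp only [ne_eq, Fin.ext_iff]
      omega
    · rw [cyc_eq_iff]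
      have := (cyc_eq_iff i j (cyc n i j)).1 rfl
      have := (cyc n i j).2
      dsimp only
      omega
    · simp only [ExchangeCells] at hk' ⊢
      omega
  refine eq_of_word hL hL' (fun s => s < a) (fun i j => Or.inr rfl) (fun i j h3 h4 => ?_)
    (fun i j h3 h4 => h _ _ ?_)
  · by_cases hE : ExchangeCells n a l m i j
    · exact h _ _ hE
    · simp only [ExchangeCells] at hE
      by_cases hi : (i : ℕ) = 0
      · exact row (a - j) i j hi (by omega)
      · exact col (a - i) i j (by omega) (by omega)
  · simp only [ExchangeCells]
    omega

theorem two_mul_cellCount_exchangeCells {n a b l m : ℕ} (hn : a + b + 1 = n) (h2 : l + m < a) :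
    2 * (cellCount n (ExchangeCells n a l m) + (l + m)) = a * (a + 1) + b * (b + 1) + 4 * b := by
  have e1 := two_mul_cellCount_lt (n := n) (f := a) (by omega)
  have e2 := two_mul_cellCount_ge (n := n) (d := b) (s := a) (by omega)
  -- the cells exchanged in the first column, in the first row, and their replacements
  let Q : Finset ℕ := Finset.Icc 1 l ∪ Finset.Ico (a - m) a
  have hQ : ∀ i, i ∈ Q ↔ (1 ≤ i ∧ i ≤ l ∨ a ≤ i + m ∧ i < a) := by
    intro i
    simp only [Q, Finset.mem_union, Finset.mem_Icc, Finset.mem_Ico]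
    omega
  have hQc : Q.card = l + m := by
    rw [Finset.card_union_of_disjoint]
    · simp
      omega
    · rw [Finset.disjoint_left]
      simp only [Finset.mem_Icc, Finset.mem_Ico]
      omega
  let Q' : Finset ℕ := Finset.Icc 1 m ∪ Finset.Ico (a - l) a
  have hQ' : ∀ i, i ∈ Q' ↔ (1 ≤ i ∧ i ≤ m ∨ a ≤ i + l ∧ i < a) := by
    intro i
    simp only [Q', Finset.mem_union, Finset.mem_Icc, Finset.mem_Ico]
    omega
  have hQc' : Q'.card = l + m := by
    rw [Finset.card_union_of_disjoint]
    · simp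
      omega
    · rw [Finset.disjoint_left]
      simp only [Finset.mem_Icc, Finset.mem_Ico]
      omega
  have e3 : cellCount n (fun i j => j = 0 ∧ (1 ≤ i ∧ i ≤ l ∨ a ≤ i + m ∧ i < a)) = l + m := by
    rw [cellCount_graph (fun _ => 0) Q, hQc] <;> simp only [hQ] <;> omega
  have e4 : cellCount n (fun i j => i = 0 ∧ (1 ≤ j ∧ j ≤ m ∨ a ≤ j + l ∧ j < a)) = l + m := by
    rw [← cellCount_swap, cellCount_graph (fun _ => 0) Q', hQc'] <;> simp only [hQ'] <;> omega
  have e5 : cellCount n (fun i j => i + j = a ∧ (1 ≤ i ∧ i ≤ l ∨ 1 ≤ j ∧ j ≤ m)) = l + m := by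
    rw [cellCount_graph (fun i => a - i) Q, hQc] <;> simp only [hQ] <;> omega
  have e6 : cellCount n (fun i j => j = 0 ∧ a < i) = b := by
    rw [cellCount_graph (fun _ => 0) (Finset.Ioo a n), Nat.card_Ioo] <;>
      try simp only [Finset.mem_Ioo]
    all_goals omega
  have e7 : cellCount n (fun i j => i = 0 ∧ a < j) = b := by
    rw [← cellCount_swap, ← e6]
  have s1 : cellCount n (fun i j => i + j < a) = cellCount n (fun i j => i + j < a ∧
      ¬ (i = 0 ∧ (1 ≤ j ∧ j ≤ m ∨ a ≤ j + l ∧ j < a))) +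
      cellCount n (fun i j => i = 0 ∧ (1 ≤ j ∧ j ≤ m ∨ a ≤ j + l ∧ j < a)) :=
    cellCount_eq_add (by intros; omega)
  have s2 : cellCount n (fun i j => i + j < a ∧
      ¬ (i = 0 ∧ (1 ≤ j ∧ j ≤ m ∨ a ≤ j + l ∧ j < a))) =
      cellCount n (fun i j => i + j < a ∧ ¬ (j = 0 ∧ (1 ≤ i ∧ i ≤ l ∨ a ≤ i + m)) ∧
        ¬ (i = 0 ∧ (1 ≤ j ∧ j ≤ m ∨ a ≤ j + l))) +
      cellCount n (fun i j => j = 0 ∧ (1 ≤ i ∧ i ≤ l ∨ a ≤ i + m ∧ i < a)) :=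
    cellCount_eq_add (by intros; omega)
  have s3 : cellCount n (ExchangeCells n a l m) =
      cellCount n (fun i j => i + j < a ∧ ¬ (j = 0 ∧ (1 ≤ i ∧ i ≤ l ∨ a ≤ i + m)) ∧
        ¬ (i = 0 ∧ (1 ≤ j ∧ j ≤ m ∨ a ≤ j + l))) +
      cellCount n (fun i j => (i + j = a ∧ (1 ≤ i ∧ i ≤ l ∨ 1 ≤ j ∧ j ≤ m)) ∨ n + a ≤ i + j ∨
        (i = 0 ∧ a < j) ∨ (j = 0 ∧ a < i)) :=
    cellCount_eq_add (by intros; dsimp only [ExchangeCells]; omega)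
  have s4 : cellCount n (fun i j => (i + j = a ∧ (1 ≤ i ∧ i ≤ l ∨ 1 ≤ j ∧ j ≤ m)) ∨
      n + a ≤ i + j ∨ (i = 0 ∧ a < j) ∨ (j = 0 ∧ a < i)) =
      cellCount n (fun i j => i + j = a ∧ (1 ≤ i ∧ i ≤ l ∨ 1 ≤ j ∧ j ≤ m)) +
      cellCount n (fun i j => n + a ≤ i + j ∨ (i = 0 ∧ a < j) ∨ (j = 0 ∧ a < i)) :=
    cellCount_eq_add (by intros; omega)
  have s5 : cellCount n (fun i j => n + a ≤ i + j ∨ (i = 0 ∧ a < j) ∨ (j = 0 ∧ a < i)) =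
      cellCount n (fun i j => n + a ≤ i + j) +
      cellCount n (fun i j => (i = 0 ∧ a < j) ∨ (j = 0 ∧ a < i)) :=
    cellCount_eq_add (by intros; omega)
  have s6 : cellCount n (fun i j => (i = 0 ∧ a < j) ∨ (j = 0 ∧ a < i)) =
      cellCount n (fun i j => i = 0 ∧ a < j) + cellCount n (fun i j => j = 0 ∧ a < i) :=
    cellCount_eq_add (by intros; omega)
  omega

/-- A Latin square obtained from the cyclic one by permuting the symbols within each row, which
amounts to permuting them within each column. -/
theorem exists_isLatinSquare_of_perm {n : ℕ} (σ τ : ℕ → ℕ → ℕ)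
    (hlt : ∀ i < n, ∀ s < n, σ i s < n)
    (hσ : ∀ i < n, ∀ s < n, ∀ t < n, σ i s = σ i t → s = t)
    (hτ : ∀ i < n, ∀ s < n, ∀ t < n, τ i s = τ i t → s = t)
    (h : ∀ i < n, ∀ j < n, ∀ s < n, (s = i + j ∨ s + n = i + j) → σ i s = τ j s) :
    ∃ L : Fin n → Fin n → Fin n, IsLatinSquare L ∧
      ∀ i j : Fin n, (L i j : ℕ) = σ i (cyc n i j) := by
  have hc := isLatinSquare_cyc n
  have hστ : ∀ i j : Fin n, σ i (cyc n i j) = τ j (cyc n i j) := fun i j =>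
    h i i.2 j j.2 _ (cyc n i j).2 (mod_eq_or (by omega) rfl)
  refine ⟨fun i j => ⟨σ i (cyc n i j), hlt i i.2 _ (cyc n i j).2⟩, ⟨fun i => ?_, fun j => ?_⟩,
    fun i j => rfl⟩
  · refine Function.Injective.bijective_of_finite fun x y e => (hc.1 i).1 (Fin.ext ?_)
    exact hσ i i.2 _ (cyc n i x).2 _ (cyc n i y).2 (Fin.mk.inj e)
  · refine Function.Injective.bijective_of_finite fun x y e => (hc.2 j).1 (Fin.ext ?_)
    have e := Fin.mk.inj e
    rw [hστ, hστ] at e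
    exact hτ j j.2 _ (cyc n x j).2 _ (cyc n y j).2 e

theorem isNeeded_of_perm {n : ℕ} {C : ℕ → ℕ → Prop} (i j : Fin n) (σ τ : ℕ → ℕ → ℕ)
    (hlt : ∀ i < n, ∀ s < n, σ i s < n)
    (hσ : ∀ i < n, ∀ s < n, ∀ t < n, σ i s = σ i t → s = t)
    (hτ : ∀ i < n, ∀ s < n, ∀ t < n, τ i s = τ i t → s = t)
    (h : ∀ i < n, ∀ j < n, ∀ s < n, (s = i + j ∨ s + n = i + j) → σ i s = τ j s)
    (hij : ∀ s < n, (s = i + j ∨ s + n = (i + j : ℕ)) → σ i s ≠ s)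
    (hC : ∀ r < n, ∀ c < n, ∀ s < n, (s = r + c ∨ s + n = r + c) → C r c →
      ¬ (r = i ∧ c = j) → σ r s = s) : IsNeeded (cyc n) C i j := by
  obtain ⟨L, hL, hLσ⟩ := exists_isLatinSquare_of_perm σ τ hlt hσ hτ h
  have hcyc : ∀ i j : Fin n, (cyc n i j : ℕ) = i + j ∨ (cyc n i j : ℕ) + n = i + j :=
    fun i j => mod_eq_or (by omega) rfl
  refine ⟨L, hL, fun e => hij _ (cyc n i j).2 (hcyc i j) ?_, fun r c hrc hne => Fin.ext ?_⟩
  · rw [← hLσ, e]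
  · rw [hLσ]
    exact hC r r.2 c c.2 _ (cyc n r c).2 (hcyc r c) hrc
      fun h => hne ⟨Fin.ext h.1, Fin.ext h.2⟩

/-- Interchange `x` and `y`. -/
def interchange (x y s : ℕ) : ℕ := if s = x then y else if s = y then x else s

/-- Replace `x` by `y`, `y` by `z` and `z` by `x`. -/
def rotate (x y z s : ℕ) : ℕ := if s = x then y else if s = y then z else if s = z then x else s

theorem interchange_spec (x y s : ℕ) : (s = x ∧ interchange x y s = y) ∨
    (s ≠ x ∧ s = y ∧ interchange x y s = x) ∨ (s ≠ x ∧ s ≠ y ∧ interchange x y s = s) := by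
  unfold interchange
  split_ifs <;> omega

theorem rotate_spec (x y z s : ℕ) : (s = x ∧ rotate x y z s = y) ∨
    (s ≠ x ∧ s = y ∧ rotate x y z s = z) ∨ (s ≠ x ∧ s ≠ y ∧ s = z ∧ rotate x y z s = x) ∨
    (s ≠ x ∧ s ≠ y ∧ s ≠ z ∧ rotate x y z s = s) := by
  unfold rotate
  split_ifs <;> omega

theorem interchange_injective (x y : ℕ) {s t : ℕ} (h : interchange x y s = interchange x y t) :
    s = t := by
  have := interchange_spec x y s
  have := interchange_spec x y t
  omega

theorem rotate_injective {x y z s t : ℕ} (hxy : x ≠ y) (hyz : y ≠ z) (hxz : x ≠ z)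
    (h : rotate x y z s = rotate x y z t) : s = t := by
  have := rotate_spec x y z s
  have := rotate_spec x y z t
  omega

theorem isNeeded_zero_of_odd {n : ℕ} (hn : 5 ≤ n) (ho : n % 2 = 1) (i j : Fin n)
    (hi : (i : ℕ) = 0) (hj : (j : ℕ) = 0) :
    IsNeeded (cyc n) (ExchangeCells n (n - 1) 1 0) i j := by
  refine isNeeded_of_perm i j
    (fun i s => if i = 0 then interchange 0 (n - 1) s else if i = 1 then interchange 0 1 s else
      if i % 2 = 0 then interchange 1 (n - 1) s else s)
    (fun j s => if j = 0 then rotate 0 (n - 1) 1 s else if j + 1 = n then rotate 0 1 (n - 1) s else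
      if j % 2 = 0 then interchange 1 (n - 1) s else s) ?_ ?_ ?_ ?_ ?_ ?_
  · intro i hi s hs
    have := interchange_spec 0 (n - 1) s
    have := interchange_spec 0 1 s
    have := interchange_spec 1 (n - 1) s
    split_ifs <;> omega
  · intro i hi s hs t ht
    split_ifs <;> first | exact interchange_injective _ _ | exact id
  · intro i hi s hs t ht
    split_ifs <;> first
      | exact interchange_injective _ _
      | exact rotate_injective (by omega) (by omega) (by omega)
      | exact id
  · intro i hi j hj s hs h
    dsimp only [interchange, rotate]
    split_ifs <;> omega
  · intro s hs h
    have := interchange_spec 0 (n - 1) s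
    rw [if_pos hi]
    omega
  · intro r hr c hc s hs h hC hne
    unfold ExchangeCells at hC
    dsimp only [interchange]
    split_ifs <;> omega

set_option maxHeartbeats 1000000 in
theorem isNeeded_zero_of_even {n : ℕ} (hn : 6 ≤ n) (he : n % 2 = 0) (i j : Fin n)
    (hi : (i : ℕ) = 0) (hj : (j : ℕ) = 0) :
    IsNeeded (cyc n) (ExchangeCells n (n - 1) 1 0) i j := by
  refine isNeeded_of_perm i j
    (fun i s => if i = 0 then interchange 0 (n - 1) s else if i = 1 then interchange 0 1 s else
      if i + 1 = n then rotate 0 (n - 1) 1 s else if i + 2 = n then rotate 0 1 (n - 1) s else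
      if i % 2 = 0 then interchange 1 (n - 1) s else s)
    (fun j s => if j = 0 then rotate 0 (n - 1) 1 s else if j + 1 = n then rotate 0 1 (n - 1) s else
      if j = 1 then interchange 0 (n - 1) s else if j = 2 then interchange 0 1 s else
      if j % 2 = 1 then interchange 1 (n - 1) s else s) ?_ ?_ ?_ ?_ ?_ ?_
  · intro i hi s hs
    have := interchange_spec 0 (n - 1) s
    have := interchange_spec 0 1 s
    have := interchange_spec 1 (n - 1) s
    have := rotate_spec 0 1 (n - 1) s
    have := rotate_spec 0 (n - 1) 1 s
    split_ifs <;> omega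
  · intro i hi s hs t ht
    split_ifs <;> first
      | exact interchange_injective _ _
      | exact rotate_injective (by omega) (by omega) (by omega)
      | exact id
  · intro i hi s hs t ht
    split_ifs <;> first
      | exact interchange_injective _ _
      | exact rotate_injective (by omega) (by omega) (by omega)
      | exact id
  · intro i hi j hj s hs h
    dsimp only [interchange, rotate]
    split_ifs <;> omega
  · intro s hs h
    have := interchange_spec 0 (n - 1) s
    rw [if_pos hi]
    omega
  · intro r hr c hc s hs h hC hne
    unfold ExchangeCells at hC
    dsimp only [interchange, rotate]
    split_ifs <;> omega

theorem hasCriticalSet_exchangeCells {n a q : ℕ} (ha : a < n) (h1 : n ≤ a + q)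
    (h2 : q + 2 ≤ a) (hn : 5 ≤ n) :
    HasCriticalSet n (cellCount n (ExchangeCells n a (q - q / 2) (q / 2))) := by
  refine hasCriticalSet_of_cells _ (isLatinSquare_cyc n)
    (fun L' hL' h' => unique_exchangeCells ha (by omega) hL' h') fun i j hij => ?_
  by_cases h0 : a + 1 = n ∧ q - q / 2 + q / 2 = 1 ∧ (i + j : ℕ) = 0
  · obtain rfl : q = 1 := by omega
    obtain rfl : a = n - 1 := by omega
    rcases Nat.mod_two_eq_zero_or_one n with hp | hp
    · exact isNeeded_zero_of_even (by omega) hp i j (by omega) (by omega)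
    · exact isNeeded_zero_of_odd hn hp i j (by omega) (by omega)
  · exact isNeeded_exchangeCells ha (by omega) (by omega) (by omega) (by omega) i j h0 hij

/-! ## Switching an intercalate -/

theorem IsLatinSquare.switch {Q : Type*} [DecidableEq Q] {L : Q → Q → Q} (hL : IsLatinSquare L) {r₁ r₂ c₁ c₂ : Q}
    (h₁ : L r₁ c₁ = L r₂ c₂) (h₂ : L r₁ c₂ = L r₂ c₁) :
    IsLatinSquare (fun i j => if i = r₁ ∨ i = r₂ then L i (Equiv.swap c₁ c₂ j) else L i j) := by
  refine ⟨fun i => ?_, fun j => ?_⟩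
  · by_cases hi : i = r₁ ∨ i = r₂
    · simp only [if_pos hi]
      exact (hL.1 i).comp (Equiv.swap c₁ c₂).bijective
    · simp only [if_neg hi]
      exact hL.1 i
  · by_cases hj : j = c₁ ∨ j = c₂
    · convert (hL.2 j).comp (Equiv.swap r₁ r₂).bijective using 1
      funext i
      simp only [Function.comp_apply]
      by_cases h1 : i = r₁
      · rw [if_pos (Or.inl h1), h1, Equiv.swap_apply_left]
        rcases hj with rfl | rfl <;> simp [h₁, h₂]
      by_cases h2 : i = r₂
      · rw [if_pos (Or.inr h2), h2, Equiv.swap_apply_right]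
        rcases hj with rfl | rfl <;> simp [h₁, h₂]
      rw [if_neg (by tauto), Equiv.swap_apply_of_ne_of_ne h1 h2]
    · convert hL.2 j using 1
      funext i
      simp only [Equiv.swap_apply_of_ne_of_ne (show j ≠ c₁ by tauto) (show j ≠ c₂ by tauto),
        ite_self]

/-- The four cells congruent to `(a, b)` modulo `k` in a square of order `2 * k`. -/
def BlockCells (k a b i j : ℕ) : Prop := (i = a ∨ i = a + k) ∧ (j = b ∨ j = b + k)

theorem exists_switch {n k a b : ℕ} (hn : n = 2 * k) (ha : a < k) (hb : b < k)
    {L : Fin n → Fin n → Fin n} (hL : IsLatinSquare L)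
    (h : ∀ i j : Fin n, BlockCells k a b i j → L i j = cyc n i j) :
    ∃ L' : Fin n → Fin n → Fin n, IsLatinSquare L' ∧
      (∀ i j : Fin n, BlockCells k a b i j → (L' i j : ℕ) = (i + j + k) % n) ∧
      ∀ i j : Fin n, ¬ BlockCells k a b i j → L' i j = L i j := by
  obtain ⟨r₁, hr₁⟩ : ∃ r : Fin n, (r : ℕ) = a := ⟨⟨a, by omega⟩, rfl⟩
  obtain ⟨r₂, hr₂⟩ : ∃ r : Fin n, (r : ℕ) = a + k := ⟨⟨a + k, by omega⟩, rfl⟩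
  obtain ⟨c₁, hc₁⟩ : ∃ r : Fin n, (r : ℕ) = b := ⟨⟨b, by omega⟩, rfl⟩
  obtain ⟨c₂, hc₂⟩ : ∃ r : Fin n, (r : ℕ) = b + k := ⟨⟨b + k, by omega⟩, rfl⟩
  have hmod : ∀ x, (x + 2 * k) % n = x % n := fun x => by rw [hn, Nat.add_mod_right]
  have h11 := h r₁ c₁ ⟨Or.inl hr₁, Or.inl hc₁⟩
  have h12 := h r₁ c₂ ⟨Or.inl hr₁, Or.inr hc₂⟩
  have h21 := h r₂ c₁ ⟨Or.inr hr₂, Or.inl hc₁⟩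
  have h22 := h r₂ c₂ ⟨Or.inr hr₂, Or.inr hc₂⟩
  refine ⟨_, hL.switch (r₁ := r₁) (r₂ := r₂) (c₁ := c₁) (c₂ := c₂) ?_ ?_, ?_, ?_⟩
  · rw [h11, h22]
    refine Fin.ext ?_
    simp only [cyc, hr₁, hr₂, hc₁, hc₂]
    rw [← hmod]
    congr 1
    omega
  · rw [h12, h21]
    refine Fin.ext ?_
    simp only [cyc, hr₁, hr₂, hc₁, hc₂]
    congr 1
    omega
  · rintro i j ⟨hi, hj⟩
    rw [if_pos (by simpa only [Fin.ext_iff, hr₁, hr₂] using hi)]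
    rcases hj with hj | hj
    · obtain rfl : j = c₁ := Fin.ext (by omega)
      rw [Equiv.swap_apply_left, h i c₂ ⟨hi, Or.inr hc₂⟩]
      simp only [cyc]
      congr 1
      omega
    · obtain rfl : j = c₂ := Fin.ext (by omega)
      rw [Equiv.swap_apply_right, h i c₁ ⟨hi, Or.inl hc₁⟩]
      simp only [cyc]
      rw [← hmod]
      congr 1
      omega
  · intro i j hij
    by_cases hi : i = r₁ ∨ i = r₂
    · rw [if_pos hi]
      simp only [Fin.ext_iff, hr₁, hr₂] at hi
      rw [Equiv.swap_apply_of_ne_of_ne]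
      · rintro rfl
        exact hij ⟨hi, Or.inl hc₁⟩
      · rintro rfl
        exact hij ⟨hi, Or.inr hc₂⟩
    · rw [if_neg hi]

theorem add_mod_ne {n k x : ℕ} (hk : 0 < k) (hn : k < n) : (x + k) % n ≠ x % n := by
  intro e
  have h : x + k ≡ x + 0 [MOD n] := e
  have := Nat.ModEq.add_left_cancel' x h
  rw [Nat.ModEq, Nat.mod_eq_of_lt hn, Nat.zero_mod] at this
  omega

/-- A cell is needed if it is the only cell of `C` in a subsquare of order two. -/
theorem isNeeded_of_block {n k a b : ℕ} (hn : n = 2 * k) (ha : a < k) (hb : b < k)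
    {L : Fin n → Fin n → Fin n} (hL : IsLatinSquare L) {C : ℕ → ℕ → Prop}
    (h : ∀ i j : Fin n, BlockCells k a b i j → L i j = cyc n i j) (i j : Fin n)
    (hij : BlockCells k a b i j)
    (hC : ∀ r c, r < n → c < n → BlockCells k a b r c → C r c → r = i ∧ c = j) :
    IsNeeded L C i j := by
  obtain ⟨L', hL', h1, h2⟩ := exists_switch hn ha hb hL h
  refine ⟨L', hL', fun e => ?_, fun r c hrc hne => h2 r c fun hB => hne ?_⟩
  · have := h1 i j hij
    rw [e, h i j hij] at this
    exact add_mod_ne (by omega) (by omega) this.symm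
  · have := hC r c r.2 c.2 hB hrc
    exact ⟨Fin.ext this.1, Fin.ext this.2⟩

/-- The corner cells together with a subsquare of order two. -/
def SwitchedCells (n k f h x i j : ℕ) : Prop :=
  WordCells n f h i j ∨ BlockCells k (2 * x + 1) (k - 1) i j

theorem eq_of_wordCells_of_blockCells {n k f h x a b i j r c : ℕ} (hn : n = 2 * k)
    (hx : 2 * x + 5 ≤ k) (hfh : (x = 0 ∧ f + 1 = k ∧ h = 0) ∨ (h + 1 = x ∧ f = k))
    (ha : a < k) (hb : b < k) (hab : x = 0 ∨ a + b ≠ h)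
    (hij : WordCells n f h i j) (hrc : WordCells n f h r c)
    (hijB : BlockCells k a b i j) (hrcB : BlockCells k a b r c) : r = i ∧ c = j := by
  simp only [WordCells, BlockCells] at *
  rcases hfh with ⟨rfl, rfl, rfl⟩ | ⟨rfl, rfl⟩ <;> omega

set_option maxHeartbeats 600000 in
theorem isNeeded_switchedCells {n k f h x : ℕ} (hn : n = 2 * k) (hx : 2 * x + 5 ≤ k)
    (hfh : (x = 0 ∧ f + 1 = k ∧ h = 0) ∨ (h + 1 = x ∧ f = k))
    {L : Fin n → Fin n → Fin n} (hL : IsLatinSquare L)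
    (hL1 : ∀ i j : Fin n, BlockCells k (2 * x + 1) (k - 1) i j → (L i j : ℕ) = (i + j + k) % n)
    (hL2 : ∀ i j : Fin n, ¬ BlockCells k (2 * x + 1) (k - 1) i j → L i j = cyc n i j)
    (i j : Fin n) (hij : SwitchedCells n k f h x i j) :
    IsNeeded L (SwitchedCells n k f h x) i j := by
  have hi := i.2
  have hj := j.2
  have hCcyc : ∀ r c : Fin n, ¬ SwitchedCells n k f h x r c → (L r c : ℕ) = (r + c) % n := by
    intro r c hrc
    rw [hL2 r c fun h => hrc (Or.inr h)]
    rfl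
  by_cases hB : BlockCells k (2 * x + 1) (k - 1) i j
  · have hL3 := hL1 i j hB
    have hL4 : (L i j : ℕ) = (i + j + (n - k)) % n := by rw [hL3]; congr 1; omega
    obtain ⟨h1 | h1, h2 | h2⟩ := hB
    · refine isNeeded_of_pos hL hCcyc i j .zxy 1 k (by omega) hL3 (by omega) ?_
      simp only [Role.Shape, StripShape, SwitchedCells, WordCells, BlockCells]
      omega
    · refine isNeeded_of_neg hL hCcyc i j .xzy 1 k (by omega) hL4 (by omega) ?_
      simp only [Role.Shape, StripShape, SwitchedCells, WordCells, BlockCells]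
      omega
    · refine isNeeded_of_neg hL hCcyc i j .zxy 1 k (by omega) hL4 (by omega) ?_
      simp only [Role.Shape, StripShape, SwitchedCells, WordCells, BlockCells]
      omega
    · refine isNeeded_of_neg hL hCcyc i j .zxy 1 k (by omega) hL4 (by omega) ?_
      simp only [Role.Shape, StripShape, SwitchedCells, WordCells, BlockCells]
      omega
  have hij0 : (L i j : ℕ) = (i + j + n) % n := by
    rw [hL2 i j hB, Nat.add_mod_right]
    rfl
  by_cases h1 : 0 < x ∧ (i + j : ℕ) = h
  · refine isNeeded_of_pos hL hCcyc i j .zxy (max (i : ℕ) j + 1) n le_rfl hij0 (by omega) ?_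
    simp only [Role.Shape, StripShape, SwitchedCells, WordCells, BlockCells]
    omega
  by_cases h2 : 0 < x ∧ (i + j : ℕ) = f + h ∧ ((k : ℕ) ≤ i ∨ (k : ℕ) ≤ j)
  · by_cases h3 : (i : ℕ) ≤ j
    · refine isNeeded_of_pos hL hCcyc i j .yzx (max (i : ℕ) h + 1) n le_rfl hij0 (by omega) ?_
      simp only [Role.Shape, StripShape, SwitchedCells, WordCells, BlockCells]
      omega
    · refine isNeeded_of_pos hL hCcyc i j .xzy (max (j : ℕ) h + 1) n le_rfl hij0 (by omega) ?_
      simp only [Role.Shape, StripShape, SwitchedCells, WordCells, BlockCells]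
      omega
  obtain ⟨a, ha, hia⟩ : ∃ a, a < k ∧ ((i : ℕ) = a ∨ (i : ℕ) = a + k) := by
    rcases lt_or_ge (i : ℕ) k with h | h
    · exact ⟨i, h, Or.inl rfl⟩
    · exact ⟨i - k, by omega, Or.inr (by omega)⟩
  obtain ⟨b, hb, hjb⟩ : ∃ b, b < k ∧ ((j : ℕ) = b ∨ (j : ℕ) = b + k) := by
    rcases lt_or_ge (j : ℕ) k with h | h
    · exact ⟨j, h, Or.inl rfl⟩
    · exact ⟨j - k, by omega, Or.inr (by omega)⟩
  refine isNeeded_of_block hn ha hb hL (fun r c hrc => hL2 r c ?_) i j ⟨hia, hjb⟩ ?_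
  · simp only [BlockCells] at hB hrc ⊢
    omega
  · have hij := hij.resolve_right hB
    refine fun r c hr hc hrcB hrc =>
      eq_of_wordCells_of_blockCells hn hx hfh ha hb ?_ hij ?_ ⟨hia, hjb⟩ hrcB
    · simp only [WordCells] at hij
      omega
    · refine hrc.resolve_right ?_
      simp only [BlockCells] at hB hrcB ⊢
      omega

theorem hasCriticalSet_switchedCells {n k f h x : ℕ} (hn : n = 2 * k) (hx : 2 * x + 5 ≤ k)
    (hfh : (x = 0 ∧ f + 1 = k ∧ h = 0) ∨ (h + 1 = x ∧ f = k)) :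
    HasCriticalSet n (cellCount n (SwitchedCells n k f h x)) := by
  obtain ⟨L, hL, hL1, hL2⟩ := exists_switch hn (a := 2 * x + 1) (b := k - 1) (by omega) (by omega)
    (isLatinSquare_cyc n) (fun _ _ _ => rfl)
  refine hasCriticalSet_of_cells _ hL (fun L' hL' h' => ?_)
    (isNeeded_switchedCells hn hx hfh hL hL1 hL2)
  refine eq_of_word hL hL' (fun s => s < f ∨ s = f + h) (fun i j => ?_)
    (fun i j h1 h2 => h' i j (Or.inl ?_)) (fun i j h1 h2 => h' i j (Or.inl ?_))
  · by_cases hB : BlockCells k (2 * x + 1) (k - 1) i j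
    · exact Or.inl (h' i j (Or.inr hB))
    · right
      rw [hL2 i j hB]
      rfl
  all_goals simp only [WordCells]; omega

theorem cellCount_switchedCells {n k f h x : ℕ} (hn : n = 2 * k) (hx : 2 * x + 5 ≤ k)
    (hfh : (x = 0 ∧ f + 1 = k ∧ h = 0) ∨ (h + 1 = x ∧ f = k)) :
    cellCount n (SwitchedCells n k f h x) = cellCount n (WordCells n f h) + 3 := by
  have e1 : cellCount n (fun i j => j = k - 1 ∧ (i = 2 * x + 1 ∨ i = 2 * x + 1 + k)) = 2 := by
    rw [cellCount_graph (fun _ => k - 1) {2 * x + 1, 2 * x + 1 + k}, Finset.card_pair] <;>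
      try simp only [Finset.mem_insert, Finset.mem_singleton]
    all_goals omega
  have e2 : cellCount n (fun i j => i = 2 * x + 1 ∧ j = k - 1 + k) = 1 := by
    rw [cellCount_graph (fun _ => k - 1 + k) {2 * x + 1}, Finset.card_singleton]
    · simp
    · simp only [Finset.mem_singleton]
      omega
  have s1 : cellCount n (SwitchedCells n k f h x) = cellCount n (WordCells n f h) +
      cellCount n (fun i j => (j = k - 1 ∧ (i = 2 * x + 1 ∨ i = 2 * x + 1 + k)) ∨
        (i = 2 * x + 1 ∧ j = k - 1 + k)) :=
    cellCount_eq_add (by intros; dsimp only [SwitchedCells, WordCells, BlockCells]; omega)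
  have s2 : cellCount n (fun i j => (j = k - 1 ∧ (i = 2 * x + 1 ∨ i = 2 * x + 1 + k)) ∨
        (i = 2 * x + 1 ∧ j = k - 1 + k)) =
      cellCount n (fun i j => j = k - 1 ∧ (i = 2 * x + 1 ∨ i = 2 * x + 1 + k)) +
      cellCount n (fun i j => i = 2 * x + 1 ∧ j = k - 1 + k) :=
    cellCount_eq_add (by intros; omega)
  omega

/-! ## The spectrum -/

theorem hasCriticalSet_of_wordCells {n f h d m : ℕ} (hn : f + d + 2 = n) (hf : h ≤ f)
    (hd : 2 * h ≤ d) (hm : 2 * m = (f + 1) * (f + 2) + d * (d + 1) + 4 * h) :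
    HasCriticalSet n m := by
  have := two_mul_cellCount_wordCells hn (h := h) (by omega)
  rw [show m = cellCount n (WordCells n f h) by omega]
  exact hasCriticalSet_wordCells hf (by omega)

theorem hasCriticalSet_of_exchangeCells {n a b q m : ℕ} (hn : a + b + 1 = n) (h5 : 5 ≤ n)
    (hbq : b < q) (hqa : q + 2 ≤ a) (hm : 2 * (m + q) = a * (a + 1) + b * (b + 1) + 4 * b) :
    HasCriticalSet n m := by
  have := two_mul_cellCount_exchangeCells hn (l := q - q / 2) (m := q / 2) (by omega)
  rw [show m = cellCount n (ExchangeCells n a (q - q / 2) (q / 2)) by omega]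
  exact hasCriticalSet_exchangeCells (by omega) (by omega) hqa h5

theorem hasCriticalSet_of_switchedCells {k x : ℕ} (hx : 2 * x + 5 ≤ k) :
    HasCriticalSet (2 * k) (k * k + (2 * x + 3)) := by
  have key : ∀ f h d, f + d + 2 = 2 * k → h ≤ d →
      ((x = 0 ∧ f + 1 = k ∧ h = 0) ∨ (h + 1 = x ∧ f = k)) →
      2 * (k * k + 2 * x) = (f + 1) * (f + 2) + d * (d + 1) + 4 * h →
      HasCriticalSet (2 * k) (k * k + (2 * x + 3)) := by
    intro f h d hn hd hfh hm
    have h1 := two_mul_cellCount_wordCells hn hd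
    have h2 := cellCount_switchedCells rfl hx hfh
    rw [show k * k + (2 * x + 3) = cellCount (2 * k) (SwitchedCells (2 * k) k f h x) by omega]
    exact hasCriticalSet_switchedCells rfl hx hfh
  obtain ⟨c, rfl⟩ : ∃ c, k = c + 2 := ⟨k - 2, by omega⟩
  rcases x with _ | x
  · exact key (c + 1) 0 (c + 1) (by omega) (by omega) (by omega) (by ring)
  · exact key (c + 2) x c (by omega) (by omega) (by omega) (by ring)

theorem exists_step {g : ℕ → ℕ} {K m : ℕ} (hK : g K ≤ m) (h0 : m < g 0) :
    ∃ b < K, g (b + 1) ≤ m ∧ m < g b := by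
  induction K with
  | zero => omega
  | succ K ih =>
    by_cases h : g K ≤ m
    · obtain ⟨b, hb, h'⟩ := ih h
      exact ⟨b, by omega, h'⟩
    · exact ⟨K, by omega, hK, by omega⟩

theorem hasCriticalSet_of_large {n m K : ℕ} (h5 : 5 ≤ n) (hKn : 2 * K < n)
    (hK : (n - 1 - K) * (n - K) + K * (K + 1) + 2 * K ≤ 2 * m) (hm : 2 * m < (n - 1) * n) :
    HasCriticalSet n m := by
  obtain ⟨b, hb, h1, h2⟩ := exists_step (m := 2 * m)
    (g := fun b => (n - 1 - b) * (n - b) + b * (b + 1) + 2 * b) hK (by simpa using hm)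
  obtain ⟨a, rfl⟩ : ∃ a, n = a + b + 2 := ⟨n - b - 2, by omega⟩
  rw [show a + b + 2 - 1 - (b + 1) = a by omega, show a + b + 2 - (b + 1) = a + 1 by omega] at h1
  rw [show a + b + 2 - 1 - b = a + 1 by omega, show a + b + 2 - b = a + 2 by omega] at h2
  have e1 : (a + 1) * (a + 2) = a * (a + 1) + 2 * (a + 1) := by ring
  have e2 : (b + 1) * (b + 1 + 1) = b * (b + 1) + 2 * (b + 1) := by ring
  obtain ⟨q, hq⟩ : ∃ q, 2 * (m + q) = (a + 1) * (a + 2) + b * (b + 1) + 4 * b := by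
    obtain ⟨u, hu⟩ := Nat.even_mul_succ_self a
    obtain ⟨v, hv⟩ := Nat.even_mul_succ_self b
    exact ⟨u + (a + 1) + v + 2 * b - m, by omega⟩
  exact hasCriticalSet_of_exchangeCells (a := a + 1) (b := b) (q := q) (by omega) h5 (by omega)
    (by omega) hq

theorem hasCriticalSet_even {k m : ℕ} (hk : 0 < k) (h1 : k * k ≤ m)
    (h2 : 2 * m ≤ (2 * k - 1) * (2 * k)) (h3 : m ≠ k * k + 1) : HasCriticalSet (2 * k) m := by
  obtain ⟨c, rfl⟩ : ∃ c, k = c + 1 := ⟨k - 1, by omega⟩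
  have e1 : (2 * (c + 1) - 1) * (2 * (c + 1)) = (2 * c + 1) * (2 * c + 2) := rfl
  by_cases hmax : 2 * m = (2 * c + 1) * (2 * c + 2)
  · exact hasCriticalSet_of_wordCells (f := 2 * c) (h := 0) (d := 0) (by omega) (by omega)
      (by omega) (by omega)
  obtain ⟨t, rfl⟩ : ∃ t, m = (c + 1) * (c + 1) + t := ⟨_, (Nat.add_sub_cancel' h1).symm⟩
  by_cases ht : c ≤ t
  · have hc : 2 ≤ c := by
      by_contra hc
      interval_cases c <;> omega
    refine hasCriticalSet_of_large (K := c) (by omega) (by omega) ?_ (by omega)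
    rw [show 2 * (c + 1) - 1 - c = c + 1 by omega, show 2 * (c + 1) - c = c + 2 by omega]
    nlinarith
  rcases Nat.even_or_odd' t with ⟨x, rfl | rfl⟩
  · rcases x with _ | x
    · exact hasCriticalSet_of_wordCells (f := c) (h := 0) (d := c) (by omega) (by omega)
        (by omega) (by ring)
    · obtain ⟨d, rfl⟩ : ∃ d, c = d + 1 := ⟨c - 1, by omega⟩
      exact hasCriticalSet_of_wordCells (f := d + 2) (h := x) (d := d) (by omega) (by omega)
        (by omega) (by ring)
  · obtain ⟨y, rfl⟩ : ∃ y, x = y + 1 := ⟨x - 1, by omega⟩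
    exact hasCriticalSet_of_switchedCells (by omega)

theorem hasCriticalSet_odd {k m : ℕ} (hk : 0 < k) (h1 : k * k + k ≤ m)
    (h2 : 2 * m ≤ 2 * k * (2 * k + 1)) : HasCriticalSet (2 * k + 1) m := by
  obtain ⟨c, rfl⟩ : ∃ c, k = c + 1 := ⟨k - 1, by omega⟩
  by_cases hmax : 2 * m = 2 * (c + 1) * (2 * (c + 1) + 1)
  · exact hasCriticalSet_of_wordCells (f := 2 * c + 1) (h := 0) (d := 0) (by omega) (by omega)
      (by omega) (by rw [hmax]; ring)
  obtain ⟨t, rfl⟩ : ∃ t, m = (c + 1) * (c + 1) + (c + 1) + t :=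
    ⟨_, (Nat.add_sub_cancel' h1).symm⟩
  by_cases ht : c < t
  · have hc : 1 ≤ c := by
      by_contra hc
      interval_cases c
      omega
    refine hasCriticalSet_of_large (K := c) (by omega) (by omega) ?_ ?_
    · rw [show 2 * (c + 1) + 1 - 1 - c = c + 2 by omega,
        show 2 * (c + 1) + 1 - c = c + 3 by omega]
      nlinarith
    · rw [Nat.add_sub_cancel]
      omega
  rcases Nat.even_or_odd' t with ⟨x, rfl | rfl⟩
  · exact hasCriticalSet_of_wordCells (f := c) (h := x) (d := c + 1) (by omega) (by omega)
      (by omega) (by ring)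
  · exact hasCriticalSet_of_wordCells (f := c + 1) (h := x) (d := c) (by omega) (by omega)
      (by omega) (by ring)

theorem hasCriticalSet_one : HasCriticalSet 1 0 := by
  rw [← cellCount_eq_zero (n := 1) (A := fun _ _ => False) fun _ _ _ _ => id]
  exact hasCriticalSet_of_cells (fun _ _ => False) (isLatinSquare_cyc 1)
    (fun _ _ _ => Subsingleton.elim _ _) fun _ _ => False.elim

/-- for every `n ≥ 1` and every `m` with
`⌊n²/4⌋ ≤ m ≤ ⌊(n² − n)/2⌋`, except when `n` is even and `m = n²/4 + 1`,
there exist a Latin square `L` of order `n` and a critical set of `L` of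
size `m`. -/
theorem criticalSet_spectrum (n m : ℕ) (hn : 0 < n)
    (hm1 : n ^ 2 / 4 ≤ m) (hm2 : m ≤ (n ^ 2 - n) / 2)
    (hexc : ¬(Even n ∧ m = n ^ 2 / 4 + 1)) :
    ∃ (L : Fin n → Fin n → Fin n) (C : Set (Fin n × Fin n × Fin n)),
      IsLatinSquare L ∧ IsCriticalSet C L ∧ C.ncard = m := by
  rcases Nat.even_or_odd' n with ⟨k, rfl | rfl⟩
  · rw [show (2 * k) ^ 2 / 4 = k * k by rw [show (2 * k) ^ 2 = k * k * 4 by ring]; omega]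
      at hm1 hexc
    refine hasCriticalSet_even (by omega) hm1 ?_ fun h => hexc ⟨even_two_mul k, h⟩
    rw [pow_two, ← Nat.sub_one_mul] at hm2
    omega
  · have h1 : (2 * k + 1) ^ 2 = 4 * (k * k + k) + 1 := by ring
    have h2 : 2 * k * (2 * k + 1) = 4 * (k * k) + 2 * k := by ring
    rcases Nat.eq_zero_or_pos k with rfl | hk
    · obtain rfl : m = 0 := by omega
      exact hasCriticalSet_one
    · exact hasCriticalSet_odd hk (by omega) (by omega)
end

section
/- Let G be the elementary abelian 2-group of order 16, i.e. G = (ZMod 2)⁴, and let L be the Latin square of order 16 given by its Cayley table, L(x,y) = x + y for x, y ∈ G. Then there exists a critical set of L of cardinality 121. -/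
section ElementaryAbelian

variable {G : Type*} [AddCommGroup G]

/-- A cell `p` of a Latin square `L` carries the sum of its coordinates as soon as one of three
lines through it (fixed row and column, fixed row and symbol, fixed column and symbol) has all its
other candidates excluded by cells already known to carry the sum of their coordinates. -/
theorem IsLatinSquare.eq_add_of_excluded {L : G → G → G} (hL : IsLatinSquare L)
    (h2 : ∀ g : G, g + g = 0) {A : G × G → Prop} (hA : ∀ p, A p ↔ L p.1 p.2 = p.1 + p.2)
    {p : G × G}
    (h : (∀ d ≠ 0, A (p + (0, d)) ∨ A (p + (d, 0))) ∨
      (∀ d ≠ 0, A (p + (0, d)) ∨ A (p + (d, d))) ∨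
      (∀ d ≠ 0, A (p + (d, 0)) ∨ A (p + (d, d)))) : A p := by
  obtain ⟨x, y⟩ := p
  have hne {d : G} (hd : d ≠ 0) (g : G) : g + d ≠ g := by simpa using hd
  by_contra hxy
  have hxy' : L x y ≠ x + y := fun e => hxy ((hA _).2 e)
  simp only [hA, Prod.mk_add_mk, add_zero] at h
  rcases h with h | h | h
  · obtain ⟨d, hd⟩ : ∃ d, L x y = x + y + d := ⟨L x y - (x + y), by abel⟩
    have hd0 : d ≠ 0 := by rintro rfl; simp_all
    rcases h d hd0 with e | e
    · exact hne hd0 y ((hL.1 x).1 (by rw [e, hd]; abel))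
    · exact hne hd0 x ((hL.2 y).1 (by simp only [e, hd]; abel))
  · obtain ⟨y', hy'⟩ := (hL.1 x).2 (x + y)
    obtain ⟨d, rfl⟩ : ∃ d, y' = y + d := ⟨y' - y, by abel⟩
    have hd0 : d ≠ 0 := by rintro rfl; simp_all
    rcases h d hd0 with e | e
    · exact hne hd0 y (add_left_cancel (e.symm.trans hy'))
    · exact hne hd0 x ((hL.2 (y + d)).1 (by simp only [e, hy', add_add_add_comm, h2, add_zero]))
  · obtain ⟨x', hx'⟩ := (hL.2 y).2 (x + y)
    obtain ⟨d, rfl⟩ : ∃ d, x' = x + d := ⟨x' - x, by abel⟩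
    have hd0 : d ≠ 0 := by rintro rfl; simp_all
    rcases h d hd0 with e | e
    · exact hne hd0 x (add_right_cancel (e.symm.trans hx'))
    · exact hne hd0 y ((hL.1 (x + d)).1 (by
        simp only [e, add_add_add_comm, h2, add_zero]; exact hx'.symm))

/-- Switching the intercalate on rows `x, x + h` and columns `y, y + h` of the addition table. -/
theorem exists_isLatinSquare_intercalate_switch [Finite G] (h2 : ∀ g : G, g + g = 0)
    {h : G} (hh : h ≠ 0) (x y : G) :
    ∃ L : G → G → G, IsLatinSquare L ∧ L x y ≠ x + y ∧
      ∀ a b, L a b ≠ a + b → (a = x ∨ a = x + h) ∧ (b = y ∨ b = y + h) := by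
  classical
  have pair {g z : G} : (g + h = z ∨ g + h = z + h) ↔ g = z ∨ g = z + h := by
    have h3 : g + h = z ↔ g = z + h := by
      constructor <;> rintro rfl <;> rw [add_assoc, h2, add_zero]
    rw [h3, add_left_inj, or_comm]
  refine ⟨fun a b => if (a = x ∨ a = x + h) ∧ (b = y ∨ b = y + h) then a + b + h else a + b,
    ⟨fun a => ?_, fun b => ?_⟩, by simpa using hh, fun a b hab => ?_⟩
  · refine Finite.injective_iff_bijective.1 fun b c hbc => ?_
    dsimp only at hbc
    split_ifs at hbc with hb hc hc
    · simpa using hbc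
    · rw [add_assoc, add_right_inj] at hbc
      exact absurd ⟨hb.1, hbc ▸ pair.2 hb.2⟩ hc
    · rw [add_assoc, add_right_inj] at hbc
      exact absurd ⟨hc.1, hbc ▸ pair.2 hc.2⟩ hb
    · simpa using hbc
  · refine Finite.injective_iff_bijective.1 fun a c hac => ?_
    dsimp only at hac
    split_ifs at hac with ha hc hc
    · simpa using hac
    · rw [add_right_comm, add_left_inj] at hac
      exact absurd ⟨hac ▸ pair.2 ha.1, ha.2⟩ hc
    · rw [add_right_comm, add_left_inj] at hac
      exact absurd ⟨hac ▸ pair.2 hc.1, hc.2⟩ ha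
    · simpa using hac
  · by_contra hn
    exact hab (if_neg hn)

end ElementaryAbelian

/-- The vector of the four low binary digits of `n`. -/
def bits (n : ℕ) : Fin 4 → ZMod 2 := fun i => if n.testBit i then 1 else 0

/-- The cell in row `bits (c / 16)` and column `bits c`. -/
def cell (c : ℕ) : (Fin 4 → ZMod 2) × (Fin 4 → ZMod 2) := (bits (c / 16), bits c)

theorem bits_xor (a b : ℕ) : bits (a ^^^ b) = bits a + bits b := by
  funext i
  simp only [bits, Nat.testBit_xor, Pi.add_apply]
  cases a.testBit i <;> cases b.testBit i <;> decide

theorem cell_xor (a b : ℕ) : cell (a ^^^ b) = cell a + cell b := by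
  have h : (a ^^^ b) / 16 = (a / 16) ^^^ (b / 16) := by
    simpa [Nat.shiftRight_eq_div_pow] using Nat.shiftRight_xor_distrib (a := a) (b := b) (i := 4)
  simp only [cell, h, bits_xor, Prod.mk_add_mk]

theorem exists_bits_eq : ∀ g : Fin 4 → ZMod 2, ∃ n < 16, bits n = g := by
  decide +kernel

theorem cell_mul_of_lt : ∀ d < 16, cell d = (0, bits d) ∧ cell (16 * d) = (bits d, 0) ∧
    cell (17 * d) = (bits d, bits d) := by
  decide +kernel

theorem exists_cell_eq (p : (Fin 4 → ZMod 2) × (Fin 4 → ZMod 2)) : ∃ c < 256, cell c = p := by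
  obtain ⟨a, ha, ha'⟩ := exists_bits_eq p.1
  obtain ⟨b, hb, hb'⟩ := exists_bits_eq p.2
  refine ⟨(16 * a) ^^^ b, Nat.xor_lt_two_pow (n := 8) (by omega) (by omega), ?_⟩
  rw [cell_xor, (cell_mul_of_lt a ha).2.1, (cell_mul_of_lt b hb).1, ha', hb']
  simp

theorem cell_injOn : Set.InjOn cell (Finset.range 256) := by
  refine Finset.injOn_of_card_image_eq ?_
  have : (Finset.range 256).image cell = Finset.univ :=
    Finset.eq_univ_of_forall fun p => by
      obtain ⟨c, hc, h⟩ := exists_cell_eq p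
      exact Finset.mem_image.2 ⟨c, Finset.mem_range.2 hc, h⟩
  rw [this]
  simp

/-- The bit mask of a list of cells. -/
def mask : List ℕ → ℕ
  | [] => 0
  | c :: l => mask l ||| 1 <<< c

theorem testBit_mask (l : List ℕ) (c : ℕ) : (mask l).testBit c = decide (c ∈ l) := by
  induction l with
  | nil => simp [mask]
  | cons a l ih =>
    rw [mask, Nat.testBit_or, ih, Nat.one_shiftLeft, Nat.testBit_two_pow]
    simp [eq_comm, Bool.or_comm]

/-- Every nonzero displacement `d` along one of two lines through `c` leads to a cell outside the
mask `U` of the unknown cells. -/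
def lineExcluded (U c s t : ℕ) : Bool :=
  (List.range 16).all fun d => d == 0 || !U.testBit (c ^^^ s * d) || !U.testBit (c ^^^ t * d)

/-- Filling the cells of the list in order, each of them is forced by the cells known before. -/
def resolves : List ℕ → Bool
  | [] => true
  | c :: l => (lineExcluded (mask (c :: l)) c 1 16 || lineExcluded (mask (c :: l)) c 1 17 ||
      lineExcluded (mask (c :: l)) c 16 17) && resolves l

theorem add_self_eq_zero_of_bits (g : Fin 4 → ZMod 2) : g + g = 0 := CharTwo.add_self_eq_zero g

theorem exists_or_of_lineExcluded {l : List ℕ} {c s t : ℕ} (hc : c < 256) (hs : s < 18)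
    (ht : t < 18) (h : lineExcluded (mask l) c s t = true)
    {A : (Fin 4 → ZMod 2) × (Fin 4 → ZMod 2) → Prop} (hA : ∀ c < 256, c ∉ l → A (cell c))
    {n : ℕ} (hn : n < 16) (hn0 : n ≠ 0) :
    A (cell c + cell (s * n)) ∨ A (cell c + cell (t * n)) := by
  have hlt {s : ℕ} (hs : s < 18) : c ^^^ s * n < 256 :=
    Nat.xor_lt_two_pow (n := 8) hc (by nlinarith)
  have := List.all_eq_true.1 h n (List.mem_range.2 hn)
  simp only [testBit_mask, Bool.or_eq_true, beq_iff_eq, hn0, false_or, Bool.not_eq_true',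
    decide_eq_false_iff_not] at this
  simp only [← cell_xor]
  exact this.imp (hA _ (hlt hs)) (hA _ (hlt ht))

theorem IsLatinSquare.eq_add_of_resolves
    {L : (Fin 4 → ZMod 2) → (Fin 4 → ZMod 2) → Fin 4 → ZMod 2} (hL : IsLatinSquare L)
    {l : List ℕ} (hl : resolves l = true) (hlt : ∀ c ∈ l, c < 256)
    (h : ∀ c < 256, c ∉ l → L (cell c).1 (cell c).2 = (cell c).1 + (cell c).2) (x y) :
    L x y = x + y := by
  induction l with
  | nil =>
    obtain ⟨c, hc, e⟩ := exists_cell_eq (x, y)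
    simpa [e] using h c hc
  | cons c l ih =>
    simp only [resolves, Bool.and_eq_true, Bool.or_eq_true] at hl
    have hc : c < 256 := hlt c (by simp)
    refine ih hl.2 (fun a ha => hlt a (by simp [ha])) fun a ha hal => ?_
    by_cases hac : a = c
    · subst hac
      refine hL.eq_add_of_excluded add_self_eq_zero_of_bits
        (A := fun p => L p.1 p.2 = p.1 + p.2) (fun _ => Iff.rfl) ?_
      have line {s t : ℕ} (hs : s < 18) (ht : t < 18)
          (hst : lineExcluded (mask (a :: l)) a s t = true) (d : Fin 4 → ZMod 2) (hd : d ≠ 0) :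
          ∃ n < 16, bits n = d ∧
            ((fun p => L p.1 p.2 = p.1 + p.2) (cell a + cell (s * n)) ∨
              (fun p => L p.1 p.2 = p.1 + p.2) (cell a + cell (t * n))) := by
        obtain ⟨n, hn, rfl⟩ := exists_bits_eq d
        refine ⟨n, hn, rfl, exists_or_of_lineExcluded
          (A := fun p => L p.1 p.2 = p.1 + p.2) hc hs ht hst h hn ?_⟩
        rintro rfl
        exact hd (by decide)
      rcases hl.1 with (hl | hl) | hl
      · refine Or.inl fun d hd => ?_
        obtain ⟨n, hn, rfl, hA⟩ := line (by omega) (by omega) hl d hd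
        rwa [one_mul, (cell_mul_of_lt n hn).1, (cell_mul_of_lt n hn).2.1] at hA
      · refine Or.inr (Or.inl fun d hd => ?_)
        obtain ⟨n, hn, rfl, hA⟩ := line (by omega) (by omega) hl d hd
        rwa [one_mul, (cell_mul_of_lt n hn).1, (cell_mul_of_lt n hn).2.2] at hA
      · refine Or.inr (Or.inr fun d hd => ?_)
        obtain ⟨n, hn, rfl, hA⟩ := line (by omega) (by omega) hl d hd
        rwa [(cell_mul_of_lt n hn).2.1, (cell_mul_of_lt n hn).2.2] at hA
    · exact h a ha (by simp [hac, hal])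

/-- The cells outside the critical set, in an order in which each is forced by the cells outside
the rest of the list. -/
def fillOrder : List ℕ :=
  [78, 110, 113, 129, 1, 231, 103, 55, 49, 65, 81, 96, 191, 193, 223, 238, 239, 237, 61, 59,
   75, 76, 121, 213, 42, 34, 47, 45, 120, 119, 112, 48, 63, 125, 95, 80, 127, 128, 160, 170,
   102, 106, 12, 6, 196, 194, 201, 105, 190, 14, 158, 30, 154, 195, 165, 150, 199, 7, 67,
   51, 52, 53, 71, 70, 72, 85, 88, 89, 82, 18, 86, 91, 136, 152, 16, 144, 164, 134, 168,
   163, 171, 172, 176, 181, 182, 28, 21, 149, 132, 130, 2, 10, 11, 13, 41, 36, 43, 98, 100,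
   19, 20, 26, 107, 131, 137, 140, 141, 148, 157, 178, 185, 188, 204, 207, 210, 212, 214,
   216, 218, 220, 227, 228, 229, 232, 233, 235, 243, 245, 246, 249, 250, 251, 252, 253, 254]

theorem resolves_fillOrder : resolves fillOrder = true := by
  decide +kernel

theorem lt_of_mem_fillOrder : ∀ c ∈ fillOrder, c < 256 := by
  decide +kernel

theorem card_toFinset_fillOrder : fillOrder.toFinset.card = 135 := by
  decide +kernel

theorem exists_intercalate_of_notMem_fillOrder {c : ℕ} (hc : c < 256) (h : c ∉ fillOrder) :
    ∃ n < 16, n ≠ 0 ∧ c ^^^ n ∈ fillOrder ∧ c ^^^ 16 * n ∈ fillOrder ∧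
      c ^^^ 17 * n ∈ fillOrder := by
  have key : ∀ c < 256, (mask fillOrder).testBit c = false → ∃ n < 16, n ≠ 0 ∧
      (mask fillOrder).testBit (c ^^^ n) = true ∧ (mask fillOrder).testBit (c ^^^ 16 * n) = true ∧
      (mask fillOrder).testBit (c ^^^ 17 * n) = true := by
    decide +kernel
  simp only [testBit_mask, decide_eq_true_eq, decide_eq_false_iff_not] at key
  exact key c hc h

/-- The triple of the addition table at a given cell. -/
def tableEntry (p : (Fin 4 → ZMod 2) × (Fin 4 → ZMod 2)) :
    (Fin 4 → ZMod 2) × (Fin 4 → ZMod 2) × (Fin 4 → ZMod 2) := (p.1, p.2, p.1 + p.2)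

theorem tableEntry_injective : Function.Injective tableEntry := fun p q h => by
  simp only [tableEntry, Prod.mk.injEq] at h
  exact Prod.ext h.1 h.2.1

/-- the Cayley table `L(x,y) = x + y` of the elementary abelian
2-group `(ZMod 2)⁴` of order 16 has a critical set of cardinality 121. -/
theorem criticalSet_card_121_elementary_abelian_two_group :
    ∃ C : Set ((Fin 4 → ZMod 2) × (Fin 4 → ZMod 2) × (Fin 4 → ZMod 2)),
      IsCriticalSet C (fun x y : Fin 4 → ZMod 2 => x + y) ∧ C.ncard = 121 := by
  refine ⟨((Finset.range 256 \ fillOrder.toFinset).image fun c => tableEntry (cell c) : Finset _),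
    ⟨?_, fun L hL hCL => ?_, fun C' hC' => ?_⟩, ?_⟩
  · intro t ht
    simp only [Finset.coe_image, Set.mem_image] at ht
    obtain ⟨c, -, rfl⟩ := ht
    rfl
  · funext x y
    refine hL.eq_add_of_resolves resolves_fillOrder lt_of_mem_fillOrder
      (fun c hc hcl => ?_) x y
    exact hCL (tableEntry (cell c)) (by
      simp only [Finset.coe_image, Set.mem_image]
      exact ⟨c, by simp [hc, hcl], rfl⟩)
  · obtain ⟨hsub, t, ht, htC'⟩ := Set.ssubset_iff_exists.1 hC'
    simp only [Finset.coe_image, Set.mem_image, Finset.coe_sdiff, Finset.coe_range,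
      List.coe_toFinset, Set.mem_sdiff, Set.mem_Iio, Set.mem_ofPred_eq] at ht
    obtain ⟨c, ⟨hc, hcl⟩, rfl⟩ := ht
    obtain ⟨n, hn, hn0, h₁, h₂, h₃⟩ := exists_intercalate_of_notMem_fillOrder hc hcl
    have hb : bits n ≠ 0 := fun h0 => hn0 <| cell_injOn (by simp; omega) (by simp) <| by
      rw [(cell_mul_of_lt n hn).1, h0]; decide
    obtain ⟨L, hL, hne, hL'⟩ := exists_isLatinSquare_intercalate_switch
      add_self_eq_zero_of_bits hb (cell c).1 (cell c).2
    refine ⟨L, hL, fun s hs => ?_, fun e => hne (by rw [e])⟩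
    have hs' := hsub hs
    simp only [Finset.coe_image, Set.mem_image, Finset.coe_sdiff, Finset.coe_range,
      List.coe_toFinset, Set.mem_sdiff, Set.mem_Iio, Set.mem_ofPred_eq] at hs'
    obtain ⟨b, ⟨hb', hbl⟩, rfl⟩ := hs'
    by_contra hLb
    have hmem {m : ℕ} (hm : m ∈ fillOrder) : cell b ≠ cell m := fun e =>
      hbl (cell_injOn (by simpa using hb') (by simpa using lt_of_mem_fillOrder m hm) e ▸ hm)
    have e₁ := hmem h₁
    have e₂ := hmem h₂
    have e₃ := hmem h₃
    rw [cell_xor] at e₁ e₂ e₃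
    rw [(cell_mul_of_lt n hn).1] at e₁
    rw [(cell_mul_of_lt n hn).2.1] at e₂
    rw [(cell_mul_of_lt n hn).2.2] at e₃
    have e₀ : cell b ≠ cell c := fun e => htC' (e ▸ hs)
    obtain ⟨hr | hr, hk | hk⟩ := hL' _ _ hLb
    · exact e₀ (Prod.ext hr hk)
    · exact e₁ (Prod.ext (hr.trans (add_zero _).symm) hk)
    · exact e₂ (Prod.ext hr (hk.trans (add_zero _).symm))
    · exact e₃ (Prod.ext hr hk)
  · rw [Set.ncard_coe_finset, Finset.card_image_of_injOn, Finset.card_sdiff_of_subset,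
      card_toFinset_fillOrder, Finset.card_range]
    · exact fun c hc => Finset.mem_range.2 (lt_of_mem_fillOrder c (by simpa using hc))
    · refine tableEntry_injective.comp_injOn (cell_injOn.mono ?_)
      exact_mod_cast Finset.sdiff_subset
end

section
/- For every integer n > 2 there exists a partial Latin square C of order 2n (a set of triples (i,j,k) with i, j, k ∈ Fin 2n) with the following properties: |C| = n² − n + 2; every triple (i,j,k) ∈ C has its cell on or above the main diagonal (i ≤ j); there is a symbol s such that exactly 2n − 2 of the triples of C are of the form (i,i,s), lying on the main diagonal; and C is uniquely completable to a symmetric Latin square, i.e. there is exactly one Latin square L of order 2n with L(i,j) = L(j,i) for all i, j that contains C. -/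
/-- The unipotent symmetric square on `{0, …, m}` (`m` odd) obtained by prolonging the addition
table modulo `m` along its diagonal: the diagonal symbols `2 i` move to the cells `(i, m)` and
`(m, i)`, and the symbol `m` takes their place. -/
def prolongedSquare (m i j : ℕ) : ℕ :=
  if i = j then m
  else
    if (if i = m then j else i) + (if j = m then i else j) < m then
      (if i = m then j else i) + (if j = m then i else j)
    else (if i = m then j else i) + (if j = m then i else j) - m

theorem prolongedSquare_comm (m i j : ℕ) : prolongedSquare m i j = prolongedSquare m j i := by
  unfold prolongedSquare
  split_ifs <;> omega

theorem prolongedSquare_le {m i j : ℕ} (hi : i ≤ m) (hj : j ≤ m) : prolongedSquare m i j ≤ m := by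
  unfold prolongedSquare
  split_ifs <;> omega

theorem prolongedSquare_injective {n m i j k : ℕ} (hm : m + 1 = 2 * n) (hi : i ≤ m) (hj : j ≤ m)
    (hk : k ≤ m) (h : prolongedSquare m i j = prolongedSquare m i k) : j = k := by
  unfold prolongedSquare at h
  split_ifs at h <;> omega

/-- The cells of the two corner triangles of the addition table modulo `2 n - 1`, strictly above
the diagonal after prolongation. -/
def InLowCorner (n i j : ℕ) : Prop :=
  i < j ∧ ((j + 1 < 2 * n ∧ i + j + 2 ≤ n) ∨ (j + 1 = 2 * n ∧ 2 * i + 2 ≤ n))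

/-- See `InLowCorner`. -/
def InHighCorner (n i j : ℕ) : Prop :=
  i < j ∧ ((j + 1 < 2 * n ∧ 3 * n ≤ i + j + 2) ∨ (j + 1 = 2 * n ∧ 3 * n ≤ 2 * i + 2))

/-- A symmetric Latin square with constant diagonal `m` that agrees with `prolongedSquare m` on
the corner triangles agrees with it wherever the sum of the coordinates does not wrap around. -/
theorem eq_of_corners_low {n m : ℕ} (hm : m + 1 = 2 * n) {M : ℕ → ℕ → ℕ}
    (symm : ∀ i j, M i j = M j i)
    (inj : ∀ i j k, i ≤ m → j ≤ m → k ≤ m → M i j = M i k → j = k)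
    (surj : ∀ i c, i ≤ m → c ≤ m → ∃ j ≤ m, M i j = c)
    (diag : ∀ i ≤ m, M i i = m)
    (low : ∀ i j, i < j → j < m → i + j + 2 ≤ n → M i j = i + j)
    (low' : ∀ i, 2 * i + 2 ≤ n → M i m = 2 * i)
    (high : ∀ i j, i < j → j < m → 3 * n ≤ i + j + 2 → M i j = i + j - m)
    (high' : ∀ i < m, 3 * n ≤ 2 * i + 2 → M i m = 2 * i - m) (c : ℕ) :
    ∀ i, c < m → 2 * i ≤ c → (2 * i < c → M i (c - i) = c) ∧ (2 * i = c → M i m = c) := by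
  induction c using Nat.strong_induction_on with
  | _ c ihc =>
  intro i
  induction i using Nat.strong_induction_on with
  | _ i ihi =>
  intro hc hi
  by_cases hcn : c + 2 ≤ n
  · refine ⟨fun h => ?_, fun h => ?_⟩
    · rw [low i (c - i) (by omega) (by omega) (by omega)]; omega
    · rw [low' i (by omega)]; omega
  obtain ⟨j, hj, hij⟩ := surj i c (by omega) hc.le
  have h_diag : j ≠ i := by
    rintro rfl
    have := diag j hj
    omega
  have h_small : ¬ j < c - i := by
    intro h
    rcases lt_or_gt_of_ne h_diag with hlt | hlt
    · have := (ihc (i + j) (by omega) j (by omega) (by omega)).1 (by omega)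
      rw [Nat.add_sub_cancel, symm] at this
      omega
    · have := (ihc (i + j) (by omega) i (by omega) (by omega)).1 (by omega)
      rw [Nat.add_sub_cancel_left] at this
      omega
  have h_inner : ¬ (c - i < j ∧ j ≤ c) := by
    rintro ⟨h1, h2⟩
    have := (ihi (c - j) (by omega) (by omega) (by omega)).1 (by omega)
    rw [show c - (c - j) = j by omega, symm] at this
    have := inj j (c - j) i hj (by omega) (by omega) (by rw [this, symm, hij])
    omega
  have h_large : ¬ (c < j ∧ j < m) := by
    rintro ⟨h1, h2⟩
    have key : ∃ k ≤ m, c < k ∧ M j k = c := by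
      rcases lt_trichotomy j (c + m - j) with h | h | h
      · exact ⟨c + m - j, by omega, by omega,
          by rw [high j (c + m - j) h (by omega) (by omega)]; omega⟩
      · exact ⟨m, le_rfl, hc, by rw [high' j h2 (by omega)]; omega⟩
      · exact ⟨c + m - j, by omega, by omega,
          by rw [symm, high (c + m - j) j h h2 (by omega)]; omega⟩
    obtain ⟨k, hk, hck, hjk⟩ := key
    have := inj j k i hj hk (by omega) (by rw [hjk, symm, hij])
    omega
  refine ⟨fun h => ?_, fun h => ?_⟩
  · have h_last : j ≠ m := by
      rintro rfl
      have := (ihc (2 * i) h i (by omega) le_rfl).2 rfl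
      omega
    rwa [show c - i = j by omega]
  · rwa [show m = j by omega]

/-- A symmetric Latin square with constant diagonal `m` that agrees with `prolongedSquare m`
wherever the sum of the coordinates does not wrap around agrees with it everywhere. -/
theorem eq_of_eq_low {m : ℕ} {M : ℕ → ℕ → ℕ}
    (symm : ∀ i j, M i j = M j i)
    (inj : ∀ i j k, i ≤ m → j ≤ m → k ≤ m → M i j = M i k → j = k)
    (surj : ∀ i c, i ≤ m → c ≤ m → ∃ j ≤ m, M i j = c)
    (diag : ∀ i ≤ m, M i i = m)
    (low : ∀ c i, c < m → 2 * i ≤ c → (2 * i < c → M i (c - i) = c) ∧ (2 * i = c → M i m = c))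
    (d : ℕ) :
    ∀ e i c, c + d = m → i + e = m → 1 ≤ d → 1 ≤ e → c + m ≤ 2 * i →
      (c + m < 2 * i → M i (c + m - i) = c) ∧ (c + m = 2 * i → M i m = c) := by
  induction d using Nat.strong_induction_on with
  | _ d ihd =>
  intro e
  induction e using Nat.strong_induction_on with
  | _ e ihe =>
  intro i c hcd hie hd he hi
  obtain ⟨j, hj, hij⟩ := surj i c (by omega) (by omega)
  have h_diag : j ≠ i := by
    rintro rfl
    have := diag j hj
    omega
  have h_low : ¬ j ≤ c := by
    intro h
    have key : ∃ k ≤ m, M j k = c ∧ (k ≤ c ∨ k = m) := by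
      rcases lt_trichotomy (2 * j) c with h' | h' | h'
      · exact ⟨c - j, by omega, (low c j (by omega) (by omega)).1 h', by omega⟩
      · exact ⟨m, le_rfl, (low c j (by omega) (by omega)).2 h', by omega⟩
      · have := (low c (c - j) (by omega) (by omega)).1 (by omega)
        rw [show c - (c - j) = j by omega, symm] at this
        exact ⟨c - j, by omega, this, by omega⟩
    obtain ⟨k, hk, hjk, hkc⟩ := key
    have := inj j k i hj hk (by omega) (by rw [hjk, symm, hij])
    omega
  have h_outer : ¬ (c + m - i < j ∧ j < m) := by
    rintro ⟨h1, h2⟩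
    rcases lt_or_gt_of_ne h_diag with hlt | hlt
    · have := (ihd (m - (i + j - m)) (by omega) (m - i) i (i + j - m) (by omega) (by omega)
        (by omega) (by omega) (by omega)).1 (by omega)
      rw [show i + j - m + m - i = j by omega] at this
      omega
    · have := (ihd (m - (i + j - m)) (by omega) (m - j) j (i + j - m) (by omega) (by omega)
        (by omega) (by omega) (by omega)).1 (by omega)
      rw [show i + j - m + m - j = i by omega, symm] at this
      omega
  have h_inner : ¬ (c < j ∧ j < c + m - i) := by
    rintro ⟨h1, h2⟩
    have := (ihe (m - (c + m - j)) (by omega) (c + m - j) c hcd (by omega) hd (by omega)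
      (by omega)).1 (by omega)
    rw [show c + m - (c + m - j) = j by omega, symm] at this
    have := inj j (c + m - j) i hj (by omega) (by omega) (by rw [this, symm, hij])
    omega
  refine ⟨fun h => ?_, fun h => ?_⟩
  · have h_last : j ≠ m := by
      rintro rfl
      have := (ihd (j - (2 * i - j)) (by omega) (j - i) i (2 * i - j) (by omega) (by omega)
        (by omega) (by omega) (by omega)).2 (by omega)
      omega
    rwa [show c + m - i = j by omega]
  · rwa [show m = j by omega]

theorem eq_prolongedSquare_of_corners {n m : ℕ} (hm : m + 1 = 2 * n) {M : ℕ → ℕ → ℕ}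
    (symm : ∀ i j, M i j = M j i)
    (inj : ∀ i j k, i ≤ m → j ≤ m → k ≤ m → M i j = M i k → j = k)
    (surj : ∀ i c, i ≤ m → c ≤ m → ∃ j ≤ m, M i j = c)
    (diag : ∀ i ≤ m, M i i = m)
    (corner : ∀ i j, InLowCorner n i j ∨ InHighCorner n i j → M i j = prolongedSquare m i j)
    {i j : ℕ} (hi : i ≤ m) (hj : j ≤ m) : M i j = prolongedSquare m i j := by
  have low := fun c => eq_of_corners_low hm symm inj surj diag
    (fun i j h1 h2 h3 => by
      rw [corner i j (Or.inl ⟨h1, by omega⟩), prolongedSquare]; split_ifs <;> omega)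
    (fun i h => by
      rw [corner i m (Or.inl ⟨by omega, by omega⟩), prolongedSquare]; split_ifs <;> omega)
    (fun i j h1 h2 h3 => by
      rw [corner i j (Or.inr ⟨h1, by omega⟩), prolongedSquare]; split_ifs <;> omega)
    (fun i h1 h => by
      rw [corner i m (Or.inr ⟨by omega, by omega⟩), prolongedSquare]; split_ifs <;> omega) c
  have high := eq_of_eq_low symm inj surj diag low
  wlog hij : i ≤ j generalizing i j
  · rw [symm, prolongedSquare_comm]
    exact this hj hi (by omega)
  rcases hij.eq_or_lt with rfl | hij
  · rw [diag i hi, prolongedSquare, if_pos rfl]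
  rcases hj.eq_or_lt with rfl | hj
  · rcases lt_or_ge (2 * i) j with h | h
    · rw [(low (2 * i) i h le_rfl).2 rfl, prolongedSquare]
      split_ifs <;> omega
    · rw [(high (j - (2 * i - j)) (j - i) i (2 * i - j) (by omega) (by omega) (by omega) (by omega)
        (by omega)).2 (by omega), prolongedSquare]
      split_ifs <;> omega
  · rcases lt_or_ge (i + j) m with h | h
    · have := (low (i + j) i h (by omega)).1 (by omega)
      rw [Nat.add_sub_cancel_left] at this
      rw [this, prolongedSquare]
      split_ifs <;> omega
    · have := (high (m - (i + j - m)) (m - j) j (i + j - m) (by omega) (by omega) (by omega)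
        (by omega) (by omega)).1 (by omega)
      rw [show i + j - m + m - j = i by omega, symm] at this
      rw [this, prolongedSquare]
      split_ifs <;> omega

/-- `prolongedSquare` as a Latin square on `Fin (2 * n)`. -/
def prolongedLatinSquare (n : ℕ) (i j : Fin (2 * n)) : Fin (2 * n) :=
  ⟨prolongedSquare (2 * n - 1) i j, by
    have := prolongedSquare_le (m := 2 * n - 1) (i := i) (j := j) (by omega) (by omega)
    have := i.pos
    omega⟩

theorem prolongedLatinSquare_comm (n : ℕ) (i j : Fin (2 * n)) :
    prolongedLatinSquare n i j = prolongedLatinSquare n j i :=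
  Fin.ext (prolongedSquare_comm _ _ _)

theorem isLatinSquare_prolongedLatinSquare (n : ℕ) : IsLatinSquare (prolongedLatinSquare n) := by
  have h : ∀ i, Function.Bijective (prolongedLatinSquare n i) := fun i =>
    Finite.injective_iff_bijective.mp fun j k hjk =>
      Fin.ext (prolongedSquare_injective (n := n) (m := 2 * n - 1) (i := i) (by omega) (by omega)
        (by omega) (by omega) (congrArg Fin.val hjk))
  refine ⟨h, fun j => ?_⟩
  simpa only [prolongedLatinSquare_comm n _ j] using h j

/-- A symmetric Latin square with the symbol `2 n - 1` on all but the first and the last diagonal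
cell that agrees with `prolongedLatinSquare n` on the corner triangles is equal to it. -/
theorem eq_prolongedLatinSquare {n : ℕ} (hn : 2 ≤ n) {L : Fin (2 * n) → Fin (2 * n) → Fin (2 * n)}
    (hL : IsLatinSquare L) (symm : ∀ i j, L i j = L j i)
    (diag : ∀ i : Fin (2 * n), 0 < i.val → i.val + 1 < 2 * n →
      L i i = prolongedLatinSquare n i i)
    (corner : ∀ i j : Fin (2 * n), InLowCorner n i j ∨ InHighCorner n i j →
      L i j = prolongedLatinSquare n i j) : L = prolongedLatinSquare n := by
  obtain ⟨m, hm⟩ : ∃ m, m + 1 = 2 * n := ⟨2 * n - 1, by omega⟩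
  have hm' : 2 * n - 1 = m := by omega
  let last : Fin (2 * n) := ⟨m, by omega⟩
  let first : Fin (2 * n) := ⟨0, by omega⟩
  have h_pd : ∀ i, prolongedLatinSquare n i i = last := fun i => by
    simp [prolongedLatinSquare, prolongedSquare, last, hm']
  have h_edge : L first last ≠ last := by
    rw [corner first last (Or.inl ⟨by simp [first, last]; omega, by simp [first, last]; omega⟩)]
    intro h
    have := congrArg Fin.val
      (((isLatinSquare_prolongedLatinSquare n).1 first).1 (h.trans (h_pd first).symm))
    simp only [first, last] at this
    omega
  have h_mid : ∀ i j : Fin (2 * n), 0 < j.val → j.val < m → L i j = last → i = j := by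
    intro i j h0 h1 h
    apply (hL.2 j).1
    change L i j = L j j
    rw [h, diag j h0 (by omega), h_pd]
  have h_diag : ∀ i, L i i = last := by
    intro i
    by_cases hi : 0 < i.val ∧ i.val + 1 < 2 * n
    · rw [diag i hi.1 hi.2, h_pd]
    obtain ⟨j, hj⟩ := (hL.1 i).2 last
    by_cases hj' : 0 < j.val ∧ j.val < m
    · have := h_mid i j hj'.1 hj'.2 hj
      rwa [← this] at hj
    by_cases hij : i = j
    · rwa [← hij] at hj
    have hij' : i.val ≠ j.val := fun h => hij (Fin.ext h)
    rcases Nat.eq_zero_or_pos i.val with h0 | h0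
    · have h1 : i = first := Fin.ext h0
      have h2 : j = last := Fin.ext (by simp only [last]; omega)
      rw [h1, h2] at hj
      exact absurd hj h_edge
    · have h1 : i = last := Fin.ext (by simp only [last]; omega)
      have h2 : j = first := Fin.ext (by simp only [first]; omega)
      rw [h1, h2, symm] at hj
      exact absurd hj h_edge
  let M : ℕ → ℕ → ℕ := fun i j =>
    if h : i < 2 * n ∧ j < 2 * n then (L ⟨i, h.1⟩ ⟨j, h.2⟩).val else prolongedSquare m i j
  have hM : ∀ i j : Fin (2 * n), M i j = (L i j).val := fun i j => by simp [M]
  have hM' : ∀ i j (hi : i ≤ m) (hj : j ≤ m),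
      M i j = (L ⟨i, by omega⟩ ⟨j, by omega⟩).val := fun i j hi hj => hM ⟨i, _⟩ ⟨j, _⟩
  funext i j
  apply Fin.ext
  simp only [← hM, prolongedLatinSquare, hm']
  refine eq_prolongedSquare_of_corners hm ?_ ?_ ?_ ?_ ?_ (by omega) (by omega)
  · intro i j
    by_cases h : i < 2 * n ∧ j < 2 * n
    · simp only [M, dif_pos h, dif_pos h.symm]
      rw [symm]
    · simp only [M, dif_neg h, dif_neg (fun h' => h (And.symm h'))]
      exact prolongedSquare_comm m i j
  · intro i j k hi hj hk h
    rw [hM' i j hi hj, hM' i k hi hk] at h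
    exact congrArg Fin.val ((hL.1 _).1 (Fin.ext h))
  · intro i c hi hc
    obtain ⟨j, hj⟩ := (hL.1 ⟨i, by omega⟩).2 ⟨c, by omega⟩
    exact ⟨j, by omega, by rw [hM' i j hi (by omega)]; exact congrArg Fin.val hj⟩
  · intro i hi
    rw [hM' i i hi hi, h_diag]
  · intro i j h
    by_cases hij : i < 2 * n ∧ j < 2 * n
    · have := corner ⟨i, hij.1⟩ ⟨j, hij.2⟩ h
      simp only [M, dif_pos hij, this, prolongedLatinSquare, hm']
    · simp only [M, dif_neg hij]

theorem four_mul_sum_range_half_add_one_le (k : ℕ) :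
    4 * ∑ c ∈ Finset.range k, (c / 2 + 1) ≤ (k + 1) ^ 2 := by
  have h : 4 * ∑ c ∈ Finset.range k, (c / 2 + 1) + (k + 1) % 2 = (k + 1) ^ 2 := by
    induction k with
    | zero => simp
    | succ k ih =>
      rw [Finset.sum_range_succ, mul_add]
      have : (k + 1 + 1) ^ 2 = (k + 1) ^ 2 + 2 * k + 3 := by ring
      omega
  omega

open Classical in
theorem card_lowCorner_le (n : ℕ) :
    (Finset.univ.filter fun p : Fin (2 * n) × Fin (2 * n) => InLowCorner n p.1 p.2).card ≤
      ∑ c ∈ Finset.range (n - 1), (c / 2 + 1) := by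
  have : ∑ c ∈ Finset.range (n - 1), (c / 2 + 1) =
      ((Finset.range (n - 1)).sigma fun c => Finset.range (c / 2 + 1)).card := by simp
  rw [this]
  refine Finset.card_le_card_of_injOn (fun p =>
    ⟨if p.2.val + 1 = 2 * n then 2 * p.1.val else p.1.val + p.2.val, p.1.val⟩) ?_ ?_
  · rintro ⟨⟨i, hi⟩, ⟨j, hj⟩⟩ h
    replace h : InLowCorner n i j := (Finset.mem_filter.mp (Finset.mem_coe.mp h)).2
    unfold InLowCorner at h
    simp only [Finset.mem_coe, Finset.mem_sigma, Finset.mem_range]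
    split_ifs <;> omega
  · rintro ⟨⟨i, hi⟩, ⟨j, hj⟩⟩ h ⟨⟨i', hi'⟩, ⟨j', hj'⟩⟩ h' heq
    replace h : InLowCorner n i j := (Finset.mem_filter.mp (Finset.mem_coe.mp h)).2
    replace h' : InLowCorner n i' j' := (Finset.mem_filter.mp (Finset.mem_coe.mp h')).2
    unfold InLowCorner at h h'
    simp only [Sigma.mk.injEq, heq_eq_eq] at heq
    simp only [Prod.mk.injEq, Fin.mk.injEq]
    obtain ⟨h1, h2⟩ := heq
    split_ifs at h1 <;> omega

open Classical in
theorem card_highCorner_le (n : ℕ) :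
    (Finset.univ.filter fun p : Fin (2 * n) × Fin (2 * n) => InHighCorner n p.1 p.2).card ≤
      ∑ c ∈ Finset.range (n - 1), (c / 2 + 1) := by
  have : ∑ c ∈ Finset.range (n - 1), (c / 2 + 1) =
      ((Finset.range (n - 1)).sigma fun c => Finset.range (c / 2 + 1)).card := by simp
  rw [this]
  refine Finset.card_le_card_of_injOn (fun p =>
    ⟨if p.2.val + 1 = 2 * n then 2 * (2 * n - 2 - p.1.val) else 4 * n - 4 - (p.1.val + p.2.val),
      if p.2.val + 1 = 2 * n then 2 * n - 2 - p.1.val else 2 * n - 2 - p.2.val⟩) ?_ ?_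
  · rintro ⟨⟨i, hi⟩, ⟨j, hj⟩⟩ h
    replace h : InHighCorner n i j := (Finset.mem_filter.mp (Finset.mem_coe.mp h)).2
    unfold InHighCorner at h
    simp only [Finset.mem_coe, Finset.mem_sigma, Finset.mem_range]
    split_ifs <;> omega
  · rintro ⟨⟨i, hi⟩, ⟨j, hj⟩⟩ h ⟨⟨i', hi'⟩, ⟨j', hj'⟩⟩ h' heq
    replace h : InHighCorner n i j := (Finset.mem_filter.mp (Finset.mem_coe.mp h)).2
    replace h' : InHighCorner n i' j' := (Finset.mem_filter.mp (Finset.mem_coe.mp h')).2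
    unfold InHighCorner at h h'
    simp only [Sigma.mk.injEq, heq_eq_eq] at heq
    simp only [Prod.mk.injEq, Fin.mk.injEq]
    obtain ⟨h1, h2⟩ := heq
    split_ifs at h1 h2 <;> omega

theorem sq_le_card_above_diagonal (n : ℕ) :
    n ^ 2 ≤ (Finset.univ.filter fun p : Fin (2 * n) × Fin (2 * n) => p.1 < p.2).card := by
  have : n ^ 2 = (Finset.univ : Finset (Fin n × Fin n)).card := by simp [sq]
  rw [this]
  refine Finset.card_le_card_of_injOn
    (fun p => (⟨p.1.val, by omega⟩, ⟨n + p.2.val, by omega⟩)) ?_ ?_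
  · rintro ⟨⟨i, hi⟩, ⟨j, hj⟩⟩ -
    simp only [Finset.coe_filter, Finset.mem_univ, true_and, Set.mem_ofPred_eq, Fin.mk_lt_mk]
    omega
  · rintro ⟨⟨i, hi⟩, ⟨j, hj⟩⟩ - ⟨⟨i', hi'⟩, ⟨j', hj'⟩⟩ - h
    simpa using h

theorem card_inner_diagonal (n : ℕ) :
    (Finset.univ.filter fun p : Fin (2 * n) × Fin (2 * n) =>
      p.1 = p.2 ∧ 0 < p.1.val ∧ p.1.val + 1 < 2 * n).card = 2 * n - 2 := by
  have : 2 * n - 2 = (Finset.univ : Finset (Fin (2 * n - 2))).card := by simp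
  rw [this]
  symm
  refine Finset.card_bij (fun i _ => (⟨i.val + 1, by omega⟩, ⟨i.val + 1, by omega⟩)) ?_ ?_ ?_
  · intro i _
    simp
    omega
  · intro i _ j _ h
    simpa [Fin.ext_iff] using h
  · rintro ⟨⟨i, hi⟩, ⟨j, hj⟩⟩ h
    simp only [Finset.mem_filter, Finset.mem_univ, true_and, Fin.mk.injEq] at h
    refine ⟨⟨i - 1, by omega⟩, Finset.mem_univ _, ?_⟩
    simp only [Prod.mk.injEq, Fin.mk.injEq]
    omega

/-- for every `n > 2` there is a partial Latin square `C` of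
order `2n` with `|C| = n² − n + 2` entries, all in cells on or above the main
diagonal, of which exactly `2n − 2` are an identical symbol `s` lying on the
main diagonal, such that `C` is uniquely completable to a symmetric Latin
square of order `2n`. -/
theorem uniquely_completable_symmetric_partial_latin_square (n : ℕ)
    (hn : 2 < n) :
    ∃ C : Set (Fin (2 * n) × Fin (2 * n) × Fin (2 * n)),
      C.ncard = n ^ 2 - n + 2 ∧
      (∀ t ∈ C, t.1 ≤ t.2.1) ∧
      (∃ s : Fin (2 * n),
        (∀ t ∈ C, t.1 = t.2.1 → t.2.2 = s) ∧
        {t ∈ C | t.1 = t.2.1}.ncard = 2 * n - 2) ∧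
      (∃! L : Fin (2 * n) → Fin (2 * n) → Fin (2 * n),
        IsLatinSquare L ∧ (∀ i j, L i j = L j i) ∧ ContainedIn C L) := by
  classical
  obtain ⟨N, hN⟩ : ∃ N, N + 3 * n = n ^ 2 + 4 := ⟨n ^ 2 + 4 - 3 * n, by
    have : 3 * n ≤ n ^ 2 := by nlinarith
    omega⟩
  obtain ⟨O, hRO, hOU, hO⟩ := Finset.exists_subsuperset_card_eq
    (s := (Finset.univ.filter fun p : Fin (2 * n) × Fin (2 * n) => InLowCorner n p.1 p.2) ∪
      Finset.univ.filter fun p : Fin (2 * n) × Fin (2 * n) => InHighCorner n p.1 p.2)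
    (t := Finset.univ.filter fun p : Fin (2 * n) × Fin (2 * n) => p.1 < p.2) (n := N)
    (by
      intro p hp
      simp only [Finset.mem_union, Finset.mem_filter, Finset.mem_univ, true_and] at hp ⊢
      exact hp.elim (fun h => h.1) (fun h => h.1))
    (by
      refine (Finset.card_union_le _ _).trans ?_
      have h1 := card_lowCorner_le n
      have h2 := card_highCorner_le n
      have h3 := four_mul_sum_range_half_add_one_le (n - 1)
      rw [Nat.sub_add_cancel (by omega)] at h3
      rcases (show n = 3 ∨ 4 ≤ n by omega) with rfl | h4
      · omega
      · have : n ^ 2 + 8 ≥ 6 * n := by nlinarith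
        omega)
    (by
      have := sq_le_card_above_diagonal n
      omega)
  let D := Finset.univ.filter fun p : Fin (2 * n) × Fin (2 * n) =>
      p.1 = p.2 ∧ 0 < p.1.val ∧ p.1.val + 1 < 2 * n
  have hD : D.card = 2 * n - 2 := card_inner_diagonal n
  have hO_lt : ∀ p ∈ O, p.1 < p.2 := fun p hp => (Finset.mem_filter.mp (hOU hp)).2
  have hD_eq : ∀ p ∈ D, p.1 = p.2 := fun p hp => (Finset.mem_filter.mp hp).2.1
  have hOD : Disjoint O D := Finset.disjoint_left.mpr fun p hp hp' =>
    (hO_lt p hp).ne (hD_eq p hp')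
  let f : Fin (2 * n) × Fin (2 * n) → Fin (2 * n) × Fin (2 * n) × Fin (2 * n) :=
    fun p => (p.1, p.2, prolongedLatinSquare n p.1 p.2)
  have hf : Function.Injective f := by
    rintro ⟨i, j⟩ ⟨i', j'⟩ h
    simp only [f, Prod.mk.injEq] at h
    exact Prod.ext h.1 h.2.1
  refine ⟨((O ∪ D).image f : Finset _), ?_, ?_, ⟨⟨2 * n - 1, by omega⟩, ?_, ?_⟩,
    prolongedLatinSquare n, ⟨isLatinSquare_prolongedLatinSquare n, prolongedLatinSquare_comm n, ?_⟩,
    ?_⟩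
  · rw [Set.ncard_coe_finset, Finset.card_image_of_injective _ hf,
      Finset.card_union_of_disjoint hOD, hO, hD]
    have : n ≤ n ^ 2 := by nlinarith
    omega
  · intro t ht
    obtain ⟨p, hp, rfl⟩ := Finset.mem_image.mp (Finset.mem_coe.mp ht)
    rcases Finset.mem_union.mp hp with h | h
    · exact (hO_lt p h).le
    · exact (hD_eq p h).le
  · intro t ht h_eq
    obtain ⟨p, hp, rfl⟩ := Finset.mem_image.mp (Finset.mem_coe.mp ht)
    change p.1 = p.2 at h_eq
    simp [f, prolongedLatinSquare, prolongedSquare, h_eq]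
  · have : {t ∈ (((O ∪ D).image f : Finset _) : Set (Fin (2 * n) × Fin (2 * n) × Fin (2 * n))) |
        t.1 = t.2.1} = (D.image f : Finset _) := by
      ext t
      simp only [Set.mem_ofPred_eq, Finset.mem_coe, Finset.mem_image, Finset.mem_union]
      constructor
      · rintro ⟨⟨p, hp | hp, rfl⟩, h⟩
        · exact absurd h (hO_lt p hp).ne
        · exact ⟨p, hp, rfl⟩
      · rintro ⟨p, hp, rfl⟩
        exact ⟨⟨p, Or.inr hp, rfl⟩, hD_eq p hp⟩
    rw [this, Set.ncard_coe_finset, Finset.card_image_of_injective _ hf, hD]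
  · intro t ht
    obtain ⟨p, hp, rfl⟩ := Finset.mem_image.mp (Finset.mem_coe.mp ht)
    rfl
  · rintro L ⟨hL, symm, hC⟩
    have hC' : ∀ p ∈ O ∪ D, L p.1 p.2 = prolongedLatinSquare n p.1 p.2 := fun p hp =>
      hC (f p) (Finset.mem_coe.mpr (Finset.mem_image_of_mem f hp))
    refine eq_prolongedLatinSquare (by omega) hL symm (fun i h0 h1 => ?_) (fun i j h => ?_)
    · exact hC' (i, i) (Finset.mem_union_right _ (by simp [D, h0, h1]))
    · exact hC' (i, j) (Finset.mem_union_left _ (hRO (by simpa using h)))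
end
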